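/- Let b ≥ 2 be an integer and let (n_1, n_2, n_3, ℓ_1, ℓ_2, ℓ_3, d_1, d_2, d_3) be a solution of equation (1) in base b with n_1 > 300. If ℓ_1 · log b < 1.5 × 10^{14} · (log b)^2 · log(n_1 + 2), then min{ (n_1 − n_2) · log α , ℓ_2 · log b } < 7.48 × 10^{27} · (log b)^3 · (log(n_1 + 2))^2. -/

import Mathlib

/-!
Write `λ = log b`, `ℓ = log (n1 + 2)`, and suppose the minimum is at least
`T₀ = 7.48e27 λ ^ 3 ℓ ^ 2`. Then the Fibonacci sum is very close both to `α ^ n1 / √5` and to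
`a0 b ^ (l2 + l3) / (b - 1)`, where `a0` is an integer with `b - 1 ≤ a0 ≤ b ^ (l1 + 1)`. So the
linear form `Λ = n1 log α - (l2 + l3) log b - log γ`, with `γ = √5 a0 / (b - 1)`, satisfies
`|Λ| ≤ 14 exp (-T₀)` (`linear_form_small`). The hypothesis on `l1` bounds the height of `γ`, and
`no_small_form` refutes the estimate by a lower bound of Baker type for linear forms in three
logarithms. That lower bound is proved here by the method of interpolation determinants.

The rows of the determinant are indexed by powers `z ^ k` and lattice points `e = (r, s, t)`, the
columns by an order `t` of derivation, an integer monomial `B_j` and an integer `l`. The entries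
are the divided derivatives of `z ^ k` at `l`, times `B_j(e)`, times `exp (l * latticeLog e)`.

* Upper bound. As `Λ` is tiny, `latticeLog e` almost equals a combination of two integer
  coordinates `latticeU e`, `latticeV e`. The Taylor terms of each order then span a space of small
  dimension, while the number of columns is large, so the multilinear expansion of the determinant
  only keeps terms of high total order (`det_capacity`, `det_upper`).
* Non-vanishing. An elementary zero estimate (`zero_estimate`, `exists_good_minor`) gives a choice
  of columns for which the determinant is not zero. It requires the monomials in the two
  coordinates times powers of `exp (latticeLog e)` to be independent on the lattice points. A
  dependence would give a plane curve containing a large sumset, and a Bézout argument on its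
  translates shows that many of the points are then collinear (`exists_collinear`). In that case
  powers of a coordinate on the line take the place of the monomials
  (`exists_interpolation_data`).
* Lower bound. Up to an explicit denominator the determinant lies in `ℤ[α]`. In the basis of
  Feldman polynomials its rows are divisible by powers of `h!`, so that its norm, divided by these
  factors, is a non-zero integer (`det_lower`).

The comparison of the bounds is `master_inequality`. With `κ` derivatives, `κ ≈ 3.02e25 λ ^ 3 ℓ`,
and Feldman parameter `h ≈ 0.4 ℓ`, it becomes contradictory (`core_inequality`,
`numeric_contradiction`).
-/

open Real

/-- A solution of equation (1) in base `b`: integers `n1 ≥ n2 ≥ n3 ≥ 0`,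
`l1, l2, l3 ≥ 1`, digits `d1, d2, d3 ∈ {0, …, b-1}` with `d1 ≥ 1`, such that
`F_{n1} + F_{n2} + F_{n3}` equals the concatenation in base `b` of the digit `d1`
repeated `l1` times, `d2` repeated `l2` times, and `d3` repeated `l3` times. -/
def SatisfiesEq1 (b n1 n2 n3 l1 l2 l3 d1 d2 d3 : ℕ) : Prop :=
  n3 ≤ n2 ∧ n2 ≤ n1 ∧
  1 ≤ l1 ∧ 1 ≤ l2 ∧ 1 ≤ l3 ∧
  d1 < b ∧ d2 < b ∧ d3 < b ∧ 1 ≤ d1 ∧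
  Nat.fib n1 + Nat.fib n2 + Nat.fib n3 =
    d1 * ((b ^ l1 - 1) / (b - 1)) * b ^ (l2 + l3) +
    d2 * ((b ^ l2 - 1) / (b - 1)) * b ^ l3 +
    d3 * ((b ^ l3 - 1) / (b - 1))

/-! ### Minors and determinants of shifted polynomials -/

theorem rows_span_top {I J : Type*} [Fintype I] [Fintype J]
    (c : Matrix I J ℝ) (hc : ∀ x : J → ℝ, c.mulVec x = 0 → x = 0) :
    Submodule.span ℝ (Set.range c.row) = ⊤ := by
  classical
  have h1 : LinearIndependent ℝ c.transpose.row := by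
    change LinearIndependent ℝ c.col
    rw [← Matrix.mulVec_injective_iff]
    intro x y hxy
    have := hc (x - y) (by rw [Matrix.mulVec_sub, sub_eq_zero]; exact hxy)
    exact sub_eq_zero.mp this
  have h2 : c.rank = Fintype.card J := by
    rw [← Matrix.rank_transpose]; exact h1.rank_matrix
  apply Submodule.eq_top_of_finrank_eq
  rw [← Matrix.rank_eq_finrank_span_row, h2]; simp

/-- A real matrix with trivial kernel has a non-zero maximal minor, on the rows selected by `σ`. -/
theorem exists_minor {I J : Type*} [Fintype I] [Fintype J] [DecidableEq J]
    (c : Matrix I J ℝ) (hc : ∀ x : J → ℝ, c.mulVec x = 0 → x = 0) :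
    ∃ σ : J → I, (c.submatrix σ id).det ≠ 0 := by
  have h3 := rows_span_top c hc
  let b' := Module.Basis.ofSpan h3.ge
  have hcard := Module.finrank_eq_nat_card_basis b'
  rw [Module.finrank_pi, ← Nat.card_eq_fintype_card] at hcard
  have := Module.Finite.finite_basis b'
  obtain ⟨e⟩ := Finite.card_eq.mp hcard
  have hmem : ∀ j : J, ∃ i, c.row i = b' (e j) := fun j =>
    Module.Basis.ofSpan_subset h3.ge ⟨e j, rfl⟩
  choose σ hσ using hmem
  refine ⟨σ, ?_⟩
  have h4 : LinearIndependent ℝ (c.submatrix σ id).row := by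
    have h5 : (c.submatrix σ id).row = fun j => b' (e j) := by
      funext j
      rw [← hσ j]; rfl
    rw [h5]
    exact b'.linearIndependent.comp _ e.injective
  rw [Matrix.linearIndependent_rows_iff_isUnit, Matrix.isUnit_iff_isUnit_det] at h4
  exact h4.ne_zero

open Polynomial in
theorem coeff_prod_top {R J : Type*} [CommRing R] (s : Finset J) (f : J → R[X]) (n : J → ℕ)
    (h : ∀ j ∈ s, (f j).natDegree ≤ n j) :
    (∏ j ∈ s, f j).coeff (∑ j ∈ s, n j) = ∏ j ∈ s, (f j).coeff (n j) := by
  classical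
  induction s using Finset.induction_on with
  | empty => simp
  | insert a s ha ih =>
    rw [Finset.prod_insert ha, Finset.sum_insert ha, Finset.prod_insert ha,
      ← ih (fun j hj => h j (Finset.mem_insert_of_mem hj))]
    refine Polynomial.coeff_mul_add_eq_of_natDegree_le (h a (Finset.mem_insert_self _ _)) ?_
    refine (Polynomial.natDegree_prod_le _ _).trans ?_
    exact Finset.sum_le_sum fun j hj => h j (Finset.mem_insert_of_mem hj)

open Polynomial in
/-- The coefficient of degree `∑ deg p_j` of this determinant is `det c` times the product of the
leading coefficients, because a translation does not change the leading coefficient. -/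
theorem det_shift_ne_zero {R J : Type*} [CommRing R] [IsDomain R] [Fintype J] [DecidableEq J]
    (c : Matrix J J R) (hc : c.det ≠ 0) (y : J → R) (p : J → R[X]) (hp : ∀ j, p j ≠ 0) :
    (Matrix.of fun i j => C (c i j) * (p j).comp (X + C (y i))).det ≠ 0 := by
  intro h0
  have hdeg : ∀ i j, (C (c i j) * (p j).comp (X + C (y i))).natDegree ≤ (p j).natDegree := by
    intro i j
    refine (Polynomial.natDegree_C_mul_le _ _).trans ?_
    rw [Polynomial.natDegree_comp]; simp
  have key : ((Matrix.of fun i j => C (c i j) * (p j).comp (X + C (y i))).det).coeff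
      (∑ j, (p j).natDegree) = c.det * ∏ j, (p j).leadingCoeff := by
    rw [Matrix.det_apply, Matrix.det_apply, Polynomial.finsetSum_coeff, Finset.sum_mul]
    refine Finset.sum_congr rfl fun σ _ => ?_
    rw [Polynomial.coeff_smul]
    rw [smul_mul_assoc]
    congr 1
    simp only [Matrix.of_apply]
    rw [coeff_prod_top _ _ _ (fun j _ => hdeg _ _), ← Finset.prod_mul_distrib]
    refine Finset.prod_congr rfl fun j _ => ?_
    rw [Polynomial.coeff_C_mul]
    congr 1
    have := Polynomial.leadingCoeff_comp (p := p j) (q := X + C (y (σ j))) (by simp)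
    rw [Polynomial.leadingCoeff, Polynomial.natDegree_comp] at this
    simpa using this
  rw [h0, Polynomial.coeff_zero] at key
  have : c.det * ∏ j, (p j).leadingCoeff ≠ 0 := mul_ne_zero hc
    (Finset.prod_ne_zero_iff.mpr fun j _ => by simpa using hp j)
  exact this key.symm

open Polynomial in
theorem natDegree_det_shift_le {R J : Type*} [CommRing R] [IsDomain R] [Fintype J] [DecidableEq J]
    (c : Matrix J J R) (y : J → R) (p : J → R[X]) :
    ((Matrix.of fun i j => C (c i j) * (p j).comp (X + C (y i))).det).natDegree ≤
      ∑ j, (p j).natDegree := by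
  rw [Matrix.det_apply]
  refine Polynomial.natDegree_sum_le_of_forall_le _ _ fun σ _ => ?_
  refine (Polynomial.natDegree_smul_le _ _).trans ?_
  refine (Polynomial.natDegree_prod_le _ _).trans ?_
  refine Finset.sum_le_sum fun j _ => ?_
  simp only [Matrix.of_apply]
  refine (Polynomial.natDegree_C_mul_le _ _).trans ?_
  rw [Polynomial.natDegree_comp]; simp

open Polynomial in
/-- If `f` divides `G x` for every constant vector `x` of a subspace `W`, then `f ^ dim W` divides
`det G`: complete a basis of `W` to a basis of the whole space and change basis by a constant
matrix. -/
theorem pow_finrank_dvd_det {Q : Type*} [Fintype Q] [DecidableEq Q] (G : Matrix Q Q ℝ[X])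
    (W : Submodule ℝ (Q → ℝ)) (f : ℝ[X])
    (hW : ∀ x ∈ W, ∀ i, f ∣ ∑ j, G i j * C (x j)) :
    f ^ (Module.finrank ℝ W) ∣ G.det := by
  classical
  let bW := Module.finBasis ℝ W
  have hli : LinearIndependent ℝ (fun i => (bW i : Q → ℝ)) :=
    bW.linearIndependent.map' W.subtype (by simp)
  let b := Module.Basis.sumExtend hli
  have hfin : Finite (Fin (Module.finrank ℝ W) ⊕ Module.Basis.sumExtendIndex hli) :=
    Module.Finite.finite_basis b
  have hcard := Module.finrank_eq_nat_card_basis b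
  rw [Module.finrank_pi, ← Nat.card_eq_fintype_card] at hcard
  obtain ⟨e⟩ := Finite.card_eq.mp hcard
  -- columns of `S`: a basis of `W` completed to a basis of `Q → ℝ`
  let S : Matrix Q Q ℝ := Matrix.of fun i j => b (e j) i
  have hS : IsUnit S.det := by
    rw [← Matrix.isUnit_iff_isUnit_det, ← Matrix.isUnit_transpose,
      ← Matrix.linearIndependent_rows_iff_isUnit]
    have : S.transpose.row = fun j => b (e j) := by
      funext j; rfl
    rw [this]
    exact b.linearIndependent.comp _ e.injective
  have hdet : (G * S.map C).det = G.det * C S.det := by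
    rw [Matrix.det_mul, RingHom.map_det]; rfl
  let v : Q → ℝ[X] := fun j => Sum.elim (fun _ => f) (fun _ => 1) (e j)
  have hdvd : ∀ i j, v j ∣ (G * S.map C) i j := by
    intro i j
    rcases hej : e j with a | a
    · have h1 : v j = f := by simp [v, hej]
      rw [h1, Matrix.mul_apply]
      have h2 : b (e j) ∈ W := by
        rw [hej]
        simp only [b, Module.Basis.sumExtend, Module.Basis.reindex_apply,
          Module.Basis.coe_extend]
        exact (bW a).2
      simpa [S, Matrix.map_apply] using hW _ h2 i
    · have h1 : v j = 1 := by simp [v, hej]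
      rw [h1]; exact one_dvd _
  choose M' hM' using hdvd
  have h3 : (G * S.map C).det = (∏ j, v j) * (Matrix.of M').det := by
    rw [← Matrix.det_mul_row]
    congr 1
    ext1 i j
    rw [hM']; rfl
  have h4 : ∏ j, v j = f ^ (Module.finrank ℝ W) := by
    have := Finite.of_injective (fun x : Module.Basis.sumExtendIndex hli =>
      (Sum.inr x : Fin (Module.finrank ℝ W) ⊕ Module.Basis.sumExtendIndex hli)) Sum.inr_injective
    have := Fintype.ofFinite (Module.Basis.sumExtendIndex hli)
    rw [show (∏ j, v j) = ∏ j, (fun x => Sum.elim (fun _ => f) (fun _ => (1 : ℝ[X])) x) (e j)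
      from rfl, Equiv.prod_comp e (fun x => Sum.elim (fun _ => f) (fun _ => (1 : ℝ[X])) x),
      Fintype.prod_sum_type]
    simp
  have h5 : f ^ (Module.finrank ℝ W) ∣ G.det * C S.det := by
    rw [← hdet, h3, h4]; exact dvd_mul_right _ _
  have h6 : IsUnit (C S.det : ℝ[X]) := hS.map C
  exact (h6.dvd_mul_right).mp h5

/-! ### The zero estimate and a non-vanishing interpolation determinant -/

open Polynomial in
/-- Zero estimate for the exponential polynomials `z ↦ ∑ e, p_e(z) B_j(e) θ_e ^ z`, where only the
`p_e` are differentiated. If `deg p_e < κ g` and all of them vanish to order `κ` at `M (g + 1)`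
consecutive integers, then every `p_e` is zero. Restrict to the support `P'` of `p`. By `hcol` some
`|P'|` rows of the matrix `(A_i(e) θ_e ^ τ)` are independent, and the corresponding determinant in
the translates `p_e(X + τ)` is non-zero of degree `∑ deg p_e < |P'| κ g`. Since the products `A_i
A_{i'}` are among the `B_j`, it is divisible by `(X - l) ^ (κ dim W₀)` for `M g` values of `l`,
where `W₀` is the span of the `A_i` and `|P'| ≤ M dim W₀`. -/
theorem zero_estimate {P ι J : Type*} [Fintype P] [Fintype ι] (A : ι → P → ℝ) (B : J → P → ℝ)
    (hAB : ∀ i i', ∃ j, ∀ e, B j e = A i e * A i' e) (θ : P → ℝ) (hθ : ∀ e, θ e ≠ 0)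
    (M g κ : ℕ) (l0 : ℤ)
    (hcol : ∀ x : P → ℝ, (∀ i, ∀ τ < M, ∑ e, A i e * θ e ^ τ * x e = 0) → x = 0)
    (p : P → ℝ[X]) (hdeg : ∀ e, p e ≠ 0 → (p e).natDegree < κ * g)
    (hvan : ∀ t < κ, ∀ j, ∀ l : ℤ, l0 ≤ l → l < l0 + M * (g + 1) →
      ∑ e, (hasseDeriv t (p e)).eval (l : ℝ) * B j e * θ e ^ l = 0) :
    ∀ e, p e = 0 := by
  classical
  by_contra hne
  push Not at hne
  obtain ⟨e0, he0⟩ := hne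
  let P' := {e : P // p e ≠ 0}
  let c : Matrix (ι × Fin M) P' ℝ := Matrix.of fun a e => A a.1 e * θ e ^ (a.2 : ℕ)
  have hc : ∀ x : P' → ℝ, c.mulVec x = 0 → x = 0 := by
    intro x hx
    let x' : P → ℝ := fun e => if h : p e ≠ 0 then x ⟨e, h⟩ else 0
    have h1 : x' = 0 := by
      apply hcol
      intro i τ hτ
      have h2 := congrFun hx (i, ⟨τ, hτ⟩)
      rw [Matrix.mulVec, dotProduct, Pi.zero_apply] at h2
      rw [← h2]
      symm
      apply Fintype.sum_of_injective (fun e : P' => (e : P)) Subtype.val_injective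
      · intro e he
        have : ¬ (p e ≠ 0) := fun h => he ⟨⟨e, h⟩, rfl⟩
        simp [x', this]
      · intro e
        simp [x', c, e.2]
    funext e
    have h2 := congrFun h1 (e : P)
    have h3 : p e ≠ 0 := e.2
    simpa [x', h3] using h2
  obtain ⟨σ, hσ⟩ := exists_minor c hc
  let G : Matrix P' P' ℝ[X] := Matrix.of fun i j =>
    C ((c.submatrix σ id) i j) * (p j).comp (X + C (((σ i).2 : ℕ) : ℝ))
  have hG : G.det ≠ 0 :=
    det_shift_ne_zero _ hσ (fun i => (((σ i).2 : ℕ) : ℝ)) (fun j : P' => p j) (fun j => j.2)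
  have hGdeg : G.det.natDegree ≤ ∑ j : P', (p j).natDegree :=
    natDegree_det_shift_le _ (fun i => (((σ i).2 : ℕ) : ℝ)) (fun j : P' => p j)
  let W0 : Submodule ℝ (P' → ℝ) := Submodule.span ℝ (Set.range fun i => fun e : P' => A i e)
  have hcard : Fintype.card P' ≤ M * Module.finrank ℝ W0 := by
    let F : (Fin M → W0) →ₗ[ℝ] (P' → ℝ) :=
      ∑ τ : Fin M, (LinearMap.pi fun e : P' => (θ e ^ (τ : ℕ)) • LinearMap.proj e) ∘ₗ
        W0.subtype ∘ₗ LinearMap.proj τ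
    have hF : LinearMap.range F = ⊤ := by
      rw [eq_top_iff, ← rows_span_top c hc, Submodule.span_le]
      rintro _ ⟨⟨i, τ⟩, rfl⟩
      refine ⟨Pi.single τ ⟨fun e : P' => A i e, Submodule.subset_span ⟨i, rfl⟩⟩, ?_⟩
      funext e
      simp only [F, LinearMap.sum_apply, LinearMap.comp_apply, LinearMap.proj_apply,
        Submodule.subtype_apply, Finset.sum_apply, LinearMap.pi_apply, LinearMap.smul_apply,
        smul_eq_mul]
      rw [Finset.sum_eq_single τ]
      · simp [c, mul_comm]
      · intro τ' _ h
        simp [Pi.single_eq_of_ne h]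
      · simp
    have h1 := LinearMap.finrank_range_le F
    rw [hF, finrank_top, Module.finrank_pi, Module.finrank_pi_fintype] at h1
    simpa using h1
  have hdvd : ∀ l : ℤ, l0 ≤ l → l < l0 + M * g →
      ((X - C (l : ℝ)) ^ κ) ^ (Module.finrank ℝ W0) ∣ G.det := by
    intro l hl hl'
    let mθ : (P' → ℝ) ≃ₗ[ℝ] (P' → ℝ) :=
      LinearEquiv.piCongrRight fun e : P' =>
        LinearEquiv.smulOfNeZero ℝ ℝ (θ e ^ l) (zpow_ne_zero _ (hθ e))
    rw [← LinearEquiv.finrank_map_eq mθ W0]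
    apply pow_finrank_dvd_det
    intro x hx i
    obtain ⟨a, ha, rfl⟩ := hx
    have hmθ : ∀ (a : P' → ℝ) e, mθ a e = θ e ^ l * a e := fun a e => rfl
    induction ha using Submodule.span_induction with
    | mem a ha =>
      obtain ⟨i', rfl⟩ := ha
      rw [X_sub_C_pow_dvd_iff, X_pow_dvd_iff]
      intro d hd
      obtain ⟨j, hj⟩ := hAB (σ i).1 i'
      have h1 := hvan d hd j (l + ((σ i).2 : ℕ)) (by omega) (by
        have := (σ i).2.2
        nlinarith)
      rw [← h1, Polynomial.sum_comp, Polynomial.finsetSum_coeff]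
      apply Fintype.sum_of_injective (fun e : P' => (e : P)) Subtype.val_injective
      · intro e he
        have : p e = 0 := by
          by_contra h
          exact he ⟨⟨e, h⟩, rfl⟩
        simp [this]
      · intro e
        simp only [G, Matrix.of_apply, LinearEquiv.coe_coe, hmθ]
        rw [mul_comp, mul_comp, C_comp, C_comp, comp_assoc, coeff_mul_C, coeff_C_mul]
        have h2 : ((X + C (((σ i).2 : ℕ) : ℝ)).comp (X + C (l : ℝ)) : ℝ[X]) =
            X + C (((l + ((σ i).2 : ℕ) : ℤ)) : ℝ) := by
          simp only [add_comp, X_comp, C_comp, Int.cast_add, Int.cast_natCast, C_add]; ring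
        rw [h2, ← taylor_apply, taylor_coeff, hj, zpow_add₀ (hθ e), zpow_natCast]
        simp [c]
        ring
    | zero => simp
    | add a a' _ _ h h' =>
      have : ∑ j, G i j * C (mθ (a + a') j) =
        ∑ j, G i j * C (mθ a j) + ∑ j, G i j * C (mθ a' j) := by
        rw [← Finset.sum_add_distrib]
        refine Finset.sum_congr rfl fun j _ => ?_
        rw [map_add, Pi.add_apply, C_add]; ring
      exact this ▸ dvd_add h h'
    | smul r a _ h =>
      have : ∑ j, G i j * C (mθ (r • a) j) = C r * ∑ j, G i j * C (mθ a j) := by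
        rw [Finset.mul_sum]
        refine Finset.sum_congr rfl fun j _ => ?_
        rw [map_smul, Pi.smul_apply, smul_eq_mul, C_mul]; ring
      exact this ▸ Dvd.dvd.mul_left h _
  have hprod : ∏ a ∈ Finset.range (M * g), ((X - C ((l0 + a : ℤ) : ℝ)) ^ κ) ^
      (Module.finrank ℝ W0) ∣ G.det := by
    apply Finset.prod_dvd_of_coprime
    · intro a _ a' _ haa
      apply IsCoprime.pow
      apply IsCoprime.pow
      apply isCoprime_X_sub_C_of_isUnit_sub
      rw [isUnit_iff_ne_zero, sub_ne_zero]
      intro h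
      apply haa
      have : (l0 + a : ℤ) = l0 + a' := by exact_mod_cast h
      omega
    · intro a ha
      have := Finset.mem_range.mp ha
      apply hdvd
      · omega
      · have : (a : ℤ) < M * g := by exact_mod_cast this
        omega
  have hd1 := natDegree_le_of_dvd hprod hG
  rw [natDegree_prod_of_monic _ _ (fun a _ => ((monic_X_sub_C _).pow _).pow _)] at hd1
  simp only [natDegree_pow, natDegree_X_sub_C, Finset.sum_const, Finset.card_range, mul_one,
    smul_eq_mul] at hd1
  have hd2 : ∑ j : P', (p j).natDegree < Fintype.card P' * (κ * g) := by
    have : ∑ j : P', (p j).natDegree < ∑ j : P', κ * g :=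
      Finset.sum_lt_sum_of_nonempty ⟨⟨e0, he0⟩, Finset.mem_univ _⟩ fun j _ => hdeg j j.2
    simpa using this
  have hd3 := Nat.mul_le_mul_right (κ * g) hcard
  nlinarith

open Polynomial in
/-- The zero estimate in matrix form: the interpolation matrix with rows indexed by `(k, e)` (the
functions `z ^ k` at the exponent `e`) and columns indexed by (order `t`, index `j`, integer `l`)
has full rank, so some choice `σ` of columns gives a non-zero determinant. -/
theorem exists_good_minor {P ι J : Type*} [Fintype P] [DecidableEq P] [Fintype ι] [Fintype J]
    (A : ι → P → ℝ) (B : J → P → ℝ)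
    (hAB : ∀ i i', ∃ j, ∀ e, B j e = A i e * A i' e) (θ : P → ℝ) (hθ : ∀ e, θ e ≠ 0)
    (M g κ : ℕ) (l0 : ℤ)
    (hcol : ∀ x : P → ℝ, (∀ i, ∀ τ < M, ∑ e, A i e * θ e ^ τ * x e = 0) → x = 0) :
    ∃ σ : Fin (κ * g) × P → Fin κ × J × Fin (M * (g + 1)),
      (Matrix.of fun r s : Fin (κ * g) × P =>
        ((r.1 : ℕ).choose (σ s).1 : ℝ) * ((l0 + (σ s).2.2 : ℤ) : ℝ) ^ ((r.1 : ℕ) - (σ s).1) *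
          B (σ s).2.1 r.2 * θ r.2 ^ (l0 + (σ s).2.2 : ℤ)).det ≠ 0 := by
  classical
  let c : Matrix (Fin κ × J × Fin (M * (g + 1))) (Fin (κ * g) × P) ℝ := Matrix.of fun s r =>
    ((r.1 : ℕ).choose s.1 : ℝ) * ((l0 + s.2.2 : ℤ) : ℝ) ^ ((r.1 : ℕ) - s.1) *
          B s.2.1 r.2 * θ r.2 ^ (l0 + s.2.2 : ℤ)
  have hc : ∀ x, c.mulVec x = 0 → x = 0 := by
    intro x hx
    let p : P → ℝ[X] := fun e => ∑ k : Fin (κ * g), C (x (k, e)) * X ^ (k : ℕ)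
    have hpc : ∀ e (k : Fin (κ * g)), (p e).coeff k = x (k, e) := by
      intro e k
      simp only [p, finsetSum_coeff, coeff_C_mul_X_pow]
      rw [Finset.sum_eq_single k]
      · simp
      · intro k' _ h
        rw [if_neg]
        exact fun h' => h (Fin.ext h'.symm)
      · simp
    have hp : ∀ e, p e = 0 := by
      refine zero_estimate A B hAB θ hθ M g κ l0 hcol p ?_ ?_
      · intro e he
        have hlt : (p e).degree < (κ * g : ℕ) := by
          refine (degree_sum_le _ _).trans_lt ?_
          rw [Finset.sup_lt_iff (WithBot.bot_lt_coe _)]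
          intro k _
          refine (degree_C_mul_X_pow_le _ _).trans_lt ?_
          exact_mod_cast k.2
        exact (natDegree_lt_iff_degree_lt he).mpr hlt
      · intro t ht j l hl hl'
        obtain ⟨a, rfl⟩ : ∃ a : ℕ, l = l0 + a := ⟨(l - l0).toNat, by omega⟩
        have ha : a < M * (g + 1) := by
          have : (a : ℤ) < M * (g + 1) := by omega
          exact_mod_cast this
        have h := congrFun hx (⟨t, ht⟩, j, ⟨a, ha⟩)
        rw [Matrix.mulVec, dotProduct, Pi.zero_apply, Fintype.sum_prod_type_right] at h
        rw [← h]
        refine Finset.sum_congr rfl fun e _ => ?_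
        simp only [p, map_sum, eval_finsetSum, Finset.sum_mul, c, Matrix.of_apply]
        refine Finset.sum_congr rfl fun k _ => ?_
        rw [C_mul_X_pow_eq_monomial, hasseDeriv_monomial, eval_monomial]
        ring
    funext ⟨k, e⟩
    rw [← hpc e k, hp e]; simp
  obtain ⟨σ, hσ⟩ := exists_minor c hc
  refine ⟨σ, ?_⟩
  rw [← Matrix.det_transpose] at hσ
  exact hσ

/-! ### Determinants of matrices with low-rank Taylor terms -/

/-- Expand the determinant multilinearly along the columns of `X = ∑ Y_h`. A term in which some
order `h < Q` is used by more than `r` columns vanishes, since these columns lie in `V h`, of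
dimension at most `r`. In every other term the orders add up to at least `E`, which gives the
factor `ρ⁻¹ ^ E`. -/
theorem det_capacity {N : Type*} [Fintype N] [DecidableEq N] (Q r : ℕ)
    (X : Matrix N N ℝ) (Y : ℕ → Matrix N N ℝ)
    (hX : ∀ i j, X i j = ∑ h ∈ Finset.range (Q + 1), Y h i j)
    (V : ℕ → Submodule ℝ (N → ℝ)) (hV : ∀ h < Q, Module.finrank ℝ (V h) ≤ r)
    (hYV : ∀ h < Q, ∀ j, (fun i => Y h i j) ∈ V h)
    (a b : N → ℝ) (ha : ∀ i, 0 ≤ a i) (hb : ∀ j, 0 ≤ b j) (ρ : ℝ) (hρ : 1 ≤ ρ)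
    (hY : ∀ h ≤ Q, ∀ i j, |Y h i j| ≤ a i * b j * ρ⁻¹ ^ h) (E : ℕ)
    (hE : E + r * (Q * (Q + 1) / 2) ≤ Q * Fintype.card N) :
    |X.det| ≤ (Fintype.card N).factorial * (Q + 1) ^ Fintype.card N *
      ((∏ i, a i) * (∏ j, b j) * ρ⁻¹ ^ E) := by
  classical
  have hρ0 : 0 < ρ := by linarith
  have h1 : X.det = ∑ c : N → Fin (Q + 1), (Matrix.of fun j i => Y (c j) i j).det := by
    rw [← Matrix.det_transpose]
    have h2 : X.transpose = fun j => ∑ h : Fin (Q + 1), fun i => Y h i j := by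
      funext j i
      rw [Matrix.transpose_apply, hX, Finset.sum_apply, Finset.sum_range]
    have h3 := (Matrix.detRowAlternating (R := ℝ) (n := N)).toMultilinearMap.map_sum
      (fun (j : N) (h : Fin (Q + 1)) => fun i => Y h i j)
    rw [h2]
    exact h3
  have hterm : ∀ c : N → Fin (Q + 1), |(Matrix.of fun j i => Y (c j) i j).det| ≤
      (Fintype.card N).factorial * ((∏ i, a i) * (∏ j, b j) * ρ⁻¹ ^ E) := by
    intro c
    have hR : 0 ≤ (∏ i, a i) * (∏ j, b j) * ρ⁻¹ ^ E :=
      mul_nonneg (mul_nonneg (Finset.prod_nonneg fun i _ => ha i)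
        (Finset.prod_nonneg fun i _ => hb i)) (by positivity)
    by_cases hcap : ∃ h < Q, r < (Finset.univ.filter fun j => (c j : ℕ) = h).card
    · obtain ⟨h, hh, hcard⟩ := hcap
      have h0 : (Matrix.of fun j i => Y (c j) i j).det = 0 := by
        by_contra hne
        have hu : IsUnit (Matrix.of fun j i => Y (c j) i j) := by
          rw [Matrix.isUnit_iff_isUnit_det]; exact isUnit_iff_ne_zero.mpr hne
        rw [← Matrix.linearIndependent_rows_iff_isUnit] at hu
        let s := Finset.univ.filter fun j => (c j : ℕ) = h
        have hli : LinearIndependent ℝ (fun j : s => (⟨fun i => Y h i j, hYV h hh j⟩ : V h)) := by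
          apply LinearIndependent.of_comp (V h).subtype
          have heq : (V h).subtype ∘ (fun j : s => (⟨fun i => Y h i j, hYV h hh j⟩ : V h)) =
              (Matrix.of fun j i => Y (c j) i j).row ∘ fun j : s => (j : N) := by
            funext j i
            have hj : (c j : ℕ) = h := (Finset.mem_filter.mp j.2).2
            simp [hj]
          rw [heq]
          exact hu.comp (fun j : s => (j : N)) Subtype.val_injective
        have := hli.fintype_card_le_finrank
        rw [Fintype.card_coe] at this
        exact absurd (this.trans (hV h hh)) (by simpa [s] using hcard)
      rw [h0, abs_zero]
      positivity
    · push Not at hcap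
      have hsum : E ≤ ∑ j, (c j : ℕ) := by
        have h4 : ∀ s ≤ Q, Fintype.card N ≤ r * s + (Finset.univ.filter fun j => s ≤ (c j : ℕ)).card := by
          intro s hs
          induction s with
          | zero => simp
          | succ s ih =>
            have h5 := ih (by omega)
            have h6 := hcap s (by omega)
            have h7 : (Finset.univ.filter fun j => s ≤ (c j : ℕ)).card ≤
              (Finset.univ.filter fun j => (c j : ℕ) = s).card +
              (Finset.univ.filter fun j => s + 1 ≤ (c j : ℕ)).card := by
              rw [← Finset.card_union_of_disjoint]
              · apply Finset.card_le_card
                intro j hj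
                simp only [Finset.mem_filter, Finset.mem_univ, true_and, Finset.mem_union] at hj ⊢
                omega
              · rw [Finset.disjoint_filter]
                intro j _ h8 h9
                omega
            rw [mul_add, mul_one]
            omega
        have h5 : ∑ j, (c j : ℕ) = ∑ s ∈ Finset.range Q,
            (Finset.univ.filter fun j => s + 1 ≤ (c j : ℕ)).card := by
          simp_rw [Finset.card_filter]
          rw [Finset.sum_comm]
          refine Finset.sum_congr rfl fun j _ => ?_
          rw [← Finset.card_filter]
          have : (Finset.range Q).filter (fun s => s + 1 ≤ (c j : ℕ)) = Finset.range (c j) := by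
            ext s
            have := (c j).2
            simp only [Finset.mem_filter, Finset.mem_range]
            omega
          rw [this, Finset.card_range]
        have h6 : ∑ s ∈ Finset.range Q, Fintype.card N ≤ ∑ s ∈ Finset.range Q, (r * (s + 1) +
            (Finset.univ.filter fun j => s + 1 ≤ (c j : ℕ)).card) :=
          Finset.sum_le_sum fun s hs => h4 (s + 1) (Finset.mem_range.mp hs)
        rw [Finset.sum_const, Finset.card_range, smul_eq_mul, Finset.sum_add_distrib, ← h5,
          ← Finset.mul_sum] at h6
        have h7 : ∑ s ∈ Finset.range Q, (s + 1) = Q * (Q + 1) / 2 := by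
          have := Finset.sum_range_id (Q + 1)
          rw [Finset.sum_range_succ'] at this
          simpa [mul_comm] using this
        rw [h7] at h6
        omega
      rw [Matrix.det_apply]
      refine (Finset.abs_sum_le_sum_abs _ _).trans ?_
      have h8 : ∀ τ : Equiv.Perm N, |(Equiv.Perm.sign τ) • ∏ i,
          (Matrix.of fun j i => Y (c j) i j) (τ i) i| ≤ (∏ i, a i) * (∏ j, b j) * ρ⁻¹ ^ E := by
        intro τ
        have hs : |(Equiv.Perm.sign τ) • ∏ i, (Matrix.of fun j i => Y (c j) i j) (τ i) i| =
          ∏ i, |Y (c (τ i)) i (τ i)| := by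
          rcases Int.units_eq_one_or (Equiv.Perm.sign τ) with h | h <;>
            simp [h, Finset.abs_prod]
        rw [hs]
        calc ∏ i, |Y (c (τ i)) i (τ i)| ≤ ∏ i, (a i * b (τ i) * ρ⁻¹ ^ (c (τ i) : ℕ)) :=
              Finset.prod_le_prod (fun _ _ => abs_nonneg _) fun i _ =>
                hY _ (by have := (c (τ i)).2; omega) _ _
          _ = (∏ i, a i) * (∏ j, b j) * ρ⁻¹ ^ (∑ j, (c j : ℕ)) := by
              rw [Finset.prod_mul_distrib, Finset.prod_mul_distrib, Equiv.prod_comp τ b,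
                Equiv.prod_comp τ (fun j => ρ⁻¹ ^ (c j : ℕ)), Finset.prod_pow_eq_pow_sum]
          _ ≤ _ := by
              apply mul_le_mul_of_nonneg_left
              · exact pow_le_pow_of_le_one (by positivity) (inv_le_one_of_one_le₀ hρ) hsum
              · exact mul_nonneg (Finset.prod_nonneg fun i _ => ha i)
                  (Finset.prod_nonneg fun i _ => hb i)
      refine (Finset.sum_le_sum fun τ _ => h8 τ).trans ?_
      rw [Finset.sum_const, Finset.card_univ, Fintype.card_perm, nsmul_eq_mul]
  rw [h1]
  refine (Finset.abs_sum_le_sum_abs _ _).trans ((Finset.sum_le_sum fun c _ => hterm c).trans ?_)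
  rw [Finset.sum_const, Finset.card_univ, nsmul_eq_mul, Fintype.card_fun, Fintype.card_fin]
  apply le_of_eq
  push_cast
  ring

/-! ### Taylor expansion of the entries -/

/-- The coefficient of `z ^ h` in `z ^ k * exp (w z)`. -/
noncomputable def rowCoeff (w : ℝ) (h k : ℕ) : ℝ :=
  if k ≤ h then w ^ (h - k) / (h - k).factorial else 0

/-- The `h`-th term of an expansion of `C(k, t) * l ^ (k - t) * exp (w l)`, the `t`-th divided
derivative of `z ^ k` at `l` times an exponential. It comes from expanding `z ^ k * exp (w z)` in
powers of `z` and undoing the derivatives of the exponential by the coefficients of `exp (-w z)`.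
The row index `k` enters only through `rowCoeff`, and the other factor is a polynomial of degree at
most `t` in `w`. -/
noncomputable def taylorTerm (w l : ℝ) (k t h : ℕ) : ℝ :=
  rowCoeff w h k * ∑ d ∈ Finset.range (t + 1),
    (h.choose d : ℝ) * l ^ (h - d) * ((-w) ^ (t - d) / (t - d).factorial)

/-- The `j`-th divided derivative of `exp (w z)` at `z = l`, term by term. -/
theorem hasSum_choose_exp (w l : ℝ) (j : ℕ) :
    HasSum (fun h : ℕ => w ^ h / h.factorial * ((h.choose j : ℝ) * l ^ (h - j)))
      (w ^ j / j.factorial * exp (w * l)) := by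
  have h1 : HasSum (fun i : ℕ => w ^ j / j.factorial * ((w * l) ^ i / i.factorial))
      (w ^ j / j.factorial * exp (w * l)) := by
    apply HasSum.mul_left
    rw [Real.exp_eq_exp_ℝ]
    exact NormedSpace.expSeries_div_hasSum_exp (w * l)
  have h2 : HasSum (fun i : ℕ => w ^ (i + j) / (i + j).factorial *
      (((i + j).choose j : ℝ) * l ^ (i + j - j))) (w ^ j / j.factorial * exp (w * l)) := by
    convert h1 using 2 with i
    have h3 : ((i + j).choose j : ℝ) * (j.factorial * i.factorial) = (i + j).factorial := by
      have := Nat.add_choose_mul_factorial_mul_factorial i j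
      rw [← this, ← Nat.choose_symm_add]; push_cast; ring
    have h4 : ((i + j).factorial : ℝ) ≠ 0 := by positivity
    have h5 : (j.factorial : ℝ) ≠ 0 := by positivity
    have h6 : (i.factorial : ℝ) ≠ 0 := by positivity
    rw [Nat.add_sub_cancel, mul_pow, pow_add]
    field_simp
    rw [← h3]
    ring
  have h3 := (hasSum_nat_add_iff (f := fun h : ℕ => w ^ h / h.factorial *
    ((h.choose j : ℝ) * l ^ (h - j))) j).mp h2
  have h4 : ∑ i ∈ Finset.range j, w ^ i / i.factorial * ((i.choose j : ℝ) * l ^ (i - j)) = 0 := by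
    apply Finset.sum_eq_zero
    intro i hi
    rw [Nat.choose_eq_zero_of_lt (Finset.mem_range.mp hi)]; simp
  rw [h4, add_zero] at h3
  exact h3

/-- The identity `exp (w z) * exp (-w z) = 1`, coefficient by coefficient. -/
theorem sum_exp_cancel (w : ℝ) (s : ℕ) :
    ∑ j ∈ Finset.range (s + 1), w ^ j / j.factorial * ((-w) ^ (s - j) / (s - j).factorial) =
      if s = 0 then 1 else 0 := by
  have h1 := add_pow w (-w) s
  rw [add_neg_cancel] at h1
  have h2 : (s.factorial : ℝ) ≠ 0 := by positivity
  have h3 : ∑ j ∈ Finset.range (s + 1), w ^ j / j.factorial * ((-w) ^ (s - j) / (s - j).factorial)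
      = (0 : ℝ) ^ s / s.factorial := by
    rw [h1, Finset.sum_div]
    refine Finset.sum_congr rfl fun j hj => ?_
    have hj' : j ≤ s := Nat.lt_succ_iff.mp (Finset.mem_range.mp hj)
    rw [Nat.cast_choose ℝ hj']
    field_simp
  rw [h3]
  split_ifs with h
  · simp [h]
  · simp [h]

/-- Leibniz rule for the divided derivatives of `z ^ (k + h) = z ^ k * z ^ h`. -/
theorem choose_mul_pow_add (l : ℝ) (k h d : ℕ) :
    ((k + h).choose d : ℝ) * l ^ (k + h - d) = ∑ i ∈ Finset.range (d + 1),
      ((k.choose i : ℝ) * l ^ (k - i)) * ((h.choose (d - i) : ℝ) * l ^ (h - (d - i))) := by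
  rw [Nat.add_choose_eq, Finset.Nat.sum_antidiagonal_eq_sum_range_succ
    (fun i j => k.choose i * h.choose j)]
  push_cast
  rw [Finset.sum_mul]
  refine Finset.sum_congr rfl fun i hi => ?_
  have h1 : i < d + 1 := Finset.mem_range.mp hi
  by_cases h2 : i ≤ k
  · by_cases h3 : d - i ≤ h
    · rw [show k + h - d = (k - i) + (h - (d - i)) by omega, pow_add]; ring
    · rw [Nat.choose_eq_zero_of_lt (not_le.mp h3)]; simp
  · rw [Nat.choose_eq_zero_of_lt (not_le.mp h2)]; simp

theorem hasSum_taylorTerm (w l : ℝ) (k t : ℕ) :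
    HasSum (taylorTerm w l k t) ((k.choose t : ℝ) * l ^ (k - t) * exp (w * l)) := by
  have h1 : HasSum (fun h : ℕ => taylorTerm w l k t (h + k))
      (∑ d ∈ Finset.range (t + 1), (∑ i ∈ Finset.range (d + 1),
        ((k.choose i : ℝ) * l ^ (k - i)) * (w ^ (d - i) / (d - i).factorial * exp (w * l))) *
        ((-w) ^ (t - d) / (t - d).factorial)) := by
    have h2 : (fun h : ℕ => taylorTerm w l k t (h + k)) = fun h =>
        ∑ d ∈ Finset.range (t + 1), (∑ i ∈ Finset.range (d + 1),
        ((k.choose i : ℝ) * l ^ (k - i)) *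
          (w ^ h / h.factorial * ((h.choose (d - i) : ℝ) * l ^ (h - (d - i))))) *
        ((-w) ^ (t - d) / (t - d).factorial) := by
      funext h
      rw [taylorTerm, rowCoeff, if_pos (by omega), Nat.add_sub_cancel, Finset.mul_sum]
      refine Finset.sum_congr rfl fun d _ => ?_
      rw [add_comm h k, choose_mul_pow_add, Finset.sum_mul, Finset.mul_sum, Finset.sum_mul]
      refine Finset.sum_congr rfl fun i _ => ?_
      ring
    rw [h2]
    refine hasSum_sum fun d _ => HasSum.mul_right _ ?_
    refine hasSum_sum fun i _ => HasSum.mul_left _ ?_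
    exact hasSum_choose_exp w l (d - i)
  have h3 := (hasSum_nat_add_iff (f := taylorTerm w l k t) k).mp h1
  have h4 : ∑ i ∈ Finset.range k, taylorTerm w l k t i = 0 := by
    apply Finset.sum_eq_zero
    intro i hi
    have := Finset.mem_range.mp hi
    rw [taylorTerm, rowCoeff, if_neg (by omega), zero_mul]
  rw [h4, add_zero] at h3
  have h5 := Finset.sum_range_diag_flip (t + 1) (fun i j =>
    ((k.choose i : ℝ) * l ^ (k - i)) * (w ^ j / j.factorial * exp (w * l)) *
        ((-w) ^ (t - (i + j)) / (t - (i + j)).factorial))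
  have h6 : ∀ d ∈ Finset.range (t + 1), (∑ i ∈ Finset.range (d + 1),
        ((k.choose i : ℝ) * l ^ (k - i)) * (w ^ (d - i) / (d - i).factorial * exp (w * l))) *
        ((-w) ^ (t - d) / (t - d).factorial) = ∑ i ∈ Finset.range (d + 1),
        ((k.choose i : ℝ) * l ^ (k - i)) * (w ^ (d - i) / (d - i).factorial * exp (w * l)) *
        ((-w) ^ (t - (i + (d - i))) / (t - (i + (d - i))).factorial) := by
    intro d _
    rw [Finset.sum_mul]
    refine Finset.sum_congr rfl fun i hi => ?_
    have h1 : i < d + 1 := Finset.mem_range.mp hi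
    rw [show i + (d - i) = d by omega]
  rw [Finset.sum_congr rfl h6, h5] at h3
  have h7 : ∀ i ∈ Finset.range (t + 1), ∑ j ∈ Finset.range (t + 1 - i),
      ((k.choose i : ℝ) * l ^ (k - i)) * (w ^ j / j.factorial * exp (w * l)) *
        ((-w) ^ (t - (i + j)) / (t - (i + j)).factorial) =
      if i = t then (k.choose t : ℝ) * l ^ (k - t) * exp (w * l) else 0 := by
    intro i hi
    have h1 : i < t + 1 := Finset.mem_range.mp hi
    have h8 := sum_exp_cancel w (t - i)
    rw [show t + 1 - i = t - i + 1 by omega]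
    calc _ = ((k.choose i : ℝ) * l ^ (k - i)) * exp (w * l) * ∑ j ∈ Finset.range (t - i + 1),
          w ^ j / j.factorial * ((-w) ^ (t - i - j) / (t - i - j).factorial) := by
          rw [Finset.mul_sum]
          refine Finset.sum_congr rfl fun j _ => ?_
          rw [Nat.sub_sub]; ring
      _ = _ := by
          rw [h8]
          by_cases h9 : i = t
          · subst h9; simp
          · rw [if_neg (by omega), if_neg h9, mul_zero]
  rw [Finset.sum_congr rfl h7] at h3
  simpa using h3

theorem abs_taylorTerm_le (w l W L ρ : ℝ) (hw : |w| ≤ W) (hl : |l| ≤ L) (hL : 1 ≤ L)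
    (hρ : 6 ≤ ρ) (k t h : ℕ) :
    |taylorTerm w l k t h| ≤ exp (ρ * W * L + W) * (ρ * L) ^ k * (ρ⁻¹ * exp L⁻¹) ^ h := by
  have hW : 0 ≤ W := (abs_nonneg w).trans hw
  have hL0 : 0 < L := by linarith
  have hρ0 : 0 < ρ := by linarith
  by_cases hk : k ≤ h
  swap
  · rw [taylorTerm, rowCoeff, if_neg hk, zero_mul, abs_zero]; positivity
  have h1 : |rowCoeff w h k| ≤ exp (ρ * W * L) * ((ρ * L) ^ k * ((ρ * L)⁻¹) ^ h) := by
    rw [rowCoeff, if_pos hk, abs_div, abs_pow, abs_of_nonneg (by positivity : (0:ℝ) ≤ (h-k).factorial)]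
    have h2 : (ρ * L) ^ k * ((ρ * L)⁻¹) ^ h = ((ρ * L) ^ (h - k))⁻¹ := by
      have : (ρ * L) ^ h = (ρ * L) ^ (h - k) * (ρ * L) ^ k := by rw [← pow_add]; congr 1; omega
      rw [inv_pow, this]; field_simp
    rw [h2, ← div_eq_mul_inv, le_div_iff₀ (by positivity)]
    calc |w| ^ (h - k) / (h - k).factorial * (ρ * L) ^ (h - k)
        ≤ W ^ (h - k) / (h - k).factorial * (ρ * L) ^ (h - k) := by gcongr
      _ = (ρ * W * L) ^ (h - k) / (h - k).factorial := by
          rw [show ρ * W * L = W * (ρ * L) by ring, mul_pow W]; ring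
      _ ≤ _ := Real.pow_div_factorial_le_exp _ (by positivity) _
  have h2 : |∑ d ∈ Finset.range (t + 1),
      (h.choose d : ℝ) * l ^ (h - d) * ((-w) ^ (t - d) / (t - d).factorial)| ≤
      L ^ h * exp (h / L + W) := by
    calc _ ≤ ∑ d ∈ Finset.range (t + 1), L ^ h * ((h / L) ^ d / d.factorial *
          (W ^ (t - d) / (t - d).factorial)) := by
          refine (Finset.abs_sum_le_sum_abs _ _).trans (Finset.sum_le_sum fun d _ => ?_)
          rw [abs_mul, abs_mul, abs_div, abs_pow, abs_pow, abs_neg, Nat.abs_cast, Nat.abs_cast,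
            ← mul_assoc]
          gcongr ?_ * ?_
          · by_cases hd : d ≤ h
            · calc (h.choose d : ℝ) * |l| ^ (h - d) ≤ h ^ d / d.factorial * L ^ (h - d) := by
                    gcongr
                    exact Nat.choose_le_pow_div d h
                _ = _ := by
                    have : L ^ h = L ^ (h - d) * L ^ d := by rw [← pow_add]; congr 1; omega
                    rw [this, div_pow]; field_simp
            · rw [Nat.choose_eq_zero_of_lt (not_le.mp hd)]
              simp only [Nat.cast_zero, zero_mul]; positivity
          · gcongr
      _ = L ^ h * ((h / L + W) ^ t / t.factorial) := by
          rw [← Finset.mul_sum]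
          congr 1
          rw [add_pow, Finset.sum_div]
          refine Finset.sum_congr rfl fun d hd => ?_
          have hd' : d ≤ t := Nat.lt_succ_iff.mp (Finset.mem_range.mp hd)
          rw [Nat.cast_choose ℝ hd']
          field_simp
      _ ≤ _ := by
          gcongr
          exact Real.pow_div_factorial_le_exp _ (by positivity) _
  rw [taylorTerm, abs_mul]
  calc _ ≤ exp (ρ * W * L) * ((ρ * L) ^ k * ((ρ * L)⁻¹) ^ h) * (L ^ h * exp (h / L + W)) := by
        gcongr
    _ = exp (ρ * W * L) * exp W * (ρ * L) ^ k * (ρ⁻¹ ^ h * exp (h / L)) * ((L⁻¹) ^ h * L ^ h) := by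
        rw [exp_add, mul_inv, mul_pow ρ⁻¹]; ring
    _ = _ := by
        rw [← mul_pow, inv_mul_cancel₀ hL0.ne', one_pow, mul_one, exp_add, mul_pow ρ⁻¹, ← exp_nat_mul,
          div_eq_mul_inv]

theorem abs_taylor_tail_le (w l W L ρ : ℝ) (hw : |w| ≤ W) (hl : |l| ≤ L) (hL : 1 ≤ L)
    (hρ : 6 ≤ ρ) (k t Q : ℕ) :
    |(k.choose t : ℝ) * l ^ (k - t) * exp (w * l) - ∑ h ∈ Finset.range Q, taylorTerm w l k t h| ≤
      2 * (exp (ρ * W * L + W) * (ρ * L) ^ k) * (ρ⁻¹ * exp L⁻¹) ^ Q := by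
  have hW : 0 ≤ W := (abs_nonneg w).trans hw
  have hL0 : 0 < L := by linarith
  have hρ0 : 0 < ρ := by linarith
  have hx0 : 0 ≤ ρ⁻¹ * exp L⁻¹ := by positivity
  have hx : ρ⁻¹ * exp L⁻¹ ≤ 1 / 2 := by
    have h1 : exp L⁻¹ ≤ exp 1 := exp_le_exp.mpr (inv_le_one_of_one_le₀ hL)
    have h2 := Real.exp_one_lt_d9
    rw [inv_mul_le_iff₀ hρ0]; linarith
  have h1 : HasSum (fun h => taylorTerm w l k t (h + Q)) ((k.choose t : ℝ) * l ^ (k - t) *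
      exp (w * l) - ∑ h ∈ Finset.range Q, taylorTerm w l k t h) :=
    (hasSum_nat_add_iff' Q).mpr (hasSum_taylorTerm w l k t)
  have h2 : HasSum (fun h : ℕ => exp (ρ * W * L + W) * (ρ * L) ^ k * (ρ⁻¹ * exp L⁻¹) ^ Q *
      (ρ⁻¹ * exp L⁻¹) ^ h) (exp (ρ * W * L + W) * (ρ * L) ^ k * (ρ⁻¹ * exp L⁻¹) ^ Q *
        (1 - ρ⁻¹ * exp L⁻¹)⁻¹) :=
    (hasSum_geometric_of_lt_one hx0 (by linarith)).mul_left _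
  have h3 := h1.norm_le_of_bounded h2 (fun h => by
    rw [Real.norm_eq_abs]
    refine (abs_taylorTerm_le w l W L ρ hw hl hL hρ k t _).trans (le_of_eq ?_)
    rw [pow_add]; ring)
  rw [Real.norm_eq_abs] at h3
  refine h3.trans ?_
  have h4 : (1 - ρ⁻¹ * exp L⁻¹)⁻¹ ≤ 2 := by
    rw [inv_le_comm₀ (by linarith) (by norm_num)]; linarith
  calc _ ≤ exp (ρ * W * L + W) * (ρ * L) ^ k * (ρ⁻¹ * exp L⁻¹) ^ Q * 2 := by gcongr
    _ = _ := by ring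

theorem choose_mul_pow_le (l L : ℝ) (hl : |l| ≤ L) (k t : ℕ) :
    |(k.choose t : ℝ) * l ^ (k - t)| ≤ (L + 1) ^ k := by
  have hL : 0 ≤ L := (abs_nonneg l).trans hl
  rw [abs_mul, abs_pow, Nat.abs_cast]
  by_cases h : t ≤ k
  · rw [add_pow]
    calc (k.choose t : ℝ) * |l| ^ (k - t) ≤ L ^ (k - t) * 1 ^ (k - (k - t)) * k.choose (k - t) := by
          rw [Nat.choose_symm h, one_pow, mul_one, mul_comm]; gcongr
      _ ≤ _ := Finset.single_le_sum (f := fun m => L ^ m * 1 ^ (k - m) * (k.choose m : ℝ))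
          (fun i _ => by positivity) (Finset.mem_range.mpr (by omega))
  · rw [Nat.choose_eq_zero_of_lt (not_le.mp h)]; simp only [Nat.cast_zero, zero_mul]; positivity

/-- The tail estimate with the exponent `w` replaced by a nearby `y`: the error is of the size of
the tail because `|y - w| ≤ ρ⁻¹ ^ Q / (2 L)`. -/
theorem abs_taylor_remainder_le (w l W L ρ y : ℝ) (hw : |w| ≤ W) (hl : |l| ≤ L) (hL : 1 ≤ L)
    (hρ : 6 ≤ ρ) (k t Q : ℕ) (hy : 2 * L * |y - w| ≤ ρ⁻¹ ^ Q) :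
    |(k.choose t : ℝ) * l ^ (k - t) * exp (y * l) - ∑ h ∈ Finset.range Q, taylorTerm w l k t h| ≤
      3 * (exp (ρ * W * L + W) * (ρ * L) ^ k) * (ρ⁻¹ * exp L⁻¹) ^ Q := by
  have hW : 0 ≤ W := (abs_nonneg w).trans hw
  have hL0 : 0 < L := by linarith
  have hρ0 : 0 < ρ := by linarith
  have h1 := abs_taylor_tail_le w l W L ρ hw hl hL hρ k t Q
  have h2 : |(y - w) * l| ≤ ρ⁻¹ ^ Q / 2 := by
    rw [abs_mul]
    calc |y - w| * |l| ≤ |y - w| * L := by gcongr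
      _ ≤ _ := by linarith
  have h5 : ρ⁻¹ ^ Q ≤ 1 := pow_le_one₀ (by positivity) (inv_le_one_of_one_le₀ (by linarith))
  have h3 : |exp (y * l) - exp (w * l)| ≤ exp (W * L) * ρ⁻¹ ^ Q := by
    have e1 : exp (y * l) - exp (w * l) = exp (w * l) * (exp ((y - w) * l) - 1) := by
      rw [mul_sub, ← exp_add, mul_one]; congr 2; ring
    rw [e1, abs_mul, abs_of_pos (exp_pos _)]
    refine mul_le_mul (exp_le_exp.mpr ?_) ?_ (abs_nonneg _) (exp_pos _).le
    · calc w * l ≤ |w * l| := le_abs_self _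
        _ = |w| * |l| := abs_mul _ _
        _ ≤ _ := by gcongr
    · have := Real.abs_exp_sub_one_le (x := (y - w) * l) (by linarith)
      linarith
  have h4 : |(k.choose t : ℝ) * l ^ (k - t)| ≤ (ρ * L) ^ k := by
    refine (choose_mul_pow_le l L hl k t).trans ?_
    gcongr
    nlinarith
  have h6 : |(k.choose t : ℝ) * l ^ (k - t) * (exp (y * l) - exp (w * l))| ≤
      (exp (ρ * W * L + W) * (ρ * L) ^ k) * (ρ⁻¹ * exp L⁻¹) ^ Q := by
    rw [abs_mul]
    calc _ ≤ (ρ * L) ^ k * (exp (W * L) * ρ⁻¹ ^ Q) := by gcongr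
      _ ≤ (ρ * L) ^ k * (exp (ρ * W * L + W) * (ρ⁻¹ * exp L⁻¹) ^ Q) := by
          gcongr
          · have : 0 ≤ W * L := by positivity
            nlinarith
          · have : 1 ≤ exp L⁻¹ := one_le_exp (by positivity)
            nlinarith [inv_pos.mpr hρ0]
      _ = _ := by ring
  calc _ = |((k.choose t : ℝ) * l ^ (k - t) * exp (w * l) - ∑ h ∈ Finset.range Q,
        taylorTerm w l k t h) + (k.choose t : ℝ) * l ^ (k - t) * (exp (y * l) - exp (w * l))| := by
        congr 1; ring
    _ ≤ _ := (abs_add_le _ _).trans (by linarith)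

/-! ### The analytic upper bound -/

/-- `det_capacity` applied to the Taylor terms of order `< Q` together with the remainder. For a
fixed order the columns lie in the image of `Vtop` under multiplication by `rowCoeff`, hence in a
space of dimension at most `r`. -/
theorem det_upper {P J : Type*} [Fintype P] [DecidableEq P] (κ n0 : ℕ) (w y : P → ℝ)
    (B : J → P → ℝ) (W L ρ Ub : ℝ) (hw : ∀ e, |w e| ≤ W) (hB : ∀ j e, |B j e| ≤ Ub)
    (hL : 1 ≤ L) (hρ : 6 ≤ ρ) (t : Fin n0 × P → ℕ) (ht : ∀ s, t s < κ) (jj : Fin n0 × P → J)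
    (l : Fin n0 × P → ℝ) (hl : ∀ s, |l s| ≤ L) (Vtop : Submodule ℝ (P → ℝ)) (r : ℕ)
    (hr : Module.finrank ℝ Vtop ≤ r) (hV : ∀ a < κ, ∀ j, (fun e => w e ^ a * B j e) ∈ Vtop)
    (Q E : ℕ) (hE : E + r * (Q * (Q + 1) / 2) ≤ Q * (n0 * Fintype.card P))
    (hy : ∀ e, 2 * L * |y e - w e| ≤ ρ⁻¹ ^ Q) :
    |(Matrix.of fun a s : Fin n0 × P => ((a.1 : ℕ).choose (t s) : ℝ) * l s ^ ((a.1 : ℕ) - t s) *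
        B (jj s) a.2 * exp (y a.2 * l s)).det| ≤
      (n0 * Fintype.card P).factorial * (Q + 1) ^ (n0 * Fintype.card P) *
        ((∏ a : Fin n0 × P, 3 * (exp (ρ * W * L + W) * (ρ * L) ^ (a.1 : ℕ)) * Ub) *
          (ρ⁻¹ * exp L⁻¹) ^ E) := by
  classical
  by_cases hP : IsEmpty (Fin n0 × P)
  · have hc : n0 * Fintype.card P = 0 := by
      have := Fintype.card_eq_zero (α := Fin n0 × P)
      rwa [Fintype.card_prod, Fintype.card_fin] at this
    rw [Matrix.det_isEmpty, hc]
    have : E = 0 := by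
      rw [hc] at hE; omega
    simp [this]
  have hne : Nonempty (Fin n0 × P) := not_isEmpty_iff.mp hP
  obtain ⟨a0⟩ := hne
  have hW : 0 ≤ W := (abs_nonneg _).trans (hw a0.2)
  have hU : 0 ≤ Ub := (abs_nonneg _).trans (hB (jj a0) a0.2)
  have hL0 : 0 < L := by linarith
  have hρ0 : 0 < ρ := by linarith
  have hx0 : 0 < ρ⁻¹ * exp L⁻¹ := by positivity
  have hx : ρ⁻¹ * exp L⁻¹ ≤ 1 := by
    have h1 : exp L⁻¹ ≤ exp 1 := exp_le_exp.mpr (inv_le_one_of_one_le₀ hL)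
    have h2 := Real.exp_one_lt_d9
    rw [inv_mul_le_iff₀ hρ0]; linarith
  let Y : ℕ → Matrix (Fin n0 × P) (Fin n0 × P) ℝ := fun h => Matrix.of fun a s =>
    if h < Q then taylorTerm (w a.2) (l s) a.1 (t s) h * B (jj s) a.2
    else (((a.1 : ℕ).choose (t s) : ℝ) * l s ^ ((a.1 : ℕ) - t s) * exp (y a.2 * l s) -
      ∑ h' ∈ Finset.range Q, taylorTerm (w a.2) (l s) a.1 (t s) h') * B (jj s) a.2
  let φ : ℕ → (P → ℝ) →ₗ[ℝ] (Fin n0 × P → ℝ) := fun h =>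
    { toFun := fun f a => rowCoeff (w a.2) h a.1 * f a.2
      map_add' := fun f f' => by funext a; simp [mul_add]
      map_smul' := fun c f => by funext a; simp; ring }
  have hcap := det_capacity Q r (Matrix.of fun a s : Fin n0 × P =>
      ((a.1 : ℕ).choose (t s) : ℝ) * l s ^ ((a.1 : ℕ) - t s) *
        B (jj s) a.2 * exp (y a.2 * l s)) Y ?_ (fun h => Vtop.map (φ h)) ?_ ?_
      (fun a => 3 * (exp (ρ * W * L + W) * (ρ * L) ^ (a.1 : ℕ)) * Ub) (fun _ => 1) ?_ ?_
      ((ρ⁻¹ * exp L⁻¹)⁻¹) ?_ ?_ E ?_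
  · simpa [Fintype.card_prod] using hcap
  · intro a s
    rw [Finset.sum_range_succ]
    simp only [Y, Matrix.of_apply, lt_irrefl, if_false]
    rw [Finset.sum_congr rfl (g := fun h' => taylorTerm (w a.2) (l s) a.1 (t s) h' * B (jj s) a.2)
      (fun h hh => if_pos (Finset.mem_range.mp hh)), ← Finset.sum_mul]
    ring
  · intro h _
    exact (Submodule.finrank_map_le _ _).trans hr
  · intro h hh s
    refine ⟨fun e => ∑ d ∈ Finset.range (t s + 1), ((h.choose d : ℝ) * l s ^ (h - d) *
      ((-1) ^ (t s - d) / (t s - d).factorial)) * (w e ^ (t s - d) * B (jj s) e), ?_, ?_⟩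
    · have h2 : (fun e => ∑ d ∈ Finset.range (t s + 1), ((h.choose d : ℝ) * l s ^ (h - d) *
        ((-1) ^ (t s - d) / (t s - d).factorial)) * (w e ^ (t s - d) * B (jj s) e)) =
        ∑ d ∈ Finset.range (t s + 1), ((h.choose d : ℝ) * l s ^ (h - d) *
        ((-1) ^ (t s - d) / (t s - d).factorial)) • (fun e => w e ^ (t s - d) * B (jj s) e) := by
        funext e; simp
      rw [h2]
      refine Submodule.sum_mem _ fun d _ => Submodule.smul_mem _ _ (hV _ ?_ _)
      have := ht s
      omega
    · funext a
      simp only [φ, Y, LinearMap.coe_mk, AddHom.coe_mk, Matrix.of_apply, if_pos hh, taylorTerm]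
      rw [mul_assoc, Finset.sum_mul]
      congr 1
      refine Finset.sum_congr rfl fun d _ => ?_
      rw [neg_pow (w a.2)]; ring
  · intro a; positivity
  · intro a; positivity
  · exact (one_le_inv₀ hx0).mpr hx
  · intro h hh a s
    rw [inv_inv, mul_one]
    have hC : 0 ≤ exp (ρ * W * L + W) * (ρ * L) ^ (a.1 : ℕ) := by positivity
    by_cases h1 : h < Q
    · simp only [Y, Matrix.of_apply, if_pos h1, abs_mul]
      calc _ ≤ exp (ρ * W * L + W) * (ρ * L) ^ (a.1 : ℕ) * (ρ⁻¹ * exp L⁻¹) ^ h * Ub := by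
            gcongr
            · exact abs_taylorTerm_le _ _ W L ρ (hw _) (hl _) hL hρ _ _ _
            · exact hB _ _
        _ ≤ 3 * (exp (ρ * W * L + W) * (ρ * L) ^ (a.1 : ℕ)) * (ρ⁻¹ * exp L⁻¹) ^ h * Ub := by
            refine mul_le_mul_of_nonneg_right (mul_le_mul_of_nonneg_right ?_ (by positivity)) hU
            linarith
        _ = _ := by ring
    · have h2 : h = Q := by omega
      subst h2
      simp only [Y, Matrix.of_apply, if_neg h1, abs_mul]
      calc _ ≤ 3 * (exp (ρ * W * L + W) * (ρ * L) ^ (a.1 : ℕ)) * (ρ⁻¹ * exp L⁻¹) ^ h * Ub := by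
            gcongr
            · exact abs_taylor_remainder_le _ _ W L ρ _ (hw _) (hl _) hL hρ _ _ _ (hy _)
            · exact hB _ _
        _ = _ := by ring
  · rw [Fintype.card_prod, Fintype.card_fin]; exact hE

/-! ### Feldman polynomials -/

section

open Polynomial

theorem factorial_dvd_desc_mul (d h i : ℕ) (hd : ∀ a, 1 ≤ a → a ≤ h → a ∣ d) (hi : i ≤ h) :
    (i.factorial : ℤ[X]) ∣ aeval (C (d : ℤ) * X) (descPochhammer ℤ i) := by
  have key : ∀ j, j + 1 ≤ h → ((j.factorial : ℤ[X]) * (d : ℤ[X])) ∣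
      aeval (C (d : ℤ) * X) (descPochhammer ℤ (j + 1)) := by
    intro j
    induction j with
    | zero => intro _; simp
    | succ j ih =>
      intro hj
      rw [descPochhammer_succ_right, map_mul]
      obtain ⟨q, hq⟩ := ih (by omega)
      obtain ⟨c, hc⟩ := hd (j + 1) (by omega) (by omega)
      rw [hq]
      refine ⟨q * (C (c : ℤ) * X - 1), ?_⟩
      have e1 : (d : ℤ[X]) = ((j : ℤ[X]) + 1) * (c : ℤ[X]) := by rw [hc]; push_cast; ring
      have e2 : aeval (C (d : ℤ) * X) (X - ((j + 1 : ℕ) : ℤ[X])) =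
          ((j : ℤ[X]) + 1) * (C (c : ℤ) * X - 1) := by
        have h0 : (C (d : ℤ) : ℤ[X]) = (d : ℤ[X]) := by simp
        rw [map_sub, aeval_X, h0, map_natCast, e1]
        have : (C (c : ℤ) : ℤ[X]) = (c : ℤ[X]) := by simp
        rw [this]; push_cast; ring
      rw [e2, Nat.factorial_succ]; push_cast; ring
  cases i with
  | zero => simp
  | succ j =>
    refine dvd_trans ?_ (key j hi)
    obtain ⟨c, hc⟩ := hd (j + 1) (by omega) (by omega)
    refine ⟨(c : ℤ[X]), ?_⟩
    rw [Nat.factorial_succ, hc]; push_cast; ring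

theorem factorial_dvd_desc_int (l : ℤ) (i : ℕ) :
    (i.factorial : ℤ[X]) ∣ aeval (C l : ℤ[X]) (descPochhammer ℤ i) := by
  have h1 : aeval (C l : ℤ[X]) (descPochhammer ℤ i) = C (aeval l (descPochhammer ℤ i)) := by
    have := aeval_algebraMap_apply ℤ[X] l (descPochhammer ℤ i)
    simpa using this
  have h2 := Ring.descPochhammer_eq_factorial_smul_choose l i
  rw [← aeval_eq_smeval] at h2
  rw [h1, h2]
  refine ⟨C (Ring.choose l i), ?_⟩
  simp

/-- If `d` is divisible by `1, …, h`, then `h!` divides the descending Pochhammer polynomial of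
degree `h` at `l + d X`, by Vandermonde convolution. -/
theorem factorial_dvd_desc (d h : ℕ) (hd : ∀ a, 1 ≤ a → a ≤ h → a ∣ d) (l : ℤ) :
    (h.factorial : ℤ[X]) ∣ aeval (C l + C (d : ℤ) * X) (descPochhammer ℤ h) := by
  have h1 := Ring.descPochhammer_smeval_add (r := (C l : ℤ[X])) (s := C (d : ℤ) * X) h
    (Commute.all _ _)
  simp_rw [← aeval_eq_smeval] at h1
  rw [h1]
  refine Finset.dvd_sum fun ij hij => ?_
  have h2 := Finset.HasAntidiagonal.mem_antidiagonal.mp hij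
  obtain ⟨p, hp⟩ := factorial_dvd_desc_int l ij.1
  obtain ⟨q, hq⟩ := factorial_dvd_desc_mul d h ij.2 hd (by omega)
  rw [hp, hq]
  refine ⟨p * q, ?_⟩
  have h3 := Nat.add_choose_mul_factorial_mul_factorial ij.1 ij.2
  rw [h2] at h3
  rw [← h3, Nat.choose_symm_of_eq_add h2.symm]; push_cast; ring

/-- The Feldman polynomial of index `k`: monic of degree `k`, a power of the descending Pochhammer
polynomial of degree `h` times a power of `X`. For `h = 0` the convention `k / 0 = 0` gives `X ^
k`. -/
noncomputable def feldman (h k : ℕ) : ℤ[X] := descPochhammer ℤ h ^ (k / h) * X ^ (k % h)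

theorem feldman_monic (h k : ℕ) : (feldman h k).Monic :=
  ((monic_descPochhammer ℤ h).pow _).mul (monic_X_pow _)

theorem feldman_natDegree (h k : ℕ) : (feldman h k).natDegree = k := by
  rw [feldman, Monic.natDegree_mul ((monic_descPochhammer ℤ h).pow _) (monic_X_pow _),
    Monic.natDegree_pow (monic_descPochhammer ℤ h), descPochhammer_natDegree, natDegree_X_pow]
  rw [mul_comm]; exact Nat.div_add_mod k h

theorem feldman_dvd (d h : ℕ) (hd : ∀ a, 1 ≤ a → a ≤ h → a ∣ d) (l : ℤ) (k t : ℕ) :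
    ((h.factorial ^ (k / h) : ℕ) : ℤ) ∣ (d : ℤ) ^ t * (hasseDeriv t (feldman h k)).eval l := by
  have h1 : ((h.factorial ^ (k / h) : ℕ) : ℤ[X]) ∣ aeval (C l + C (d : ℤ) * X) (feldman h k) := by
    rw [feldman, map_mul, map_pow]
    push_cast
    exact Dvd.dvd.mul_right (pow_dvd_pow_of_dvd (factorial_dvd_desc d h hd l) _) _
  have h2 : aeval (C l + C (d : ℤ) * X) (feldman h k) =
      (taylor l (feldman h k)).comp (C (d : ℤ) * X) := by
    rw [taylor_apply, comp_assoc]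
    simp only [add_comp, X_comp, C_comp]
    rw [add_comm]
    rfl
  obtain ⟨q, hq⟩ := h1
  refine ⟨q.coeff t, ?_⟩
  have h3 := congrArg (fun p => coeff p t) (h2.symm.trans hq)
  rw [comp_C_mul_X_coeff, taylor_coeff] at h3
  rw [mul_comm, h3]
  have : ((h.factorial ^ (k / h) : ℕ) : ℤ[X]) = C ((h.factorial ^ (k / h) : ℕ) : ℤ) := by simp
  rw [this, coeff_C_mul]

/-- The Feldman polynomials and the powers `X ^ k` are both monic of degrees `0, …, n0 - 1`, so the
change of basis is unitriangular and the determinant does not change. -/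
theorem feldman_det {P : Type*} [Fintype P] [DecidableEq P] (n0 h : ℕ) (t : Fin n0 × P → ℕ)
    (l : Fin n0 × P → ℤ) (Φ : P → Fin n0 × P → ℝ) :
    (Matrix.of fun a s : Fin n0 × P => (((hasseDeriv (t s) (feldman h a.1)).eval (l s) : ℤ) : ℝ) *
      Φ a.2 s).det =
    (Matrix.of fun a s : Fin n0 × P => ((a.1 : ℕ).choose (t s) : ℝ) * (l s : ℝ) ^ ((a.1 : ℕ) - t s) *
      Φ a.2 s).det := by
  let T : Matrix (Fin n0) (Fin n0) ℝ := Matrix.of fun k k' => ((feldman h k).coeff k' : ℝ)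
  have hT : T.det = 1 := by
    rw [Matrix.det_of_isLowerTriangular T ?_]
    · apply Finset.prod_eq_one
      intro k _
      have h1 := (feldman_monic h k).coeff_natDegree
      rw [feldman_natDegree] at h1
      simp [T, h1]
    · intro i j hij
      have hij' : (i : ℕ) < (j : ℕ) := by simpa using hij
      simp only [T, Matrix.of_apply]
      rw [coeff_eq_zero_of_natDegree_lt (by rwa [feldman_natDegree])]; simp
  have h2 : (Matrix.of fun a s : Fin n0 × P => (((hasseDeriv (t s) (feldman h a.1)).eval (l s) : ℤ) : ℝ) *
      Φ a.2 s) = (Matrix.kroneckerMap (· * ·) T (1 : Matrix P P ℝ)) *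
      (Matrix.of fun a s : Fin n0 × P => ((a.1 : ℕ).choose (t s) : ℝ) *
        (l s : ℝ) ^ ((a.1 : ℕ) - t s) * Φ a.2 s) := by
    ext a s
    rw [Matrix.mul_apply, Fintype.sum_prod_type]
    simp only [Matrix.kroneckerMap_apply, Matrix.of_apply, Matrix.one_apply, T]
    have h3 : ∀ x : Fin n0, ∑ y : P, ((feldman h a.1).coeff x : ℝ) * (if a.2 = y then 1 else 0) *
        (((x : ℕ).choose (t s) : ℝ) * (l s : ℝ) ^ ((x : ℕ) - t s) * Φ y s) =
        (((feldman h a.1).coeff x : ℝ) * ((x : ℕ).choose (t s) : ℝ) * (l s : ℝ) ^ ((x : ℕ) - t s)) *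
          Φ a.2 s := by
      intro x
      rw [Finset.sum_eq_single a.2]
      · simp; ring
      · intro y _ hy; simp [Ne.symm hy]
      · simp
    simp_rw [h3]
    rw [← Finset.sum_mul]
    congr 1
    rw [hasseDeriv_apply, sum_over_range' _ _ n0 (by rw [feldman_natDegree]; exact a.1.2)]
    · rw [eval_finsetSum, Finset.sum_range]
      push_cast
      refine Finset.sum_congr rfl fun x _ => ?_
      rw [eval_monomial]; push_cast; ring
    · intro n; simp
  rw [h2, Matrix.det_mul, Matrix.det_kronecker, hT]
  simp

end

/-! ### The ring ℤ[α] and the arithmetic lower bound -/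

section

open Polynomial

/-- The ring `ℤ[α]` embedded in `ℝ × ℝ` by `x ↦ (x, conjugate of x)`. -/
noncomputable def goldenIntegers : Subring (ℝ × ℝ) where
  carrier := {x | ∃ a b : ℤ, x = ((a : ℝ) + b * goldenRatio, (a : ℝ) + b * goldenConj)}
  mul_mem' := by
    rintro _ _ ⟨a, b, rfl⟩ ⟨c, d, rfl⟩
    refine ⟨a * c + b * d, a * d + b * c + b * d, ?_⟩
    have h1 := goldenRatio_sq
    have h2 := goldenConj_sq
    refine Prod.ext ?_ ?_
    · simp only [Prod.mk_mul_mk]; push_cast; linear_combination (b : ℝ) * d * h1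
    · simp only [Prod.mk_mul_mk]; push_cast; linear_combination (b : ℝ) * d * h2
  one_mem' := ⟨1, 0, by ext <;> simp⟩
  add_mem' := by
    rintro _ _ ⟨a, b, rfl⟩ ⟨c, d, rfl⟩
    refine ⟨a + c, b + d, ?_⟩
    refine Prod.ext ?_ ?_
    · simp only [Prod.mk_add_mk]; push_cast; ring
    · simp only [Prod.mk_add_mk]; push_cast; ring
  zero_mem' := ⟨0, 0, by ext <;> simp⟩
  neg_mem' := by
    rintro _ ⟨a, b, rfl⟩
    refine ⟨-a, -b, ?_⟩
    refine Prod.ext ?_ ?_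
    · simp only [Prod.neg_mk]; push_cast; ring
    · simp only [Prod.neg_mk]; push_cast; ring

/-- The norm of a non-zero element of `ℤ[α]` is a non-zero integer. -/
theorem goldenIntegers_norm (x : ℝ × ℝ) (hx : x ∈ goldenIntegers) (h0 : x.1 ≠ 0) :
    1 ≤ |x.1| * |x.2| := by
  obtain ⟨a, b, rfl⟩ := hx
  have h1 := goldenRatio_mul_goldenConj
  have h2 := goldenRatio_add_goldenConj
  have h3 : ((a : ℝ) + b * goldenRatio) * ((a : ℝ) + b * goldenConj) =
      ((a ^ 2 + a * b - b ^ 2 : ℤ) : ℝ) := by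
    push_cast; linear_combination (b : ℝ) ^ 2 * h1 + (a : ℝ) * b * h2
  rw [← abs_mul]
  simp only
  rw [h3]
  have h4 : (a : ℝ) + b * goldenConj ≠ 0 := by
    intro h
    by_cases hb : b = 0
    · subst hb
      simp at h h0
      exact h0 h
    · have hirr := goldenConj_irrational
      apply hirr
      refine ⟨-(a : ℚ) / b, ?_⟩
      have hb' : (b : ℝ) ≠ 0 := by exact_mod_cast hb
      push_cast
      rw [div_eq_iff hb']
      linarith
  have h5 : (a ^ 2 + a * b - b ^ 2 : ℤ) ≠ 0 := by
    intro h
    rw [h] at h3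
    simp at h3
    rcases h3 with h | h
    · exact h0 h
    · exact h4 h
  have h6 := Int.one_le_abs h5
  exact_mod_cast h6

theorem goldenIntegers_int (a : ℤ) : ((a : ℝ), (a : ℝ)) ∈ goldenIntegers :=
  ⟨a, 0, by simp⟩

theorem goldenIntegers_golden : (goldenRatio, goldenConj) ∈ goldenIntegers :=
  ⟨0, 1, by simp⟩

theorem goldenIntegers_golden_inv : (goldenRatio⁻¹, goldenConj⁻¹) ∈ goldenIntegers := by
  refine ⟨-1, 1, ?_⟩
  rw [inv_goldenRatio, inv_goldenConj]
  have h2 := goldenRatio_add_goldenConj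
  refine Prod.ext ?_ ?_
  · simp only; push_cast; linarith
  · simp only; push_cast; linarith

theorem goldenIntegers_golden_zpow (n : ℤ) :
    (goldenRatio ^ n, goldenConj ^ n) ∈ goldenIntegers := by
  obtain ⟨m, rfl | rfl⟩ := n.eq_nat_or_neg
  · have := Subring.pow_mem _ goldenIntegers_golden m
    simpa using this
  · have := Subring.pow_mem _ goldenIntegers_golden_inv m
    rw [zpow_neg, zpow_neg, zpow_natCast, zpow_natCast, ← inv_pow, ← inv_pow]
    exact this

theorem goldenIntegers_sqrt5 : (√5, -√5) ∈ goldenIntegers := by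
  refine ⟨-1, 2, ?_⟩
  rw [goldenRatio, goldenConj]
  refine Prod.ext ?_ ?_
  · simp only; push_cast; ring
  · simp only; push_cast; ring

theorem goldenIntegers_det {N : Type*} [Fintype N] [DecidableEq N] (A1 A2 : Matrix N N ℝ)
    (h : ∀ i j, (A1 i j, A2 i j) ∈ goldenIntegers) : (A1.det, A2.det) ∈ goldenIntegers := by
  let A : Matrix N N goldenIntegers := Matrix.of fun i j => ⟨_, h i j⟩
  have h1 : ((RingHom.fst ℝ ℝ).comp goldenIntegers.subtype) A.det = A1.det := by
    rw [RingHom.map_det]; rfl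
  have h2 : ((RingHom.snd ℝ ℝ).comp goldenIntegers.subtype) A.det = A2.det := by
    rw [RingHom.map_det]; rfl
  have h3 : (A1.det, A2.det) = (A.det : ℝ × ℝ) := by
    rw [← h1, ← h2]; rfl
  rw [h3]
  exact A.det.2

/-- A Liouville-type inequality. Rewrite the determinant in the Feldman basis and clear
denominators with the powers `d ^ t` and the factor `c`. The row of index `k` is then divisible by
`h! ^ (k / h)`, and the quotient determinant is a non-zero element of `ℤ[α]`, so its norm is at
least one in absolute value. -/
theorem det_lower {P : Type*} [Fintype P] [DecidableEq P] (n0 h d : ℕ)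
    (hd : ∀ a, 1 ≤ a → a ≤ h → a ∣ d) (t : Fin n0 × P → ℕ) (l : Fin n0 × P → ℤ)
    (B : P → Fin n0 × P → ℤ) (Θ1 Θ2 : P → Fin n0 × P → ℝ) (c1 c2 : P → ℝ)
    (hO : ∀ e s, (c1 e * Θ1 e s, c2 e * Θ2 e s) ∈ goldenIntegers)
    (hc1 : ∀ e, c1 e ≠ 0) (hd0 : d ≠ 0)
    (hne : (Matrix.of fun a s : Fin n0 × P => ((a.1 : ℕ).choose (t s) : ℝ) *
      (l s : ℝ) ^ ((a.1 : ℕ) - t s) * (B a.2 s * Θ1 a.2 s)).det ≠ 0) :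
    (∏ a : Fin n0 × P, ((h.factorial : ℝ) ^ ((a.1 : ℕ) / h)) ^ 2) ≤
    |(Matrix.of fun a s : Fin n0 × P => ((a.1 : ℕ).choose (t s) : ℝ) *
      (l s : ℝ) ^ ((a.1 : ℕ) - t s) * (B a.2 s * Θ1 a.2 s)).det| *
    |(Matrix.of fun a s : Fin n0 × P => ((a.1 : ℕ).choose (t s) : ℝ) *
      (l s : ℝ) ^ ((a.1 : ℕ) - t s) * (B a.2 s * Θ2 a.2 s)).det| *
    (∏ s, ((d : ℝ) ^ t s) ^ 2) * ∏ a : Fin n0 × P, |c1 a.2 * c2 a.2| := by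
  choose z hz using fun (a : Fin n0 × P) s => feldman_dvd d h hd (l s) a.1 (t s)
  let F : Fin n0 × P → ℝ := fun a => ((h.factorial : ℝ) ^ ((a.1 : ℕ) / h))
  have hF : ∀ a, 0 < F a := fun a => by positivity
  have hzR : ∀ a s, (d : ℝ) ^ t s * (((hasseDeriv (t s) (feldman h (a : Fin n0 × P).1)).eval (l s) : ℤ) : ℝ)
      = F a * z a s := by
    intro a s
    have := hz a s
    simp only [F]
    exact_mod_cast this
  have key : ∀ (Θ : P → Fin n0 × P → ℝ) (c : P → ℝ),
      (∏ a, F a) * (Matrix.of fun a s : Fin n0 × P => (z a s : ℝ) * B a.2 s * (c a.2 * Θ a.2 s)).det =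
      (∏ s, (d : ℝ) ^ t s) * ((∏ a : Fin n0 × P, c a.2) * (Matrix.of fun a s : Fin n0 × P =>
        ((a.1 : ℕ).choose (t s) : ℝ) * (l s : ℝ) ^ ((a.1 : ℕ) - t s) * (B a.2 s * Θ a.2 s)).det) := by
    intro Θ c
    rw [← feldman_det n0 h t l (fun e s => B e s * Θ e s), ← Matrix.det_mul_column,
      ← Matrix.det_mul_column, ← Matrix.det_mul_row]
    congr 1
    ext a s
    simp only [Matrix.of_apply]
    linear_combination (-(c a.2 * (B a.2 s * Θ a.2 s))) * hzR a s
  have k1 := key Θ1 c1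
  have k2 := key Θ2 c2
  set X1 := (Matrix.of fun a s : Fin n0 × P =>
        ((a.1 : ℕ).choose (t s) : ℝ) * (l s : ℝ) ^ ((a.1 : ℕ) - t s) * (B a.2 s * Θ1 a.2 s)).det
  set X2 := (Matrix.of fun a s : Fin n0 × P =>
        ((a.1 : ℕ).choose (t s) : ℝ) * (l s : ℝ) ^ ((a.1 : ℕ) - t s) * (B a.2 s * Θ2 a.2 s)).det
  have hmem := goldenIntegers_det
    (Matrix.of fun a s : Fin n0 × P => (z a s : ℝ) * B a.2 s * (c1 a.2 * Θ1 a.2 s))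
    (Matrix.of fun a s : Fin n0 × P => (z a s : ℝ) * B a.2 s * (c2 a.2 * Θ2 a.2 s)) (fun a s => by
      have := goldenIntegers.mul_mem (goldenIntegers_int (z a s * B a.2 s)) (hO a.2 s)
      simpa using this)
  set Z1 := (Matrix.of fun a s : Fin n0 × P => (z a s : ℝ) * B a.2 s * (c1 a.2 * Θ1 a.2 s)).det
  set Z2 := (Matrix.of fun a s : Fin n0 × P => (z a s : ℝ) * B a.2 s * (c2 a.2 * Θ2 a.2 s)).det
  have hPF : 0 < ∏ a, F a := Finset.prod_pos fun a _ => hF a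
  have hPd : 0 < ∏ s, (d : ℝ) ^ t s := Finset.prod_pos fun s _ => by positivity
  have hZ1 : Z1 ≠ 0 := by
    intro h0
    rw [h0, mul_zero] at k1
    have : (∏ a : Fin n0 × P, c1 a.2) ≠ 0 := Finset.prod_ne_zero_iff.mpr fun a _ => hc1 a.2
    have := mul_ne_zero hPd.ne' (mul_ne_zero this hne)
    exact this k1.symm
  have hnorm := goldenIntegers_norm _ hmem hZ1
  simp only at hnorm
  have a1 := congrArg abs k1
  have a2 := congrArg abs k2
  rw [abs_mul, abs_mul, abs_mul, abs_of_pos hPF, abs_of_pos hPd] at a1 a2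
  calc (∏ a : Fin n0 × P, F a ^ 2) = (∏ a, F a) * (∏ a, F a) * 1 := by
        rw [Finset.prod_pow]; ring
    _ ≤ (∏ a, F a) * (∏ a, F a) * (|Z1| * |Z2|) := by gcongr
    _ = ((∏ a, F a) * |Z1|) * ((∏ a, F a) * |Z2|) := by ring
    _ = _ := by
        rw [a1, a2, Finset.prod_pow]
        have : ∏ a : Fin n0 × P, |c1 a.2 * c2 a.2| =
            |∏ a : Fin n0 × P, c1 a.2| * |∏ a : Fin n0 × P, c2 a.2| := by
          rw [← abs_mul, ← Finset.prod_mul_distrib, Finset.abs_prod]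
        rw [this]; ring

end

/-! ### A Bézout bound in the plane -/

section

open MvPolynomial

/-- The pairs `(i, j)` with `i + j < n`: exponents of the monomials of degree `< n` in two
variables. -/
def triangle (n : ℕ) : Finset (Σ _ : ℕ, ℕ) := (Finset.range n).sigma fun i => Finset.range (n - i)

theorem mem_triangle (n : ℕ) (x : Σ _ : ℕ, ℕ) : x ∈ triangle n ↔ x.1 + x.2 < n := by
  rw [triangle, Finset.mem_sigma, Finset.mem_range, Finset.mem_range]; omega

theorem card_triangle (n : ℕ) : 2 * (triangle n).card = n * (n + 1) := by
  rw [triangle, Finset.card_sigma]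
  simp only [Finset.card_range]
  induction n with
  | zero => simp
  | succ n ih =>
    rw [Finset.sum_range_succ']
    simp only [Nat.add_sub_add_right]
    rw [mul_add, ih]; ring_nf; omega

theorem finrank_restrictTotalDegree (n : ℕ) :
    2 * Module.finrank ℝ (restrictTotalDegree (Fin 2) ℝ n) = (n + 1) * (n + 2) := by
  have h1 := Module.finrank_eq_nat_card_basis (basisRestrictSupport ℝ
    { m : Fin 2 →₀ ℕ | (m.sum fun _ e => e) ≤ n })
  change Module.finrank ℝ (restrictTotalDegree (Fin 2) ℝ n) = _ at h1
  rw [h1, ← card_triangle (n + 1)]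
  congr 1
  let e : ↑{ m : Fin 2 →₀ ℕ | (m.sum fun _ e => e) ≤ n } ≃ ↥(triangle (n + 1)) :=
    { toFun := fun m => ⟨⟨m.1 0, m.1 1⟩, by
        have := m.2
        rw [Set.mem_ofPred_eq, Finsupp.sum_fintype _ _ (fun _ => rfl), Fin.sum_univ_two] at this
        rw [mem_triangle]; simp only; omega⟩
      invFun := fun x => ⟨Finsupp.equivFunOnFinite.symm ![x.1.1, x.1.2], by
        have := (mem_triangle _ _).mp x.2
        rw [Set.mem_ofPred_eq, Finsupp.sum_fintype _ _ (fun _ => rfl), Fin.sum_univ_two]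
        simp; omega⟩
      left_inv := fun m => by
        ext i; fin_cases i <;> simp
      right_inv := fun x => by
        simp }
  rw [Nat.card_congr e, Nat.card_eq_fintype_card, Fintype.card_coe]

instance restrictTotalDegree_finite (n : ℕ) :
    FiniteDimensional ℝ (restrictTotalDegree (Fin 2) ℝ n) := by
  apply FiniteDimensional.of_finrank_pos
  have := finrank_restrictTotalDegree n
  by_contra h
  have h2 : Module.finrank ℝ (restrictTotalDegree (Fin 2) ℝ n) = 0 := by omega
  rw [h2] at this
  simp at this

/-- Take a product of linear forms, one for each point of `S`. -/
theorem exists_separating (S : Finset (Fin 2 → ℝ)) (x : Fin 2 → ℝ) :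
    ∃ p : MvPolynomial (Fin 2) ℝ, p.totalDegree ≤ S.card ∧ eval x p ≠ 0 ∧
      ∀ y ∈ S, y ≠ x → eval y p = 0 := by
  classical
  have h1 : ∀ y : Fin 2 → ℝ, ∃ i, y ≠ x → y i ≠ x i := by
    intro y
    by_cases h : y = x
    · exact ⟨0, fun h' => absurd h h'⟩
    · obtain ⟨i, hi⟩ := Function.ne_iff.mp h
      exact ⟨i, fun _ => hi⟩
  choose i hi using h1
  refine ⟨∏ y ∈ S.erase x, (X (i y) - C (y (i y))), ?_, ?_, ?_⟩
  · refine (totalDegree_finsetProd _ _).trans ?_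
    calc _ ≤ ∑ y ∈ S.erase x, 1 := Finset.sum_le_sum fun y _ => by
            refine (totalDegree_sub_C_le _ _).trans ?_
            rw [totalDegree_X]
      _ ≤ _ := by simpa using Finset.card_le_card (Finset.erase_subset x S)
  · rw [map_prod, Finset.prod_ne_zero_iff]
    intro y hy
    simp only [map_sub, eval_X, eval_C]
    exact sub_ne_zero.mpr (Ne.symm (hi y (Finset.ne_of_mem_erase hy)))
  · intro y hy hyx
    rw [map_prod]
    refine Finset.prod_eq_zero (Finset.mem_erase.mpr ⟨hyx, hy⟩) ?_
    simp

/-- A weak form of Bézout, by counting dimensions: in large degree `n` the multiples of `F` and of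
`G` lie in the kernel of the surjective evaluation at `S`, and their intersection consists of
multiples of `F G`. -/
theorem bezout (F G : MvPolynomial (Fin 2) ℝ) (hF : Irreducible F) (hFG : ¬ F ∣ G)
    (S : Finset (Fin 2 → ℝ)) (hS : ∀ x ∈ S, eval x F = 0 ∧ eval x G = 0) :
    S.card ≤ F.totalDegree * G.totalDegree := by
  classical
  set c := F.totalDegree
  set q := G.totalDegree
  have hF0 : F ≠ 0 := hF.ne_zero
  have hG0 : G ≠ 0 := fun h => hFG (h ▸ dvd_zero F)
  let n := S.card + c + q
  let W := fun m => restrictTotalDegree (Fin 2) ℝ m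
  -- evaluation at `S` is surjective on degree at most `n` because `n ≥ |S|`
  let ev : W n →ₗ[ℝ] (S → ℝ) :=
    { toFun := fun p x => eval x.1 p.1
      map_add' := fun p p' => by funext x; simp
      map_smul' := fun a p => by funext x; simp }
  have hsurj : Function.Surjective ev := by
    rw [← LinearMap.range_eq_top, eq_top_iff, ← (Pi.basisFun ℝ S).span_eq, Submodule.span_le]
    rintro _ ⟨x, rfl⟩
    obtain ⟨p, hp1, hp2, hp3⟩ := exists_separating S x.1
    refine ⟨(eval x.1 p)⁻¹ • ⟨p, (mem_restrictTotalDegree _ _ _).mpr (by omega)⟩, ?_⟩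
    funext y
    rw [map_smul, Pi.smul_apply, Pi.basisFun_apply]
    change (eval x.1 p)⁻¹ • eval y.1 p = _
    by_cases hyx : y = x
    · subst hyx; simp [hp2]
    · rw [hp3 y.1 y.2 (fun h => hyx (Subtype.ext h))]
      simp [hyx]
  have hker := LinearMap.finrank_range_add_finrank_ker ev
  rw [LinearMap.range_eq_top.mpr hsurj, finrank_top, Module.finrank_pi, Fintype.card_coe] at hker
  let mulF := LinearMap.mulLeft ℝ F
  let mulG := LinearMap.mulLeft ℝ G
  have hinjF : Function.Injective mulF := fun a b h => mul_left_cancel₀ hF0 h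
  have hinjG : Function.Injective mulG := fun a b h => mul_left_cancel₀ hG0 h
  let VF := (W (n - c)).map mulF
  let VG := (W (n - q)).map mulG
  have hdF : Module.finrank ℝ VF = Module.finrank ℝ (W (n - c)) :=
    (Submodule.equivMapOfInjective mulF hinjF (W (n - c))).finrank_eq.symm
  have hdG : Module.finrank ℝ VG = Module.finrank ℝ (W (n - q)) :=
    (Submodule.equivMapOfInjective mulG hinjG (W (n - q))).finrank_eq.symm
  have hinf : Module.finrank ℝ ↥(VF ⊓ VG) ≤ Module.finrank ℝ (W (n - c - q)) := by
    have hle : VF ⊓ VG ≤ (W (n - c - q)).map (mulG.comp mulF) := by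
      rintro _ ⟨⟨a, ha, rfl⟩, ⟨b, hb, hab⟩⟩
      have hab' : G * b = F * a := hab
      have h1 : F ∣ G * b := ⟨a, hab'⟩
      have h2 : F ∣ b := (hF.prime.dvd_or_dvd h1).resolve_left hFG
      obtain ⟨b', rfl⟩ := h2
      refine ⟨b', ?_, hab⟩
      by_cases hb' : b' = 0
      · rw [hb']; exact Submodule.zero_mem _
      have h3 : (F * b').totalDegree ≤ n - q := (mem_restrictTotalDegree _ _ _).mp hb
      rw [totalDegree_mul_of_isDomain hF0 hb'] at h3
      exact (mem_restrictTotalDegree _ _ _).mpr (by omega)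
    exact (Submodule.finrank_mono hle).trans (Submodule.finrank_map_le _ _)
  have hsup : Module.finrank ℝ ↥(VF ⊔ VG) ≤ Module.finrank ℝ (LinearMap.ker ev) := by
    have hle : VF ⊔ VG ≤ (LinearMap.ker ev).map (W n).subtype := by
      refine sup_le ?_ ?_
      · rintro _ ⟨a, ha, rfl⟩
        have h1 : a.totalDegree ≤ n - c := (mem_restrictTotalDegree _ _ _).mp ha
        have h2 : (F * a).totalDegree ≤ n := (totalDegree_mul F a).trans (by omega)
        refine ⟨⟨F * a, (mem_restrictTotalDegree _ _ _).mpr h2⟩, ?_, rfl⟩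
        rw [SetLike.mem_coe, LinearMap.mem_ker]
        funext x
        change eval x.1 (F * a) = 0
        rw [map_mul, (hS x.1 x.2).1, zero_mul]
      · rintro _ ⟨a, ha, rfl⟩
        have h1 : a.totalDegree ≤ n - q := (mem_restrictTotalDegree _ _ _).mp ha
        have h2 : (G * a).totalDegree ≤ n := (totalDegree_mul G a).trans (by omega)
        refine ⟨⟨G * a, (mem_restrictTotalDegree _ _ _).mpr h2⟩, ?_, rfl⟩
        rw [SetLike.mem_coe, LinearMap.mem_ker]
        funext x
        change eval x.1 (G * a) = 0
        rw [map_mul, (hS x.1 x.2).2, zero_mul]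
    exact (Submodule.finrank_mono hle).trans (Submodule.finrank_map_le _ _)
  have hsi := Submodule.finrank_sup_add_finrank_inf_eq VF VG
  have d1 := finrank_restrictTotalDegree n
  have d2 := finrank_restrictTotalDegree (n - c)
  have d3 := finrank_restrictTotalDegree (n - q)
  have d4 := finrank_restrictTotalDegree (n - c - q)
  simp only [W] at hker hdF hdG hinf
  have e1 : n - c = S.card + q := by omega
  have e2 : n - q = S.card + c := by omega
  have e3 : n - c - q = S.card := by omega
  rw [e1] at d2; rw [e2] at d3; rw [e3] at d4
  rw [hdF, hdG, e1, e2] at hsi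
  rw [e3] at hinf
  rw [← hker] at d1
  have d1' : 2 * (S.card + Module.finrank ℝ (LinearMap.ker ev)) =
    (S.card + c + q + 1) * (S.card + c + q + 2) := d1
  clear d1
  nlinarith

end

/-! ### Translates of plane curves -/

section

open MvPolynomial

/-- The translation `p(x) ↦ p(x + τ)`. -/
noncomputable def shift (τ : Fin 2 → ℝ) : MvPolynomial (Fin 2) ℝ →ₐ[ℝ] MvPolynomial (Fin 2) ℝ :=
  aeval fun i => X i + C (τ i)

theorem eval_shift (τ x : Fin 2 → ℝ) (p : MvPolynomial (Fin 2) ℝ) :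
    eval x (shift τ p) = eval (x + τ) p := by
  induction p using MvPolynomial.induction_on with
  | C a => simp [shift]
  | add p q hp hq => rw [map_add, map_add, map_add, hp, hq]
  | mul_X p i hp => rw [map_mul, map_mul, map_mul, hp]; simp [shift]

theorem shift_shift (σ τ : Fin 2 → ℝ) (p : MvPolynomial (Fin 2) ℝ) :
    shift σ (shift τ p) = shift (σ + τ) p := by
  apply MvPolynomial.funext
  intro x
  rw [eval_shift, eval_shift, eval_shift, add_assoc]

theorem shift_zero (p : MvPolynomial (Fin 2) ℝ) : shift 0 p = p := by
  apply MvPolynomial.funext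
  intro x
  rw [eval_shift, add_zero]

theorem totalDegree_shift_le (τ : Fin 2 → ℝ) (p : MvPolynomial (Fin 2) ℝ) :
    (shift τ p).totalDegree ≤ p.totalDegree := by
  rw [shift, aeval_def, eval₂_eq]
  refine totalDegree_finsetSum_le ?_
  intro d hd
  refine (totalDegree_mul _ _).trans ?_
  have h1 : (algebraMap ℝ (MvPolynomial (Fin 2) ℝ) (coeff d p)).totalDegree = 0 := totalDegree_C _
  rw [h1, zero_add]
  refine (totalDegree_finsetProd _ _).trans ?_
  refine le_trans ?_ (le_totalDegree hd)
  rw [Finsupp.sum]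
  refine Finset.sum_le_sum fun i _ => (totalDegree_pow _ _).trans ?_
  have : (X i + C (τ i) : MvPolynomial (Fin 2) ℝ).totalDegree ≤ 1 := by
    refine (totalDegree_add _ _).trans ?_
    simp
  calc _ ≤ d i * 1 := Nat.mul_le_mul_left _ this
    _ = d i := mul_one _

theorem irreducible_shift (τ : Fin 2 → ℝ) {p : MvPolynomial (Fin 2) ℝ} (hp : Irreducible p) :
    Irreducible (shift τ p) := by
  let e : MvPolynomial (Fin 2) ℝ ≃ₐ[ℝ] MvPolynomial (Fin 2) ℝ :=
    AlgEquiv.ofAlgHom (shift τ) (shift (-τ))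
      (by ext i : 1; simp only [AlgHom.comp_apply, shift_shift]; simp [shift_zero])
      (by ext i : 1; simp only [AlgHom.comp_apply, shift_shift]; simp [shift_zero])
  exact (MulEquiv.irreducible_iff e).mpr hp

/-- Points common to `p` and to all the `G τ`, when no irreducible factor of `p` divides all the `G
τ`: apply `bezout` to each factor and one `G τ` that it does not divide. -/
theorem card_le_of_no_common {T : Type*} (G : T → MvPolynomial (Fin 2) ℝ) (D : ℕ)
    (hG : ∀ τ, (G τ).totalDegree ≤ D) (p : MvPolynomial (Fin 2) ℝ) (hp : p ≠ 0)
    (hF : ∀ F, Irreducible F → F ∣ p → ∃ τ, ¬ F ∣ G τ) (S : Finset (Fin 2 → ℝ))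
    (hS : ∀ x ∈ S, eval x p = 0) (hSG : ∀ x ∈ S, ∀ τ, eval x (G τ) = 0) :
    S.card ≤ p.totalDegree * D := by
  classical
  induction p using WfDvdMonoid.induction_on_irreducible generalizing S with
  | zero => exact absurd rfl hp
  | unit u hu =>
    have : S = ∅ := by
      rw [Finset.eq_empty_iff_forall_notMem]
      intro x hx
      have h1 := hu.map (eval x)
      rw [hS x hx] at h1
      exact not_isUnit_zero h1
    simp [this]
  | mul a i ha hi ih =>
    have h1 : S.card = (S.filter fun x => eval x i = 0).card
        + (S.filter fun x => ¬ eval x i = 0).card := (Finset.card_filter_add_card_filter_not _).symm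
    obtain ⟨τ, hτ⟩ := hF i hi (dvd_mul_right _ _)
    have h2 := bezout i (G τ) hi hτ (S.filter fun x => eval x i = 0) (fun x hx => by
      rw [Finset.mem_filter] at hx
      exact ⟨hx.2, hSG x hx.1 τ⟩)
    have h3 := ih ha (fun F hF1 hF2 => hF F hF1 (hF2.mul_left _))
      (S.filter fun x => ¬ eval x i = 0) (fun x hx => by
        rw [Finset.mem_filter] at hx
        have := hS x hx.1
        rw [map_mul] at this
        exact (mul_eq_zero.mp this).resolve_left hx.2)
      (fun x hx => hSG x (Finset.mem_of_mem_filter x hx))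
    rw [totalDegree_mul_of_isDomain hi.ne_zero ha, h1, add_mul]
    exact add_le_add (h2.trans (Nat.mul_le_mul_left _ (hG τ))) h3

/-- A polynomial multiplied by a constant under the unit translation is constant. -/
theorem poly_const_of_semiperiodic (q : Polynomial ℝ) (k : ℝ)
    (h : ∀ s, q.eval (s + 1) = k * q.eval s) (s : ℝ) : q.eval s = q.eval 0 := by
  have h1 : q.comp (Polynomial.X + Polynomial.C 1) = Polynomial.C k * q := by
    apply Polynomial.funext
    intro s
    simp [h]
  by_cases hq : q = 0
  · simp [hq]
  have h2 := congrArg Polynomial.leadingCoeff h1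
  rw [Polynomial.leadingCoeff_comp (by rw [Polynomial.natDegree_X_add_C]; exact one_ne_zero),
    Polynomial.leadingCoeff_mul, Polynomial.leadingCoeff_X_add_C, one_pow, mul_one,
    Polynomial.leadingCoeff_C] at h2
  have hk : k = 1 := by
    have h0 : q.leadingCoeff ≠ 0 := Polynomial.leadingCoeff_ne_zero.mpr hq
    exact mul_right_cancel₀ h0 (by rw [one_mul]; exact h2.symm)
  have h3 : ∀ n : ℕ, q.eval (n : ℝ) = q.eval 0 := by
    intro n
    induction n with
    | zero => simp
    | succ n ih => rw [Nat.cast_succ, h, hk, one_mul, ih]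
  have h4 : q - Polynomial.C (q.eval 0) = 0 := by
    apply Polynomial.eq_zero_of_infinite_isRoot
    refine Set.infinite_of_injective_forall_mem (f := fun n : ℕ => (n : ℝ)) Nat.cast_injective ?_
    intro n
    simp [h3 n]
  rw [sub_eq_zero.mp h4]; simp

/-- A polynomial multiplied by a constant under translation by `w` is constant along `w`. -/
theorem eval_line_const (F : MvPolynomial (Fin 2) ℝ) (w : Fin 2 → ℝ) (k : ℝ)
    (h : ∀ x, eval (x + w) F = k * eval x F) (x : Fin 2 → ℝ) (s : ℝ) :
    eval (x + s • w) F = eval x F := by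
  let q : Polynomial ℝ := aeval (fun i => Polynomial.C (x i) + Polynomial.X * Polynomial.C (w i)) F
  have hq : ∀ s, q.eval s = eval (x + s • w) F := by
    intro s
    have : (Polynomial.evalRingHom s) q = eval (x + s • w) F := by
      simp only [q]
      rw [map_aeval, coe_eval₂Hom, eval₂_eq_eval_map]
      have h1 : (Polynomial.evalRingHom s).comp (algebraMap ℝ (Polynomial ℝ)) = RingHom.id ℝ := by
        ext a; simp
      rw [h1, MvPolynomial.map_id]
      congr 2
      funext i
      simp
      ring
    exact this
  have := poly_const_of_semiperiodic q k (fun s => by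
    rw [hq, hq, ← h]; congr 2; rw [add_smul, one_smul, add_assoc]) s
  rw [hq, hq] at this
  simpa using this

/-- An irreducible polynomial cannot be quasi-periodic in two independent directions, since it
would then be constant. -/
theorem no_two_periods (F : MvPolynomial (Fin 2) ℝ) (hF : Irreducible F) (w w' : Fin 2 → ℝ)
    (k k' : ℝ) (h : ∀ x, eval (x + w) F = k * eval x F)
    (h' : ∀ x, eval (x + w') F = k' * eval x F) : w 0 * w' 1 - w 1 * w' 0 = 0 := by
  by_contra hd
  have hc : F = C (eval 0 F) := by
    apply MvPolynomial.funext
    intro x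
    rw [eval_C]
    have hd' : w 0 * w' 1 - w 1 * w' 0 ≠ 0 := hd
    let a := (x 0 * w' 1 - x 1 * w' 0) / (w 0 * w' 1 - w 1 * w' 0)
    let b := (w 0 * x 1 - w 1 * x 0) / (w 0 * w' 1 - w 1 * w' 0)
    have hx : x = 0 + a • w + b • w' := by
      funext i
      fin_cases i
      · simp only [a, b, Pi.add_apply, Pi.smul_apply, smul_eq_mul, Fin.zero_eta, zero_add]
        rw [div_mul_eq_mul_div, div_mul_eq_mul_div, ← add_div, eq_div_iff hd']
        ring
      · simp only [a, b, Pi.add_apply, Pi.smul_apply, smul_eq_mul, Fin.mk_one, zero_add]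
        rw [div_mul_eq_mul_div, div_mul_eq_mul_div, ← add_div, eq_div_iff hd']
        ring
    rw [hx, eval_line_const F w' k' h', eval_line_const F w k h]
  have h0 : eval 0 F ≠ 0 := fun h => hF.ne_zero (by rw [hc, h, C_0])
  apply hF.not_isUnit
  rw [hc]
  exact (isUnit_iff_ne_zero.mpr h0).map C

/-- If a plane curve `Δ = 0` of degree `D` contains `S1 + S2` with both sets large, then `S1`
contains many collinear points. All translates `Δ(x + τ)`, `τ ∈ S1`, vanish on `S2`, which has more
than `D ^ 2` points, so they share an irreducible factor `F`. The translates `F(x - τ)` are then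
among the at most `D` irreducible factors of `Δ`, so `K` of them are associated to each other. The
differences of the corresponding `τ` are quasi-periods of `F`, hence parallel. -/
theorem exists_collinear (Δ : MvPolynomial (Fin 2) ℝ) (hΔ : Δ ≠ 0) (D K : ℕ)
    (hD : Δ.totalDegree ≤ D) (S1 S2 : Finset (Fin 2 → ℝ)) (h0 : (0 : Fin 2 → ℝ) ∈ S1)
    (hv : ∀ τ ∈ S1, ∀ x ∈ S2, eval (x + τ) Δ = 0) (hS2 : D * D < S2.card)
    (hS1 : D * K ≤ S1.card) :
    ∃ Z ⊆ S1, K ≤ Z.card ∧ ∀ z1 ∈ Z, ∀ z2 ∈ Z, ∀ z3 ∈ Z,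
      (z2 0 - z1 0) * (z3 1 - z1 1) - (z2 1 - z1 1) * (z3 0 - z1 0) = 0 := by
  classical
  obtain ⟨F, hF, hFd⟩ : ∃ F, Irreducible F ∧ ∀ τ ∈ S1, F ∣ shift τ Δ := by
    by_contra hcon
    push Not at hcon
    have := card_le_of_no_common (fun τ : S1 => shift τ.1 Δ) D
      (fun τ => (totalDegree_shift_le _ _).trans hD) Δ hΔ (fun F hF _ => by
        obtain ⟨τ, h1, h2⟩ := hcon F hF
        exact ⟨⟨τ, h1⟩, h2⟩) S2 (fun x hx => by simpa using hv 0 h0 x hx)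
      (fun x hx τ => by rw [eval_shift]; exact hv τ.1 τ.2 x hx)
    have := Nat.mul_le_mul_right D hD
    omega
  -- translating back, each `F (x - τ)` is one of the at most `D` irreducible factors of `Δ`
  have hdvd : ∀ τ : Fin 2 → ℝ, τ ∈ S1 → shift (-τ) F ∣ Δ := by
    intro τ hτ
    have := map_dvd (shift (-τ)) (hFd τ hτ)
    rwa [shift_shift, neg_add_cancel, shift_zero] at this
  have hex : ∀ τ : Fin 2 → ℝ, ∃ f, τ ∈ S1 →
      f ∈ UniqueFactorizationMonoid.factors Δ ∧ Associated (shift (-τ) F) f := by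
    intro τ
    by_cases hτ : τ ∈ S1
    · obtain ⟨f, hf1, hf2⟩ := UniqueFactorizationMonoid.exists_mem_factors_of_dvd hΔ
        (irreducible_shift _ hF) (hdvd τ hτ)
      exact ⟨f, fun _ => ⟨hf1, hf2⟩⟩
    · exact ⟨0, fun h => absurd h hτ⟩
  choose fac hfac using hex
  have hcard : (UniqueFactorizationMonoid.factors Δ).toFinset.card ≤ D := by
    refine (Multiset.toFinset_card_le _).trans ?_
    have hprod := UniqueFactorizationMonoid.factors_prod hΔ
    have h1 : (UniqueFactorizationMonoid.factors Δ).prod.totalDegree ≤ Δ.totalDegree :=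
      totalDegree_le_of_dvd_of_isDomain hprod.dvd hΔ
    have h2 : ∀ s : Multiset (MvPolynomial (Fin 2) ℝ), (∀ f ∈ s, Irreducible f) →
        s.card ≤ s.prod.totalDegree := by
      intro s
      induction s using Multiset.induction_on with
      | empty => simp
      | cons a s ih =>
        intro hs
        have ha : Irreducible a := hs a (Multiset.mem_cons_self _ _)
        have hs' : ∀ f ∈ s, Irreducible f := fun f hf => hs f (Multiset.mem_cons_of_mem hf)
        have hp : s.prod ≠ 0 := Multiset.prod_ne_zero fun h => (hs' 0 h).ne_zero rfl
        rw [Multiset.card_cons, Multiset.prod_cons, totalDegree_mul_of_isDomain ha.ne_zero hp]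
        have h3 : a.totalDegree ≠ 0 := by
          intro h
          rw [totalDegree_eq_zero_iff_eq_C] at h
          apply ha.not_isUnit
          rw [h]
          refine (isUnit_iff_ne_zero.mpr ?_).map C
          intro h4; apply ha.ne_zero; rw [h, h4, C_0]
        have := ih hs'
        omega
    have h3 := h2 (UniqueFactorizationMonoid.factors Δ) (fun f hf => UniqueFactorizationMonoid.irreducible_of_factor f hf)
    omega
  obtain ⟨y, _, hy⟩ := Finset.exists_le_card_fiber_of_mul_le_card_of_maps_to
    (s := S1) (t := (UniqueFactorizationMonoid.factors Δ).toFinset) (f := fac) (n := K)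
    (fun τ hτ => Multiset.mem_toFinset.mpr (hfac τ hτ).1)
    ⟨fac 0, Multiset.mem_toFinset.mpr (hfac 0 h0).1⟩
    ((Nat.mul_le_mul_right K hcard).trans hS1)
  refine ⟨S1.filter fun x => fac x = y, Finset.filter_subset _ _, hy, ?_⟩
  have hper : ∀ z ∈ S1.filter (fun x => fac x = y), ∀ z' ∈ S1.filter (fun x => fac x = y),
      ∃ k, ∀ x, eval (x + (z' - z)) F = k * eval x F := by
    intro z hz z' hz'
    rw [Finset.mem_filter] at hz hz'
    have h1 : Associated (shift (-z') F) (shift (-z) F) :=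
      (hfac z' hz'.1).2.trans (by rw [hz'.2, ← hz.2]; exact (hfac z hz.1).2.symm)
    obtain ⟨u, hu⟩ := h1
    obtain ⟨k, _, hk⟩ := (MvPolynomial.isUnit_iff_eq_C_of_isReduced).mp u.isUnit
    refine ⟨k, fun x => ?_⟩
    have h2 := congrArg (eval (x + z')) hu
    rw [map_mul, eval_shift, eval_shift, hk, eval_C] at h2
    rw [mul_comm, ← add_sub_assoc, sub_eq_add_neg, ← h2]
    congr 3
    abel
  intro z1 h1 z2 h2 z3 h3
  obtain ⟨k, hk⟩ := hper z1 h1 z2 h2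
  obtain ⟨k', hk'⟩ := hper z1 h1 z3 h3
  exact no_two_periods F hF _ _ k k' hk hk'

end

/-! ### Elimination -/

/-- A generalised Vandermonde matrix, with the powers restricted to `T`, has full rank. -/
theorem exists_vandermonde_minor {M : ℕ} (v : Fin M → ℝ) (hv : Function.Injective v)
    (T : Finset (Fin M)) :
    ∃ σ : T → Fin M, (Matrix.of fun i j : T => v (σ i) ^ (j.1 : ℕ)).det ≠ 0 := by
  classical
  have h := exists_minor (Matrix.of fun (i : Fin M) (j : T) => v i ^ (j.1 : ℕ)) (by
    intro x hx
    have h1 : (Matrix.vandermonde v).mulVec (fun τ => if h : τ ∈ T then x ⟨τ, h⟩ else 0) = 0 := by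
      rw [← hx]
      funext i
      simp only [Matrix.mulVec, dotProduct, Matrix.of_apply, Matrix.vandermonde_apply]
      rw [← Finset.sum_subset (Finset.subset_univ T) (fun τ _ hτ => by simp [hτ]),
        ← Finset.sum_coe_sort T]
      refine Finset.sum_congr rfl fun τ _ => ?_
      simp
    have h2 := Matrix.eq_zero_of_mulVec_eq_zero (Matrix.det_vandermonde_ne_zero_iff.mpr hv) h1
    funext τ
    have := congrFun h2 τ.1
    simpa using this)
  obtain ⟨σ, hσ⟩ := h
  exact ⟨σ, hσ⟩

theorem finSuccEquiv_shift (a : ℝ) (p : MvPolynomial (Fin 2) ℝ) :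
    MvPolynomial.finSuccEquiv ℝ 1 (shift ![a, 0] p) =
      (MvPolynomial.finSuccEquiv ℝ 1 p).comp
        (Polynomial.X + Polynomial.C (MvPolynomial.C a)) := by
  induction p using MvPolynomial.induction_on with
  | C c => simp [shift, MvPolynomial.algebraMap_eq, MvPolynomial.finSuccEquiv_apply]
  | add p q hp hq => rw [map_add, map_add, map_add, hp, hq, Polynomial.add_comp]
  | mul_X p i hp =>
    suffices h : MvPolynomial.finSuccEquiv ℝ 1 (shift ![a, 0] (MvPolynomial.X i)) =
        (MvPolynomial.finSuccEquiv ℝ 1 (MvPolynomial.X i)).comp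
          (Polynomial.X + Polynomial.C (MvPolynomial.C a)) by
      rw [map_mul, map_mul, map_mul, hp, Polynomial.mul_comp, h]
    have hC : MvPolynomial.finSuccEquiv ℝ 1 (MvPolynomial.C a) =
        Polynomial.C (MvPolynomial.C a) := by simp [MvPolynomial.finSuccEquiv_apply]
    refine Fin.cases ?_ (fun j => ?_) i
    · rw [shift, MvPolynomial.aeval_X, map_add, MvPolynomial.finSuccEquiv_X_zero,
        Polynomial.X_comp, Matrix.cons_val_zero, hC]
    · rw [shift, MvPolynomial.aeval_X, map_add, MvPolynomial.finSuccEquiv_X_succ,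
        Polynomial.C_comp, Matrix.cons_val_succ]
      have : ((![0] : Fin 1 → ℝ) j) = 0 := by rw [Subsingleton.elim j 0]; rfl
      rw [this, map_zero, map_zero, add_zero]

theorem sum_support_eq {M : ℕ} (c : Fin M → ℝ) (T : Finset (Fin M)) (hT : ∀ τ ∉ T, c τ = 0) :
    ∑ τ : T, c τ.1 = ∑ τ, c τ := by
  rw [Finset.sum_coe_sort T c]
  exact Finset.sum_subset (Finset.subset_univ T) (fun τ _ hτ => hT τ hτ)

/-- Elimination of the unknown `θ`: the vector of the powers `θ ^ τ`, with `τ` in the support of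
`P`, is in the kernel of a square matrix with entries `v_i ^ τ * P_τ(x + (a_i, 0))`. Its
determinant `Δ(x)` is a non-zero polynomial by `det_shift_ne_zero`. -/
theorem exists_eliminant {M κ : ℕ} (v : Fin M → ℝ) (hv : Function.Injective v) (a : Fin M → ℝ)
    (P : Fin M → MvPolynomial (Fin 2) ℝ) (hP : ∃ τ, P τ ≠ 0) (hd : ∀ τ, (P τ).totalDegree ≤ κ) :
    ∃ Δ : MvPolynomial (Fin 2) ℝ, Δ ≠ 0 ∧ Δ.totalDegree ≤ M * κ ∧
      ∀ (x : Fin 2 → ℝ) (θ : ℝ), θ ≠ 0 →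
        (∀ i, ∑ τ : Fin M, MvPolynomial.eval (x + ![a i, 0]) (P τ) * (v i * θ) ^ (τ : ℕ) = 0) →
        MvPolynomial.eval x Δ = 0 := by
  classical
  let T : Finset (Fin M) := Finset.univ.filter fun τ => P τ ≠ 0
  have hTmem : ∀ τ, τ ∈ T ↔ P τ ≠ 0 := fun τ => by simp [T]
  obtain ⟨σ, hσ⟩ := exists_vandermonde_minor v hv T
  let Mt : Matrix T T (MvPolynomial (Fin 2) ℝ) := Matrix.of fun i j =>
    MvPolynomial.C (v (σ i) ^ (j.1 : ℕ)) * shift ![a (σ i), 0] (P j.1)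
  refine ⟨Mt.det, ?_, ?_, ?_⟩
  · intro h0
    have h1 := congrArg (MvPolynomial.finSuccEquiv ℝ 1) h0
    rw [map_zero, AlgEquiv.map_det] at h1
    have h2 := det_shift_ne_zero (R := MvPolynomial (Fin 1) ℝ)
      ((Matrix.of fun i j : T => v (σ i) ^ (j.1 : ℕ)).map MvPolynomial.C)
      (by
        have := RingHom.map_det (MvPolynomial.C (σ := Fin 1) (R := ℝ))
          (Matrix.of fun i j : T => v (σ i) ^ (j.1 : ℕ))
        rw [RingHom.mapMatrix_apply] at this
        rw [← this]
        simpa using hσ)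
      (fun i => MvPolynomial.C (a (σ i))) (fun j => MvPolynomial.finSuccEquiv ℝ 1 (P j.1))
      (fun j => by
        rw [Ne, EmbeddingLike.map_eq_zero_iff]
        exact (hTmem _).mp j.2)
    apply h2
    rw [← h1]
    congr 1
    ext i j : 1
    simp only [Mt, AlgEquiv.mapMatrix_apply, Matrix.map_apply, Matrix.of_apply, map_mul,
      finSuccEquiv_shift]
    congr 1
    simp [MvPolynomial.finSuccEquiv_apply]
  · rw [Matrix.det_apply]
    refine MvPolynomial.totalDegree_finsetSum_le fun perm _ => ?_
    refine (MvPolynomial.totalDegree_smul_le _ _).trans ?_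
    refine (MvPolynomial.totalDegree_finsetProd _ _).trans ?_
    calc _ ≤ ∑ j : T, κ := by
          refine Finset.sum_le_sum fun j _ => ?_
          refine (MvPolynomial.totalDegree_mul _ _).trans ?_
          rw [MvPolynomial.totalDegree_C, zero_add]
          exact (totalDegree_shift_le _ _).trans (hd _)
      _ ≤ M * κ := by
          rw [Finset.sum_const, smul_eq_mul, Finset.card_univ, Fintype.card_coe]
          refine Nat.mul_le_mul_right _ ?_
          simpa using Finset.card_le_univ T
  · intro x θ hθ hx
    rw [RingHom.map_det]
    rw [← Matrix.exists_mulVec_eq_zero_iff]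
    refine ⟨fun j => θ ^ (j.1 : ℕ), ?_, ?_⟩
    · obtain ⟨τ, hτ⟩ := hP
      intro h
      have := congrFun h ⟨τ, (hTmem τ).mpr hτ⟩
      exact pow_ne_zero _ hθ this
    · funext i
      rw [Pi.zero_apply, ← hx (σ i), ← sum_support_eq _ T (fun τ hτ => by
        have : P τ = 0 := by by_contra h; exact hτ ((hTmem τ).mpr h)
        simp [this])]
      simp only [Matrix.mulVec, dotProduct, RingHom.mapMatrix_apply, Matrix.map_apply, Mt,
        Matrix.of_apply, map_mul, MvPolynomial.eval_C, eval_shift]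
      refine Finset.sum_congr rfl fun j _ => ?_
      rw [mul_pow]; ring

/-- The analogue of `exists_eliminant` in one variable: the determinant has degree less than `M κ`
but at least `M κ` zeros. -/
theorem eq_zero_of_vanishing_line {M κ : ℕ} (v : Fin M → ℝ) (hv : Function.Injective v)
    (a : Fin M → ℝ) (p : Fin M → Polynomial ℝ) (hd : ∀ τ, (p τ).natDegree < κ)
    (Z : Finset ℝ) (hZ : M * κ ≤ Z.card)
    (h : ∀ z ∈ Z, ∃ θ : ℝ, θ ≠ 0 ∧
      ∀ i, ∑ τ : Fin M, (p τ).eval (z + a i) * (v i * θ) ^ (τ : ℕ) = 0) : ∀ τ, p τ = 0 := by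
  classical
  by_contra hP
  push Not at hP
  let T : Finset (Fin M) := Finset.univ.filter fun τ => p τ ≠ 0
  have hTmem : ∀ τ, τ ∈ T ↔ p τ ≠ 0 := fun τ => by simp [T]
  obtain ⟨σ, hσ⟩ := exists_vandermonde_minor v hv T
  let Mt : Matrix T T (Polynomial ℝ) := Matrix.of fun i j =>
    Polynomial.C ((Matrix.of fun i j : T => v (σ i) ^ (j.1 : ℕ)) i j) *
      (p j.1).comp (Polynomial.X + Polynomial.C (a (σ i)))
  have hne : Mt.det ≠ 0 := det_shift_ne_zero _ hσ (fun i => a (σ i)) (fun j => p j.1)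
    (fun j => (hTmem _).mp j.2)
  have hdeg : Mt.det.natDegree < M * κ := by
    refine (natDegree_det_shift_le _ (fun i => a (σ i)) (fun j => p j.1)).trans_lt ?_
    calc _ < ∑ j : T, κ := by
          obtain ⟨τ, hτ⟩ := hP
          exact Finset.sum_lt_sum_of_nonempty ⟨⟨τ, (hTmem τ).mpr hτ⟩, Finset.mem_univ _⟩
            fun j _ => hd _
      _ ≤ M * κ := by
          rw [Finset.sum_const, smul_eq_mul, Finset.card_univ, Fintype.card_coe]
          refine Nat.mul_le_mul_right _ ?_
          simpa using Finset.card_le_univ T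
  apply hne
  refine Polynomial.eq_zero_of_natDegree_lt_card_of_eval_eq_zero' _ Z ?_ (hdeg.trans_le hZ)
  intro z hz
  obtain ⟨θ, hθ, hx⟩ := h z hz
  rw [← Polynomial.coe_evalRingHom, RingHom.map_det]
  rw [← Matrix.exists_mulVec_eq_zero_iff]
  refine ⟨fun j => θ ^ (j.1 : ℕ), ?_, ?_⟩
  · obtain ⟨τ, hτ⟩ := hP
    intro h
    have := congrFun h ⟨τ, (hTmem τ).mpr hτ⟩
    exact pow_ne_zero _ hθ this
  · funext i
    rw [Pi.zero_apply, ← hx (σ i), ← sum_support_eq _ T (fun τ hτ => by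
      have : p τ = 0 := by by_contra h; exact hτ ((hTmem τ).mpr h)
      simp [this])]
    simp only [Matrix.mulVec, dotProduct, RingHom.mapMatrix_apply, Matrix.map_apply, Mt,
      Matrix.of_apply, Polynomial.eval_mul, Polynomial.coe_evalRingHom, Polynomial.eval_C, Polynomial.eval_comp,
      Polynomial.eval_add, Polynomial.eval_X]
    refine Finset.sum_congr rfl fun j _ => ?_
    rw [mul_pow]; ring

/-! ### Choice of interpolation points -/

theorem mem_filtration {R X : Type*} [Field R] (V : ℕ → Submodule R (X → R)) (w : X → R)
    (hV : ∀ n, ∀ f ∈ V n, (fun e => w e * f e) ∈ V (n + 1)) (n a : ℕ) (f : X → R) (hf : f ∈ V n) :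
    (fun e => w e ^ a * f e) ∈ V (n + a) := by
  induction a with
  | zero => simpa using hf
  | succ a ih =>
    have := hV _ _ ih
    rw [← add_assoc]
    convert this using 2 with e
    rw [pow_succ]; ring

/-- The subspace of functions on `X` spanned by the monomials `u ^ i * v ^ j`, `i + j < n`. -/
noncomputable def planeSpan {X : Type*} (u v : X → ℝ) (n : ℕ) : Submodule ℝ (X → ℝ) :=
  Submodule.span ℝ (Set.range fun i : triangle n => fun e => u e ^ i.1.1 * v e ^ i.1.2)

theorem finrank_planeSpan_le {X : Type*} (u v : X → ℝ) (n : ℕ) :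
    Module.finrank ℝ (planeSpan u v n) ≤ (triangle n).card := by
  refine (finrank_range_le_card _).trans ?_
  rw [Fintype.card_coe]

theorem planeSpan_mul {X : Type*} (u v : X → ℝ) (c d : ℝ) (n : ℕ) (f : X → ℝ)
    (hf : f ∈ planeSpan u v n) :
    (fun e => (c * u e + d * v e) * f e) ∈ planeSpan u v (n + 1) := by
  have hm : ∀ i j, i + j < n + 1 → (fun e => u e ^ i * v e ^ j) ∈ planeSpan u v (n + 1) :=
    fun i j h => Submodule.subset_span ⟨⟨⟨i, j⟩, (mem_triangle _ _).mpr h⟩, rfl⟩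
  induction hf using Submodule.span_induction with
  | mem f hf =>
    obtain ⟨⟨⟨i, j⟩, hi⟩, rfl⟩ := hf
    have hi' : i + j < n := (mem_triangle _ _).mp hi
    have := Submodule.add_mem _
      (Submodule.smul_mem _ c (hm (i + 1) j (by omega)))
      (Submodule.smul_mem _ d (hm i (j + 1) (by omega)))
    convert this using 1
    funext e
    simp only [Pi.add_apply, Pi.smul_apply, smul_eq_mul]
    ring
  | zero => convert Submodule.zero_mem (planeSpan u v (n + 1)) using 1; funext e; simp
  | add f g _ _ hf hg =>
    convert Submodule.add_mem _ hf hg using 1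
    funext e; simp [mul_add]
  | smul a f _ hf =>
    convert Submodule.smul_mem _ a hf using 1
    funext e; simp only [Pi.smul_apply, smul_eq_mul]; ring

/-- The subspace of functions on `X` spanned by the powers `y ^ i`, `i < n`. -/
noncomputable def lineSpan {X : Type*} (y : X → ℝ) (n : ℕ) : Submodule ℝ (X → ℝ) :=
  Submodule.span ℝ (Set.range fun i : Fin n => fun e => y e ^ (i : ℕ))

theorem finrank_lineSpan_le {X : Type*} (y : X → ℝ) (n : ℕ) :
    Module.finrank ℝ (lineSpan y n) ≤ n := by
  refine (finrank_range_le_card _).trans ?_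
  rw [Fintype.card_fin]

theorem lineSpan_mul {X : Type*} (y : X → ℝ) (c d : ℝ) (n : ℕ) (f : X → ℝ)
    (hf : f ∈ lineSpan y n) :
    (fun e => (c + d * y e) * f e) ∈ lineSpan y (n + 1) := by
  have hm : ∀ i, i < n + 1 → (fun e => y e ^ i) ∈ lineSpan y (n + 1) :=
    fun i h => Submodule.subset_span ⟨⟨i, h⟩, rfl⟩
  induction hf using Submodule.span_induction with
  | mem f hf =>
    obtain ⟨⟨i, hi⟩, rfl⟩ := hf
    have := Submodule.add_mem _
      (Submodule.smul_mem _ c (hm i (by omega)))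
      (Submodule.smul_mem _ d (hm (i + 1) (by omega)))
    convert this using 1
    funext e
    simp only [Pi.add_apply, Pi.smul_apply, smul_eq_mul]
    ring
  | zero => convert Submodule.zero_mem (lineSpan y (n + 1)) using 1; funext e; simp
  | add f g _ _ hf hg =>
    convert Submodule.add_mem _ hf hg using 1
    funext e; simp [mul_add]
  | smul a f _ hf =>
    convert Submodule.smul_mem _ a hf using 1
    funext e; simp only [Pi.smul_apply, smul_eq_mul]; ring

theorem planeSpan_mono {X : Type*} (u v : X → ℝ) {m n : ℕ} (h : m ≤ n) :
    planeSpan u v m ≤ planeSpan u v n := by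
  refine Submodule.span_mono ?_
  rintro _ ⟨⟨i, hi⟩, rfl⟩
  exact ⟨⟨i, (mem_triangle _ _).mpr (((mem_triangle _ _).mp hi).trans_le h)⟩, rfl⟩

theorem lineSpan_mono {X : Type*} (y : X → ℝ) {m n : ℕ} (h : m ≤ n) :
    lineSpan y m ≤ lineSpan y n := by
  refine Submodule.span_mono ?_
  rintro _ ⟨⟨i, hi⟩, rfl⟩
  exact ⟨⟨i, hi.trans_le h⟩, rfl⟩

/-- If the functions `f_i θ ^ τ` are independent on `Box`, a non-zero minor selects as many points
`pt` as there are functions, and the transposed system at these points is also injective. -/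
theorem exists_interpolation_points {ι Γ : Type*} [Fintype ι] [DecidableEq ι] {M : ℕ}
    (Box : Finset Γ) (f : ι → Γ → ℝ) (θ : Γ → ℝ)
    (hinj : ∀ x : ι × Fin M → ℝ, (∀ e ∈ Box, ∑ p, f p.1 e * θ e ^ (p.2 : ℕ) * x p = 0) → x = 0) :
    ∃ pt : ι × Fin M → Γ, (∀ p, pt p ∈ Box) ∧
      ∀ x : ι × Fin M → ℝ, (∀ i, ∀ τ < M, ∑ e, f i (pt e) * θ (pt e) ^ τ * x e = 0) → x = 0 := by
  obtain ⟨σ, hσ⟩ := exists_minor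
    (Matrix.of fun (e : Box) (p : ι × Fin M) => f p.1 e * θ e ^ (p.2 : ℕ)) (by
      intro x hx
      refine hinj x fun e he => ?_
      have := congrFun hx ⟨e, he⟩
      simpa [Matrix.mulVec, dotProduct] using this)
  refine ⟨fun p => (σ p).1, fun p => (σ p).2, fun x hx => ?_⟩
  refine Matrix.eq_zero_of_vecMul_eq_zero hσ ?_
  funext p
  have := hx p.1 p.2 p.2.2
  simp only [Matrix.vecMul, dotProduct, Matrix.submatrix_apply, Matrix.of_apply, id, Pi.zero_apply]
  rw [← this]
  exact Finset.sum_congr rfl fun e _ => mul_comm _ _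

/-- On a set `Z` whose image under `(u, v)` is collinear, `u` or `v` is an injective coordinate,
and every combination of `u` and `v` is an affine function of it on `Z + Z`. -/
theorem line_coordinate {Γ : Type*} [AddCommGroup Γ] (u v : Γ →+ ℤ) (c1 c2 : ℝ) (Z : Finset Γ)
    (hZ : 2 ≤ Z.card) (hinj : ∀ z ∈ Z, ∀ z' ∈ Z, u z = u z' → v z = v z' → z = z')
    (hcol : ∀ z1 ∈ Z, ∀ z2 ∈ Z, ∀ z3 ∈ Z,
      (u z2 - u z1) * (v z3 - v z1) - (v z2 - v z1) * (u z3 - u z1) = 0) :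
    ∃ (y : Γ →+ ℤ) (p q : ℝ), (y = u ∨ y = v) ∧ (∀ z ∈ Z, ∀ z' ∈ Z, y z = y z' → z = z') ∧
      ∀ z ∈ Z, ∀ z' ∈ Z, c1 * u (z + z') + c2 * v (z + z') = p + q * y (z + z') := by
  obtain ⟨z1, h1, z2, h2, h12⟩ := Finset.one_lt_card.mp (show 1 < Z.card by omega)
  have hc := fun z hz => hcol z1 h1 z2 h2 z hz
  by_cases hu : u z2 = u z1
  · have hv : v z2 - v z1 ≠ 0 := fun h => h12 (hinj z1 h1 z2 h2 hu.symm (sub_eq_zero.mp h).symm)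
    have hu' : ∀ z ∈ Z, u z = u z1 := by
      intro z hz
      have := hc z hz
      rw [hu, sub_self, zero_mul, zero_sub, neg_eq_zero, mul_eq_zero] at this
      exact sub_eq_zero.mp (this.resolve_left hv)
    refine ⟨v, c1 * (2 * u z1), c2, Or.inr rfl, ?_, ?_⟩
    · intro z hz z' hz' h
      exact hinj z hz z' hz' ((hu' z hz).trans (hu' z' hz').symm) h
    · intro z hz z' hz'
      rw [map_add, hu' z hz, hu' z' hz']
      push_cast; ring
  · have hu0 : u z2 - u z1 ≠ 0 := sub_ne_zero.mpr hu
    have hu0' : ((u z2 : ℝ) - u z1) ≠ 0 := by exact_mod_cast hu0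
    have hv' : ∀ z ∈ Z, (v z : ℝ) = v z1 + ((v z2 - v z1) / (u z2 - u z1)) * (u z - u z1) := by
      intro z hz
      have h3 : (((u z2 - u z1) * (v z - v z1) - (v z2 - v z1) * (u z - u z1) : ℤ) : ℝ) = 0 := by
        rw [hc z hz]; simp
      push_cast at h3
      rw [div_mul_eq_mul_div, ← sub_eq_iff_eq_add', eq_div_iff hu0']
      linarith
    refine ⟨u, c2 * (2 * (v z1 - ((v z2 - v z1) / (u z2 - u z1)) * u z1)),
      c1 + c2 * ((v z2 - v z1) / (u z2 - u z1)), Or.inl rfl, ?_, ?_⟩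
    · intro z hz z' hz' h
      refine hinj z hz z' hz' h ?_
      have e1 := hv' z hz
      have e2 := hv' z' hz'
      rw [h, ← e2] at e1
      exact_mod_cast e1
    · intro z hz z' hz'
      rw [map_add, map_add]
      push_cast
      rw [hv' z hz, hv' z' hz']
      ring

/-- The functions `y ^ i * θ ^ τ`, `i < κ`, `τ < M`, are independent on the sums of the `A i` and
the points of `Z`, when `y` is injective on `Z`. -/
theorem line_hcol {Γ : Type*} [AddCommGroup Γ] [DecidableEq Γ] (y : Γ →+ ℤ) (θ : Γ → ℝ)
    (hθ0 : ∀ e, θ e ≠ 0) (hθ : ∀ e e', θ (e + e') = θ e * θ e') {M κ : ℕ} (Z : Finset Γ)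
    (hZ : M * κ ≤ Z.card) (hy : ∀ z ∈ Z, ∀ z' ∈ Z, y z = y z' → z = z')
    (A : Fin M → Γ) (hA : Function.Injective fun i => θ (A i))
    (x : Fin κ × Fin M → ℝ)
    (hx : ∀ i, ∀ z ∈ Z, ∑ p, (y (A i + z) : ℝ) ^ (p.1 : ℕ) * θ (A i + z) ^ (p.2 : ℕ) * x p = 0) :
    x = 0 := by
  rcases Nat.eq_zero_or_pos κ with hκ | hκ
  · subst hκ; funext p; exact p.1.elim0
  let p : Fin M → Polynomial ℝ := fun τ => ∑ i : Fin κ, Polynomial.monomial (i : ℕ) (x (i, τ))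
  have hp : ∀ τ, (p τ).natDegree < κ := by
    intro τ
    refine (Polynomial.natDegree_sum_le_of_forall_le (n := κ - 1) _ _ fun i _ => ?_).trans_lt
      (by omega)
    refine (Polynomial.natDegree_monomial_le _).trans ?_
    omega
  have h0 := eq_zero_of_vanishing_line (fun i => θ (A i)) hA (fun i => (y (A i) : ℝ)) p hp
    (Z.image fun z => (y z : ℝ)) (by
      rw [Finset.card_image_of_injOn]
      · exact hZ
      · intro z hz z' hz' h
        exact hy z hz z' hz' (Int.cast_injective (α := ℝ) h)) (by
      intro r hr
      obtain ⟨z, hz, rfl⟩ := Finset.mem_image.mp hr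
      refine ⟨θ z, hθ0 z, fun i => ?_⟩
      rw [← hx i z hz, Fintype.sum_prod_type_right]
      refine Finset.sum_congr rfl fun τ _ => ?_
      simp only [p]
      rw [Polynomial.eval_finsetSum, Finset.sum_mul]
      refine Finset.sum_congr rfl fun k _ => ?_
      rw [Polynomial.eval_monomial, hθ, map_add]
      push_cast
      rw [add_comm (y z : ℝ)]; ring)
  funext ⟨i, τ⟩
  have h1 := congrArg (fun q => Polynomial.coeff q (i : ℕ)) (h0 τ)
  simp only [p, Polynomial.finsetSum_coeff, Polynomial.coeff_monomial, Polynomial.coeff_zero] at h1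
  rw [Finset.sum_eq_single i (fun j _ hj => if_neg (fun h => hj (Fin.ext h))) (by simp),
    if_pos rfl] at h1
  exact h1

/-- A non-trivial relation `x` between the functions `u ^ i * v ^ j * θ ^ τ` on the points `i ε + e
+ e'` forces `M κ` collinear points in `Ω`: eliminating `θ` with `exists_eliminant` gives a plane
curve of degree at most `M κ` through `Ω + Ω`, to which `exists_collinear` applies. -/
theorem plane_or_line {Γ : Type*} [AddCommGroup Γ] [DecidableEq Γ] (u v : Γ →+ ℤ) (θ : Γ → ℝ)
    (hθ0 : ∀ e, θ e ≠ 0) (hθ : ∀ e e', θ (e + e') = θ e * θ e') (ε : Γ) (hε : 1 < θ ε)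
    (huε : u ε = 1) (hvε : v ε = 0) {M κ : ℕ} (Ω : Finset Γ) (h0Ω : (0 : Γ) ∈ Ω)
    (hinj : ∀ z ∈ Ω, ∀ z' ∈ Ω, u z = u z' → v z = v z' → z = z')
    (hΩ : (M * κ) * (M * κ) < Ω.card) (x : triangle κ × Fin M → ℝ)
    (hx : ∀ i < M, ∀ e ∈ Ω, ∀ e' ∈ Ω, ∑ p, ((u (i • ε + e + e') : ℝ) ^ p.1.1.1 *
      (v (i • ε + e + e') : ℝ) ^ p.1.1.2) * θ (i • ε + e + e') ^ (p.2 : ℕ) * x p = 0)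
    (hx0 : x ≠ 0) :
    ∃ Z ⊆ Ω, M * κ ≤ Z.card ∧ ∀ z1 ∈ Z, ∀ z2 ∈ Z, ∀ z3 ∈ Z,
      (u z2 - u z1) * (v z3 - v z1) - (v z2 - v z1) * (u z3 - u z1) = 0 := by
  let mono : (Σ _ : ℕ, ℕ) → (Fin 2 →₀ ℕ) := fun i => Finsupp.equivFunOnFinite.symm ![i.1, i.2]
  have hmono : Function.Injective mono := by
    intro i j h
    have h1 := DFunLike.congr_fun h 0
    have h2 := DFunLike.congr_fun h 1
    simp only [mono, Finsupp.equivFunOnFinite_symm_apply_apply, Matrix.cons_val_zero,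
      Matrix.cons_val_one] at h1 h2
    exact Sigma.ext h1 (heq_of_eq h2)
  let P : Fin M → MvPolynomial (Fin 2) ℝ := fun τ =>
    ∑ i : triangle κ, MvPolynomial.monomial (mono i.1) (x (i, τ))
  have hPd : ∀ τ, (P τ).totalDegree ≤ κ := by
    intro τ
    refine MvPolynomial.totalDegree_finsetSum_le fun i _ => ?_
    refine (MvPolynomial.totalDegree_monomial_le _ _).trans ?_
    rw [Finsupp.sum_fintype _ _ (fun _ => rfl), Fin.sum_univ_two]
    have := (mem_triangle _ _).mp i.2
    simp [mono]; omega
  have hPne : ∃ τ, P τ ≠ 0 := by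
    by_contra hcon
    push Not at hcon
    apply hx0
    funext ⟨i, τ⟩
    have h1 := congrArg (MvPolynomial.coeff (mono i.1)) (hcon τ)
    simp only [P, MvPolynomial.coeff_sum, MvPolynomial.coeff_monomial, MvPolynomial.coeff_zero] at h1
    rw [Finset.sum_eq_single i (fun j _ hj => if_neg (fun h => hj (Subtype.ext (hmono h))))
      (by simp), if_pos rfl] at h1
    exact h1
  obtain ⟨Δ, hΔ0, hΔd, hΔ⟩ := exists_eliminant (fun i : Fin M => θ ε ^ (i : ℕ))
    (fun i j h => Fin.ext (pow_right_injective₀ (by linarith) hε.ne' h)) (fun i => ((i : ℕ) : ℝ)) P hPne hPd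
  let pr : Γ → Fin 2 → ℝ := fun e => ![(u e : ℝ), (v e : ℝ)]
  have hpradd : ∀ e e', pr (e + e') = pr e + pr e' := by
    intro e e'; funext i; fin_cases i <;> simp [pr]
  have hθε : ∀ i : ℕ, θ (i • ε) = θ ε ^ i := by
    intro i
    induction i with
    | zero =>
      have := hθ 0 0
      rw [add_zero] at this
      have h1 := hθ0 0
      rw [zero_smul, pow_zero]
      exact (mul_right_cancel₀ h1 (by rw [one_mul]; exact this)).symm
    | succ i ih => rw [succ_nsmul, hθ, ih, pow_succ]
  have hprinj : Set.InjOn pr Ω := by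
    intro z hz z' hz' h
    have h1 := congrFun h 0
    have h2 := congrFun h 1
    simp only [pr, Matrix.cons_val_zero, Matrix.cons_val_one] at h1 h2
    exact hinj z hz z' hz' (by exact_mod_cast h1) (by exact_mod_cast h2)
  have hcard : (Ω.image pr).card = Ω.card := Finset.card_image_of_injOn hprinj
  obtain ⟨Z, hZ1, hZ2, hZ3⟩ := exists_collinear Δ hΔ0 (M * κ) (M * κ) hΔd (Ω.image pr) (Ω.image pr)
    (Finset.mem_image.mpr ⟨0, h0Ω, by funext i; fin_cases i <;> simp [pr]⟩) (by
      intro τ hτ z hz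
      obtain ⟨e, he, rfl⟩ := Finset.mem_image.mp hτ
      obtain ⟨e', he', rfl⟩ := Finset.mem_image.mp hz
      rw [add_comm, ← hpradd]
      refine hΔ _ (θ (e + e')) (hθ0 _) fun i => ?_
      refine Eq.trans ?_ (hx i i.2 e he e' he')
      rw [Fintype.sum_prod_type_right]
      refine Finset.sum_congr rfl fun τ _ => ?_
      simp only [P]
      rw [map_sum, Finset.sum_mul]
      refine Finset.sum_congr rfl fun k _ => ?_
      rw [MvPolynomial.eval_monomial, Finsupp.prod_fintype _ _ (fun _ => pow_zero _),
        Fin.prod_univ_two, add_assoc, hθ (_ • ε), hθε]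
      have hu1 : (u ((i : ℕ) • ε + (e + e')) : ℝ) = u (e + e') + ((i : ℕ) : ℝ) := by
        rw [map_add u, map_nsmul, huε]; push_cast; simp [add_comm]
      have hv1 : (v ((i : ℕ) • ε + (e + e')) : ℝ) = v (e + e') + 0 := by
        rw [map_add v, map_nsmul, hvε]; simp
      rw [hu1, hv1]
      simp only [pr, mono, Pi.add_apply, Finsupp.equivFunOnFinite_symm_apply_apply,
        Matrix.cons_val_zero, Matrix.cons_val_one]
      ring) (by rw [hcard]; exact hΩ) (by rw [hcard]; exact hΩ.le)
  refine ⟨Ω.filter fun e => pr e ∈ Z, Finset.filter_subset _ _, ?_, ?_⟩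
  · refine hZ2.trans ?_
    have : Z ⊆ (Ω.filter fun e => pr e ∈ Z).image pr := by
      intro z hz
      obtain ⟨e, he, rfl⟩ := Finset.mem_image.mp (hZ1 hz)
      exact Finset.mem_image.mpr ⟨e, Finset.mem_filter.mpr ⟨he, hz⟩, rfl⟩
    exact (Finset.card_le_card this).trans Finset.card_image_le
  · intro z1 h1 z2 h2 z3 h3
    have := hZ3 _ (Finset.mem_filter.mp h1).2 _ (Finset.mem_filter.mp h2).2 _
      (Finset.mem_filter.mp h3).2
    simp only [pr, Matrix.cons_val_zero, Matrix.cons_val_one] at this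
    exact_mod_cast this

/-- The data needed by `exists_good_minor` and `det_upper`. In the generic case the `A_i` are the
monomials in `u, v` of degree `< κ`, the `B_j` their products, and `V` the monomials of degree `< 3
κ`, which makes the dimension ratio at most `9`. If these monomials are dependent, many points of
`Ω` are collinear, and powers of a single coordinate on the line are used instead. -/
theorem exists_interpolation_data {Γ : Type} [AddCommGroup Γ] [DecidableEq Γ] (u v : Γ →+ ℤ)
    (θ : Γ → ℝ) (hθ0 : ∀ e, θ e ≠ 0) (hθ : ∀ e e', θ (e + e') = θ e * θ e') (ε : Γ)
    (hε : 1 < θ ε) (huε : u ε = 1) (hvε : v ε = 0) {M κ : ℕ} (hM : 2 ≤ M) (hκ : 1 ≤ κ)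
    (Ω : Finset Γ) (h0Ω : (0 : Γ) ∈ Ω)
    (hinj : ∀ z ∈ Ω, ∀ z' ∈ Ω, u z = u z' → v z = v z' → z = z')
    (hΩ : (M * κ) * (M * κ) < Ω.card)
    (hfib : ∀ Z ⊆ Ω, M * κ ≤ Z.card →
      ∃ A : Fin M → Γ, (∀ i, A i ∈ Z) ∧ Function.Injective fun i => θ (A i))
    (c1 c2 : ℝ) (U : ℤ) (hU1 : 1 ≤ U)
    (hU : ∀ i < M, ∀ e ∈ Ω, ∀ e' ∈ Ω, |u (i • ε + e + e')| ≤ U ∧ |v (i • ε + e + e')| ≤ U) :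
    ∃ (ι J : Type) (_ : Fintype ι) (_ : DecidableEq ι) (_ : Fintype J) (pt : ι × Fin M → Γ)
      (A : ι → ι × Fin M → ℝ) (B : J → ι × Fin M → ℤ) (V : Submodule ℝ (ι × Fin M → ℝ)),
      Nonempty ι ∧ Fintype.card ι ≤ κ * κ ∧
      (∀ p, ∃ i < M, ∃ e ∈ Ω, ∃ e' ∈ Ω, pt p = i • ε + e + e') ∧
      (∀ i i', ∃ j, ∀ e, (B j e : ℝ) = A i e * A i' e) ∧
      (∀ j e, |B j e| ≤ U ^ (2 * κ)) ∧
      Module.finrank ℝ V ≤ 9 * Fintype.card ι ∧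
      (∀ a < κ, ∀ j, (fun e => (c1 * u (pt e) + c2 * v (pt e)) ^ a * (B j e : ℝ)) ∈ V) ∧
      (∀ x : ι × Fin M → ℝ,
        (∀ i, ∀ τ < M, ∑ e, A i e * θ (pt e) ^ τ * x e = 0) → x = 0) := by
  classical
  by_cases hplane : ∀ x : triangle κ × Fin M → ℝ,
      (∀ i < M, ∀ e ∈ Ω, ∀ e' ∈ Ω, ∑ p, ((u (i • ε + e + e') : ℝ) ^ p.1.1.1 *
      (v (i • ε + e + e') : ℝ) ^ p.1.1.2) * θ (i • ε + e + e') ^ (p.2 : ℕ) * x p = 0) → x = 0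
  · obtain ⟨pt, hpt, hcol⟩ := exists_interpolation_points
      (((Finset.range M) ×ˢ Ω ×ˢ Ω).image fun q => q.1 • ε + q.2.1 + q.2.2)
      (fun (i : triangle κ) e => (u e : ℝ) ^ i.1.1 * (v e : ℝ) ^ i.1.2) θ (fun x hx =>
        hplane x fun i hi e he e' he' => hx _ (Finset.mem_image.mpr ⟨(i, e, e'), by
          simp [hi, he, he'], rfl⟩))
    have hbox : ∀ p, ∃ i < M, ∃ e ∈ Ω, ∃ e' ∈ Ω, pt p = i • ε + e + e' := by
      intro p
      obtain ⟨⟨i, e, e'⟩, h1, h2⟩ := Finset.mem_image.mp (hpt p)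
      simp only [Finset.mem_product, Finset.mem_range] at h1
      exact ⟨i, h1.1, e, h1.2.1, e', h1.2.2, h2.symm⟩
    refine ⟨triangle κ, triangle (2 * κ), inferInstance, inferInstance, inferInstance, pt,
      fun i p => (u (pt p) : ℝ) ^ i.1.1 * (v (pt p) : ℝ) ^ i.1.2,
      fun j p => u (pt p) ^ j.1.1 * v (pt p) ^ j.1.2,
      planeSpan (fun p => (u (pt p) : ℝ)) (fun p => (v (pt p) : ℝ)) (3 * κ),
      ⟨⟨⟨0, 0⟩, (mem_triangle _ _).mpr (by simp only; omega)⟩⟩, ?_, hbox, ?_, ?_, ?_, ?_, hcol⟩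
    · rw [Fintype.card_coe]
      have := card_triangle κ
      nlinarith
    · rintro ⟨⟨i, j⟩, h⟩ ⟨⟨i', j'⟩, h'⟩
      rw [mem_triangle] at h h'
      simp only at h h'
      refine ⟨⟨⟨i + i', j + j'⟩, (mem_triangle _ _).mpr (by simp only; omega)⟩, fun e => ?_⟩
      push_cast
      simp only [pow_add]; ring
    · rintro ⟨⟨i, j⟩, h⟩ p
      rw [mem_triangle] at h
      simp only at h
      obtain ⟨k, hk, e, he, e', he', hp⟩ := hbox p
      obtain ⟨h1, h2⟩ := hU k hk e he e' he'
      rw [← hp] at h1 h2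
      rw [abs_mul, abs_pow, abs_pow]
      calc _ ≤ U ^ i * U ^ j := by gcongr
        _ = U ^ (i + j) := (pow_add _ _ _).symm
        _ ≤ U ^ (2 * κ) := pow_le_pow_right₀ hU1 h.le
    · refine (finrank_planeSpan_le _ _ _).trans ?_
      rw [Fintype.card_coe]
      have h1 := card_triangle κ
      have h2 := card_triangle (3 * κ)
      nlinarith
    · rintro a ha ⟨⟨i, j⟩, h⟩
      have h' : i + j < 2 * κ := (mem_triangle _ _).mp h
      have h1 : (fun p => (u (pt p) : ℝ) ^ i * (v (pt p) : ℝ) ^ j) ∈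
          planeSpan (fun p => (u (pt p) : ℝ)) (fun p => (v (pt p) : ℝ)) (2 * κ) :=
        Submodule.subset_span ⟨⟨⟨i, j⟩, h⟩, rfl⟩
      have h2 := mem_filtration _ (fun p => c1 * (u (pt p) : ℝ) + c2 * (v (pt p) : ℝ))
        (fun n f hf => planeSpan_mul _ _ c1 c2 n f hf) (2 * κ) a _ h1
      have h3 := planeSpan_mono _ _ (show 2 * κ + a ≤ 3 * κ by omega) h2
      push_cast
      exact h3
  · push Not at hplane
    obtain ⟨x, hx, hx0⟩ := hplane
    obtain ⟨Z, hZΩ, hZ, hZc⟩ := plane_or_line u v θ hθ0 hθ ε hε huε hvε Ω h0Ω hinj hΩ x hx hx0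
    have hZ2 : 2 ≤ Z.card := by nlinarith
    obtain ⟨y, p0, q0, hyuv, hyinj, hyw⟩ := line_coordinate u v c1 c2 Z hZ2
      (fun z hz z' hz' => hinj z (hZΩ hz) z' (hZΩ hz')) hZc
    obtain ⟨A, hAZ, hA⟩ := hfib Z hZΩ hZ
    obtain ⟨pt, hpt, hcol⟩ := exists_interpolation_points
      ((Z ×ˢ Z).image fun q => q.1 + q.2)
      (fun (i : Fin κ) e => (y e : ℝ) ^ (i : ℕ)) θ (fun x hx =>
        line_hcol y θ hθ0 hθ Z hZ hyinj A hA x fun i z hz =>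
          hx _ (Finset.mem_image.mpr ⟨(A i, z), by simp [hAZ i, hz], rfl⟩))
    have hbox' : ∀ p, ∃ e ∈ Z, ∃ e' ∈ Z, pt p = e + e' := by
      intro p
      obtain ⟨⟨e, e'⟩, h1, h2⟩ := Finset.mem_image.mp (hpt p)
      simp only [Finset.mem_product] at h1
      exact ⟨e, h1.1, e', h1.2, h2.symm⟩
    refine ⟨Fin κ, Fin (2 * κ), inferInstance, inferInstance, inferInstance, pt,
      fun i p => (y (pt p) : ℝ) ^ (i : ℕ), fun j p => y (pt p) ^ (j : ℕ),
      lineSpan (fun p => (y (pt p) : ℝ)) (3 * κ), ⟨⟨0, hκ⟩⟩, ?_, ?_, ?_, ?_, ?_, ?_, hcol⟩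
    · rw [Fintype.card_fin]; nlinarith
    · intro p
      obtain ⟨e, he, e', he', h⟩ := hbox' p
      exact ⟨0, by omega, e, hZΩ he, e', hZΩ he', by rw [h, zero_smul, zero_add]⟩
    · intro i i'
      refine ⟨⟨i + i', by omega⟩, fun e => ?_⟩
      push_cast
      rw [pow_add]
    · intro j p
      obtain ⟨e, he, e', he', h⟩ := hbox' p
      obtain ⟨h1, h2⟩ := hU 0 (by omega) e (hZΩ he) e' (hZΩ he')
      rw [zero_smul, zero_add, ← h] at h1 h2
      have h3 : |y (pt p)| ≤ U := by
        rcases hyuv with h | h <;> rw [h] <;> assumption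
      rw [abs_pow]
      calc _ ≤ U ^ (j : ℕ) := by gcongr
        _ ≤ U ^ (2 * κ) := pow_le_pow_right₀ hU1 j.2.le
    · refine (finrank_lineSpan_le _ _).trans ?_
      rw [Fintype.card_fin]; omega
    · intro a ha j
      have h1 : (fun p => (y (pt p) : ℝ) ^ (j : ℕ)) ∈
          lineSpan (fun p => (y (pt p) : ℝ)) (2 * κ) := Submodule.subset_span ⟨j, rfl⟩
      have h2 := mem_filtration _ (fun p => p0 + q0 * (y (pt p) : ℝ))
        (fun n f hf => lineSpan_mul _ p0 q0 n f hf) (2 * κ) a _ h1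
      have h3 := lineSpan_mono _ (show 2 * κ + a ≤ 3 * κ by omega) h2
      convert h3 using 2 with p
      obtain ⟨e, he, e', he', h⟩ := hbox' p
      rw [h, hyw e he e' he']
      push_cast; rw [h]

/-! ### The master inequality -/

theorem sum_range_real (n : ℕ) : ∑ k ∈ Finset.range n, (k : ℝ) = n * (n - 1) / 2 := by
  induction n with
  | zero => simp
  | succ n ih => rw [Finset.sum_range_succ, ih]; push_cast; ring

/-- Logarithm of the factorials gained from the Feldman basis, from `h! ≥ (h / e) ^ h` and `k / h ≥
(k - h + 1) / h`. -/
theorem feldman_gain (n0 h : ℕ) (hh : 3 ≤ h) :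
    (n0 : ℝ) * (((n0 : ℝ) - 1) * (log h - 1) - 2 * h * (log h - 1)) ≤
      ∑ k ∈ Finset.range n0, 2 * (((k / h : ℕ) : ℝ) * log (h.factorial)) := by
  have hh0 : (0 : ℝ) < h := by positivity
  have hlog : 1 ≤ log (h : ℝ) := by
    rw [le_log_iff_exp_le hh0]
    have : (3 : ℝ) ≤ h := by exact_mod_cast hh
    linarith [exp_one_lt_d9]
  have hfac : (h : ℝ) * (log h - 1) ≤ log (h.factorial) := by
    have := Stirling.le_log_factorial_stirling (n := h) (by omega)
    have h1 : 0 ≤ log (h : ℝ) / 2 := by positivity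
    have h2 : 0 ≤ log (2 * π) / 2 := by
      have : 1 ≤ 2 * π := by linarith [pi_gt_three]
      have := log_nonneg this
      positivity
    linarith
  have hterm : ∀ k ∈ Finset.range n0,
      2 * (k : ℝ) * (log h - 1) - 2 * h * (log h - 1) ≤
        2 * (((k / h : ℕ) : ℝ) * log (h.factorial)) := by
    intro k _
    have h1 : (k : ℝ) ≤ h * ((k / h : ℕ) : ℝ) + h := by
      have h2 : k ≤ h * (k / h) + h := by
        have := Nat.div_add_mod k h
        have := Nat.mod_lt k (show 0 < h by omega)
        omega
      exact_mod_cast h2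
    have h3 : ((k / h : ℕ) : ℝ) * (h * (log h - 1)) ≤ ((k / h : ℕ) : ℝ) * log (h.factorial) := by
      gcongr
    nlinarith
  refine le_trans (le_of_eq ?_) (Finset.sum_le_sum hterm)
  rw [Finset.sum_sub_distrib, Finset.sum_const, Finset.card_range, nsmul_eq_mul]
  have hsum := sum_range_real n0
  have : ∑ k ∈ Finset.range n0, 2 * (k : ℝ) * (log h - 1) = n0 * (n0 - 1) * (log h - 1) := by
    rw [← Finset.sum_mul, ← Finset.mul_sum, hsum]; ring
  rw [this]; ring

theorem prod_exp_rows {P : Type*} [Fintype P] (n0 : ℕ) (c d : ℝ) :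
    ∏ a : Fin n0 × P, exp (c + (a.1 : ℕ) * d) =
      exp (Fintype.card P * (n0 * c + n0 * (n0 - 1) / 2 * d)) := by
  rw [← exp_sum]
  congr 1
  rw [Fintype.sum_prod_type]
  simp only [Finset.sum_const, Finset.card_univ, nsmul_eq_mul]
  rw [← Finset.mul_sum]
  congr 1
  rw [Finset.sum_add_distrib, Finset.sum_const, Finset.card_univ, Fintype.card_fin, nsmul_eq_mul,
    ← Finset.sum_mul, Fin.sum_univ_eq_sum_range (fun k => (k : ℝ)) n0]
  have hsum := sum_range_real n0
  rw [hsum]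

/-- The trivial bound for a determinant from bounds on its rows. -/
theorem abs_det_le_prod {N : Type*} [Fintype N] [DecidableEq N] (A : Matrix N N ℝ) (b : N → ℝ)
    (hA : ∀ i j, |A i j| ≤ b i) : |A.det| ≤ (Fintype.card N).factorial * ∏ i, b i := by
  rw [Matrix.det_apply']
  refine (Finset.abs_sum_le_sum_abs _ _).trans ?_
  calc _ ≤ ∑ σ : Equiv.Perm N, ∏ i, b i := by
        refine Finset.sum_le_sum fun σ _ => ?_
        rw [abs_mul, ← Int.cast_abs, Equiv.Perm.sign_abs, Int.cast_one, one_mul, Finset.abs_prod,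
          ← Equiv.prod_comp σ b]
        exact Finset.prod_le_prod (fun i _ => abs_nonneg _) fun i _ => hA _ _
    _ = _ := by
        rw [Finset.sum_const, Finset.card_univ, Fintype.card_perm, nsmul_eq_mul]

/-- The lower bound `det_lower` compared with the upper bound `det_upper` for the determinant and
the trivial bound for its conjugate, in logarithmic form and divided by the size `N = n0 |P|`. The
assumptions `|P| = 15 r` and `Q = 15 n0` make `N = r Q`. -/
theorem master_inequality {P ι J : Type*} [Fintype P] [DecidableEq P] [Fintype ι] [Fintype J]
    (M g κ h d L n0 r Q : ℕ) (hd : ∀ a, 1 ≤ a → a ≤ h → a ∣ d) (hd0 : d ≠ 0) (hML : M * (g + 1) = 2 * L) (hL : 1 ≤ L) (hn0 : n0 = κ * g)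
    (hn0' : 0 < n0) (hr : 0 < r) (hP : Fintype.card P = 15 * r) (hQ : Q = 15 * n0) (hh : 3 ≤ h)
    (A : ι → P → ℝ) (B : J → P → ℤ) (hAB : ∀ i i', ∃ j, ∀ e, (B j e : ℝ) = A i e * A i' e)
    (y w : P → ℝ)
    (hcol : ∀ x : P → ℝ, (∀ i, ∀ τ < M, ∑ e, A i e * exp (y e) ^ τ * x e = 0) → x = 0)
    (V : Submodule ℝ (P → ℝ)) (hVr : Module.finrank ℝ V ≤ r)
    (hV : ∀ a < κ, ∀ j, (fun e => w e ^ a * (B j e : ℝ)) ∈ V)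
    (θ2 c1 c2 : P → ℝ)
    (hO : ∀ e, ∀ l : ℤ, |l| ≤ L → (c1 e * exp (y e) ^ l, c2 e * θ2 e ^ l) ∈ goldenIntegers)
    (hc1 : ∀ e, c1 e ≠ 0) (W ρ XU X2 Xc : ℝ) (hρ : 6 ≤ ρ) (hw : ∀ e, |w e| ≤ W)
    (hB : ∀ j e, |(B j e : ℝ)| ≤ exp XU)
    (hy : ∀ e, 2 * L * |y e - w e| ≤ ρ⁻¹ ^ Q)
    (hθ2 : ∀ e, ∀ l : ℤ, |l| ≤ L → |θ2 e ^ l| ≤ exp X2)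
    (hc : ∀ e, |c1 e * c2 e| ≤ exp Xc) :
    ((n0 : ℝ) - 1) * (log h - 1) - 2 * h * (log h - 1) ≤
      2 * log (r * Q : ℕ) + log (Q + 1) + log 3 + (ρ * W * L + W) + 2 * XU + X2 +
        2 * κ * log d + Xc +
        ((n0 : ℝ) - 1) / 2 * (log (ρ * L) + log (L + 1)) -
        ((Q : ℝ) - 1) / 2 * (log ρ - (L : ℝ)⁻¹) := by
  obtain ⟨σ, hσ⟩ : ∃ σ : Fin n0 × P → Fin κ × J × Fin (M * (g + 1)),
      (Matrix.of fun r s : Fin n0 × P =>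
        ((r.1 : ℕ).choose (σ s).1 : ℝ) * ((-(L : ℤ) + (σ s).2.2 : ℤ) : ℝ) ^ ((r.1 : ℕ) - (σ s).1) *
          B (σ s).2.1 r.2 * exp (y r.2) ^ (-(L : ℤ) + (σ s).2.2 : ℤ)).det ≠ 0 := by
    subst hn0
    exact exists_good_minor A (fun j e => (B j e : ℝ)) hAB (fun e => exp (y e))
      (fun e => (exp_pos _).ne') M g κ (-(L : ℤ)) hcol
  let t : Fin n0 × P → ℕ := fun s => (σ s).1
  let jj : Fin n0 × P → J := fun s => (σ s).2.1
  let l : Fin n0 × P → ℤ := fun s => -(L : ℤ) + ((σ s).2.2 : ℕ)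
  have hl : ∀ s, |l s| ≤ L := by
    intro s
    have h1 := (σ s).2.2.2
    rw [abs_le]
    simp only [l]
    omega
  have hlR : ∀ s, |(l s : ℝ)| ≤ L := fun s => by
    have := hl s
    exact_mod_cast this
  have ht : ∀ s, t s < κ := fun s => (σ s).1.2
  have hL1 : (1 : ℝ) ≤ L := by exact_mod_cast hL
  have hL0 : (0 : ℝ) < L := by linarith
  have hρ0 : (0 : ℝ) < ρ := by linarith
  have hN : n0 * Fintype.card P = r * Q := by rw [hP, hQ]; ring
  have hQ1 : 1 ≤ Q := by omega
  set N := r * Q with hNdef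
  have hN1 : 1 ≤ N := Nat.mul_pos hr hQ1
  have hNpos : (0 : ℝ) < N := by exact_mod_cast hN1
  -- `E = r Q (Q - 1) / 2` is the largest admissible order because `N = r Q`
  have hup := det_upper κ n0 w y (fun j e => (B j e : ℝ)) W L ρ (exp XU) hw hB hL1 hρ t ht jj
    (fun s => (l s : ℝ)) hlR V r hVr hV Q (r * (Q * (Q - 1) / 2)) (by
      rw [hN, ← mul_add, hNdef]
      have h1 : Q * (Q - 1) / 2 + Q * (Q + 1) / 2 = Q * Q := by
        obtain ⟨q, rfl⟩ : ∃ q, Q = q + 1 := ⟨Q - 1, by omega⟩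
        have e1 : Even ((q + 1) * (q + 1 + 1)) := Nat.even_mul_succ_self _
        have e2 : Even ((q + 1) * (q + 1 - 1)) := by
          rw [mul_comm]; exact Nat.even_mul_succ_self _
        have h2 : (q + 1) * (q + 1 - 1) + (q + 1) * (q + 1 + 1) = 2 * ((q + 1) * (q + 1)) := by
          simp; ring
        obtain ⟨x, hx⟩ := e1
        obtain ⟨z, hz⟩ := e2
        omega
      rw [h1]
      apply le_of_eq; ring) hy
  have hmat : ∀ (Θ : P → ℝ) (a s : Fin n0 × P), ((a.1 : ℕ).choose (t s) : ℝ) *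
      (l s : ℝ) ^ ((a.1 : ℕ) - t s) * B (jj s) a.2 * Θ a.2 ^ (l s) =
      ((a.1 : ℕ).choose (t s) : ℝ) * (l s : ℝ) ^ ((a.1 : ℕ) - t s) *
        ((B (jj s) a.2 : ℝ) * Θ a.2 ^ (l s)) := fun _ _ _ => by ring
  have hexp : ∀ (a s : Fin n0 × P), exp (y a.2 * (l s : ℝ)) = exp (y a.2) ^ (l s) := by
    intro a s
    rw [exp_mul, rpow_intCast]
  simp only [hexp, hmat (fun e => exp (y e))] at hup
  have hne : (Matrix.of fun a s : Fin n0 × P => ((a.1 : ℕ).choose (t s) : ℝ) *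
      (l s : ℝ) ^ ((a.1 : ℕ) - t s) * (B (jj s) a.2 * exp (y a.2) ^ (l s))).det ≠ 0 := by
    simp only [← hmat (fun e => exp (y e))]
    exact hσ
  have hlow := det_lower n0 h d hd t l
    (fun e s => B (jj s) e) (fun e s => exp (y e) ^ (l s)) (fun e s => θ2 e ^ (l s)) c1 c2
    (fun e s => hO e (l s) (hl s)) hc1 hd0 hne
  -- the entries of the conjugate determinant need not be small, so it is bounded trivially
  have hdet2 := abs_det_le_prod (Matrix.of fun a s : Fin n0 × P => ((a.1 : ℕ).choose (t s) : ℝ) *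
      (l s : ℝ) ^ ((a.1 : ℕ) - t s) * (B (jj s) a.2 * θ2 a.2 ^ (l s)))
      (fun a => exp ((XU + X2) + (a.1 : ℕ) * log (L + 1))) (by
    intro a s
    rw [Matrix.of_apply, abs_mul, abs_mul (B _ _ : ℝ), exp_add, exp_nat_mul, exp_log (by positivity), exp_add,
      mul_comm]
    exact mul_le_mul (mul_le_mul (hB _ _) (hθ2 _ _ (hl s)) (abs_nonneg _) (exp_pos _).le)
      (choose_mul_pow_le _ _ (hlR s) _ _) (abs_nonneg _) (by positivity))
  rw [prod_exp_rows, Fintype.card_prod, Fintype.card_fin, hN] at hdet2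
  set D1 := |(Matrix.of fun a s : Fin n0 × P => ((a.1 : ℕ).choose (t s) : ℝ) *
      (l s : ℝ) ^ ((a.1 : ℕ) - t s) * (B (jj s) a.2 * exp (y a.2) ^ (l s))).det| with hD1
  set D2 := |(Matrix.of fun a s : Fin n0 × P => ((a.1 : ℕ).choose (t s) : ℝ) *
      (l s : ℝ) ^ ((a.1 : ℕ) - t s) * (B (jj s) a.2 * θ2 a.2 ^ (l s))).det| with hD2
  have hfact : (N.factorial : ℝ) ≤ exp (N * log N) := by
    rw [exp_nat_mul, exp_log hNpos]
    exact_mod_cast Nat.factorial_le_pow N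
  set K : ℝ := (Fintype.card P : ℝ) with hK
  have hKn : K * n0 = N := by
    rw [hK, mul_comm]; exact_mod_cast hN
  have hd1 : (1 : ℝ) ≤ d := by exact_mod_cast Nat.one_le_iff_ne_zero.mpr hd0
  have hb1 : D1 ≤ exp (N * (log N + log (Q + 1) + (log 3 + (ρ * W * L + W) + XU) +
      ((n0 : ℝ) - 1) / 2 * log (ρ * L) - ((Q : ℝ) - 1) / 2 * (log ρ - (L : ℝ)⁻¹))) := by
    refine hup.trans ?_
    have hprod : (∏ a : Fin n0 × P, 3 * (exp (ρ * W * L + W) * (ρ * L) ^ (a.1 : ℕ)) * exp XU) =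
        exp (K * (n0 * (log 3 + (ρ * W * L + W) + XU) + n0 * (n0 - 1) / 2 * log (ρ * L))) := by
      rw [← prod_exp_rows]
      refine Finset.prod_congr rfl fun a _ => ?_
      rw [exp_add _ ((a.1 : ℕ) * log (ρ * L)), exp_add _ XU, exp_add (log 3),
        exp_log (by norm_num), exp_nat_mul, exp_log (by positivity)]
      ring
    have hpow : (ρ⁻¹ * exp (L : ℝ)⁻¹) ^ (r * (Q * (Q - 1) / 2)) =
        exp (-(N * (((Q : ℝ) - 1) / 2 * (log ρ - (L : ℝ)⁻¹)))) := by
      have h1 : ρ⁻¹ * exp (L : ℝ)⁻¹ = exp (-(log ρ - (L : ℝ)⁻¹)) := by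
        rw [neg_sub, sub_eq_add_neg, exp_add, exp_neg (log ρ), exp_log hρ0, mul_comm]
      rw [h1, ← exp_nat_mul]
      congr 1
      have h2 : ((r * (Q * (Q - 1) / 2) : ℕ) : ℝ) = N * (((Q : ℝ) - 1) / 2) := by
        have h3 : 2 ∣ Q * (Q - 1) := (Nat.even_mul_pred_self Q).two_dvd
        rw [hNdef, Nat.cast_mul, Nat.cast_div h3 (by norm_num), Nat.cast_mul, Nat.cast_mul,
          Nat.cast_sub hQ1]
        push_cast; ring
      rw [h2]; ring
    rw [hN, hprod, hpow]
    have hQpow : ((Q : ℝ) + 1) ^ N = exp (N * log (Q + 1)) := by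
      rw [exp_nat_mul, exp_log (by positivity)]
    rw [hQpow]
    calc _ ≤ exp (N * log N) * exp (N * log (Q + 1)) * (exp (K * (n0 * (log 3 + (ρ * W * L + W) + XU)
          + n0 * (n0 - 1) / 2 * log (ρ * L))) *
          exp (-(N * (((Q : ℝ) - 1) / 2 * (log ρ - (L : ℝ)⁻¹))))) :=
          mul_le_mul_of_nonneg_right (mul_le_mul_of_nonneg_right hfact (exp_pos _).le)
            (by positivity)
      _ = _ := by
          rw [← exp_add, ← exp_add, ← exp_add, ← hKn]
          congr 1
          ring
  have hb2 : D2 ≤ exp (N * (log N + XU + X2 + ((n0 : ℝ) - 1) / 2 * log (L + 1))) := by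
    refine hdet2.trans ((mul_le_mul_of_nonneg_right hfact (exp_pos _).le).trans (le_of_eq ?_))
    rw [← exp_add, ← hKn]
    congr 1
    ring
  have hb3 : (∏ s, ((d : ℝ) ^ t s) ^ 2) ≤ exp (N * (2 * κ * log d)) := by
    have h1 : ∀ s, ((d : ℝ) ^ t s) ^ 2 ≤ exp (2 * κ * log d) := by
      intro s
      have : exp (2 * κ * log d) = ((d : ℝ) ^ κ) ^ 2 := by
        rw [show 2 * (κ : ℝ) * log d = (2 : ℕ) * (κ * log d) by push_cast; ring, exp_nat_mul,
          exp_nat_mul, exp_log (by linarith)]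
      rw [this]
      have := pow_le_pow_right₀ hd1 (ht s).le
      gcongr
    refine (Finset.prod_le_prod (fun _ _ => by positivity) (fun s _ => h1 s)).trans (le_of_eq ?_)
    rw [Finset.prod_const, Finset.card_univ, Fintype.card_prod, Fintype.card_fin, hN, exp_nat_mul]
  have hb4 : (∏ a : Fin n0 × P, |c1 a.2 * c2 a.2|) ≤ exp (N * Xc) := by
    calc _ ≤ ∏ a : Fin n0 × P, exp Xc := Finset.prod_le_prod (fun _ _ => abs_nonneg _)
          (fun a _ => hc a.2)
      _ = _ := by
        rw [Finset.prod_const, Finset.card_univ, Fintype.card_prod, Fintype.card_fin, hN,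
          exp_nat_mul]
  have hb0 : exp (N * (((n0 : ℝ) - 1) * (log h - 1) - 2 * h * (log h - 1))) ≤
      ∏ a : Fin n0 × P, ((h.factorial : ℝ) ^ ((a.1 : ℕ) / h)) ^ 2 := by
    have hfp : (0 : ℝ) < h.factorial := by exact_mod_cast Nat.factorial_pos h
    have h1 : ∀ a : Fin n0 × P, ((h.factorial : ℝ) ^ ((a.1 : ℕ) / h)) ^ 2 =
        exp (2 * ((((a.1 : ℕ) / h : ℕ) : ℝ) * log h.factorial)) := by
      intro a
      have : (2 : ℝ) = (2 : ℕ) := by norm_num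
      rw [this, exp_nat_mul, exp_nat_mul, exp_log hfp]
    simp only [h1]
    rw [← exp_sum, exp_le_exp, Fintype.sum_prod_type]
    simp only [Finset.sum_const, Finset.card_univ, nsmul_eq_mul]
    rw [← Finset.mul_sum, ← hKn, mul_assoc]
    refine mul_le_mul_of_nonneg_left ?_ (by positivity)
    rw [Fin.sum_univ_eq_sum_range (fun k => 2 * (((k / h : ℕ) : ℝ) * log h.factorial)) n0]
    exact feldman_gain n0 h hh
  have hD1n : 0 ≤ D1 := abs_nonneg _
  have hD2n : 0 ≤ D2 := abs_nonneg _
  have hfin := hb0.trans (hlow.trans (mul_le_mul (mul_le_mul (mul_le_mul hb1 hb2 hD2n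
    (exp_pos _).le) hb3 (Finset.prod_nonneg fun _ _ => by positivity) (by positivity)) hb4
    (Finset.prod_nonneg fun _ _ => abs_nonneg _) (by positivity)))
  rw [← exp_add, ← exp_add, ← exp_add, exp_le_exp, ← mul_add, ← mul_add, ← mul_add,
    mul_le_mul_iff_right₀ hNpos] at hfin
  linarith

/-! ### From a solution to a small linear form -/

theorem cast_repunit (b l : ℕ) (hb : 2 ≤ b) :
    ((((b ^ l - 1) / (b - 1) : ℕ)) : ℝ) = ((b : ℝ) ^ l - 1) / (b - 1) := by
  have h1 : (b - 1) ∣ (b ^ l - 1) := by simpa using Nat.sub_dvd_pow_sub_pow b 1 l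
  have h2 : 1 ≤ b ^ l := Nat.one_le_pow _ _ (by omega)
  have hb0 : ((b - 1 : ℕ) : ℝ) ≠ 0 := by
    have : b - 1 ≠ 0 := by omega
    exact_mod_cast this
  rw [Nat.cast_div h1 hb0, Nat.cast_sub h2, Nat.cast_sub (by omega : 1 ≤ b)]
  push_cast; rfl

theorem abs_log_one_add_le (x : ℝ) (hx : |x| ≤ 1 / 2) : |log (1 + x)| ≤ 2 * |x| := by
  have h1 := abs_le.mp hx
  have hpos : 0 < 1 + x := by linarith
  have hup : log (1 + x) ≤ x := by linarith [log_le_sub_one_of_pos hpos]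
  have hlo : 1 - (1 + x)⁻¹ ≤ log (1 + x) := one_sub_inv_le_log_of_pos hpos
  have h2 : 1 - (1 + x)⁻¹ = x / (1 + x) := by field_simp; ring
  rw [h2] at hlo
  have h3 : -(2 * |x|) ≤ x / (1 + x) := by
    rw [le_div_iff₀ hpos]
    nlinarith [abs_nonneg x, neg_abs_le x]
  rw [abs_le]
  exact ⟨h3.trans hlo, by linarith [le_abs_self x, abs_nonneg x]⟩

theorem sqrt5_mul_fib (k : ℕ) : √5 * (Nat.fib k : ℝ) = goldenRatio ^ k - goldenConj ^ k := by
  rw [Real.coe_fib_eq k]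
  field_simp

theorem abs_goldenConj_pow_le (k : ℕ) : |goldenConj ^ k| ≤ 1 := by
  rw [abs_pow]
  refine pow_le_one₀ (abs_nonneg _) ?_
  rw [abs_le]
  exact ⟨neg_one_lt_goldenConj.le, by linarith [goldenConj_neg]⟩

theorem abs_sqrt5_mul_fib_le (k n : ℕ) (hk : k ≤ n) :
    |√5 * (Nat.fib k : ℝ)| ≤ 2 * goldenRatio ^ n := by
  rw [sqrt5_mul_fib]
  have h1 : goldenRatio ^ k ≤ goldenRatio ^ n := pow_le_pow_right₀ one_lt_goldenRatio.le hk
  have h2 : 1 ≤ goldenRatio ^ n := one_le_pow₀ one_lt_goldenRatio.le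
  have h3 : |goldenRatio ^ k| = goldenRatio ^ k := abs_of_pos (pow_pos goldenRatio_pos k)
  calc _ ≤ |goldenRatio ^ k| + |goldenConj ^ k| := abs_sub _ _
    _ ≤ goldenRatio ^ n + 1 := by rw [h3]; exact add_le_add h1 (abs_goldenConj_pow_le k)
    _ ≤ _ := by rw [two_mul]; exact add_le_add le_rfl h2

theorem abs_fib_sum_sub_le (n1 n2 n3 : ℕ) (h32 : n3 ≤ n2) :
    |√5 * ((Nat.fib n1 : ℝ) + Nat.fib n2 + Nat.fib n3) - goldenRatio ^ n1| ≤
      5 * goldenRatio ^ n2 := by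
  have h16 : √5 * ((Nat.fib n1 : ℝ) + Nat.fib n2 + Nat.fib n3) - goldenRatio ^ n1 =
      -goldenConj ^ n1 + √5 * (Nat.fib n2 : ℝ) + √5 * (Nat.fib n3 : ℝ) := by
    rw [mul_add, mul_add, sqrt5_mul_fib n1]; abel
  rw [h16]
  have h14 : 1 ≤ goldenRatio ^ n2 := one_le_pow₀ one_lt_goldenRatio.le
  have h19 : |-goldenConj ^ n1| ≤ 1 := by rw [abs_neg]; exact abs_goldenConj_pow_le n1
  have h17 := abs_sqrt5_mul_fib_le n2 n2 le_rfl
  have h18 := abs_sqrt5_mul_fib_le n3 n2 h32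
  generalize goldenRatio ^ n2 = x at *
  calc _ ≤ |-goldenConj ^ n1| + |√5 * (Nat.fib n2 : ℝ)| + |√5 * (Nat.fib n3 : ℝ)| :=
        abs_add_three _ _ _
    _ ≤ 1 + 2 * x + 2 * x := add_le_add (add_le_add h19 h17) h18
    _ ≤ _ := by linarith

set_option maxHeartbeats 1000000 in
/-- Here `a0 = d1 (b ^ l1 - 1) + d2`. The sum of Fibonacci numbers times `√5` equals `α ^ n1 (1 +
e1)` and also `γ b ^ (l2 + l3) (1 + e2)`, where `γ = √5 a0 / (b - 1)`, `|e1| ≤ 5 exp (-T)` and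
`|e2| ≤ 2 exp (-T)`; compare logarithms. -/
theorem linear_form_small (b n1 n2 n3 l1 l2 l3 d1 d2 d3 : ℕ) (hb : 2 ≤ b)
    (hsol : SatisfiesEq1 b n1 n2 n3 l1 l2 l3 d1 d2 d3) (T : ℝ) (hT : 3 ≤ T)
    (h1 : T ≤ ((n1 : ℝ) - n2) * log goldenRatio) (h2 : T ≤ (l2 : ℝ) * log b) :
    ∃ a0 : ℕ, b - 1 ≤ a0 ∧ a0 ≤ b ^ (l1 + 1) ∧
      |n1 * log goldenRatio - (l2 + l3 : ℕ) * log b - log (√5 * a0 / (b - 1))| ≤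
        14 * exp (-T) := by
  obtain ⟨h32, h21, hl1, hl2, hl3, hd1, hd2, hd3, hd1', heq⟩ := hsol
  have hb2 : (2 : ℝ) ≤ b := by exact_mod_cast hb
  have hb1 : (0 : ℝ) < b - 1 := by linarith
  have hb0 : (0 : ℝ) < b := by linarith
  have hs5 : (0 : ℝ) < √5 := by positivity
  have hα := goldenRatio_pos
  have hα1 := one_lt_goldenRatio
  have hbl : b ≤ b ^ l1 := Nat.le_self_pow (by omega) b
  set a0 := d1 * (b ^ l1 - 1) + d2 with ha0
  have ha0b : b - 1 ≤ a0 := by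
    have : 1 * (b - 1) ≤ d1 * (b ^ l1 - 1) := Nat.mul_le_mul hd1' (by omega)
    omega
  have ha0R : (b : ℝ) - 1 ≤ a0 := by
    have : ((b - 1 : ℕ) : ℝ) ≤ a0 := by exact_mod_cast ha0b
    rwa [Nat.cast_sub (by omega), Nat.cast_one] at this
  have ha0pos : (0 : ℝ) < a0 := by linarith
  have ha0cast : (a0 : ℝ) = d1 * ((b : ℝ) ^ l1 - 1) + d2 := by
    rw [ha0, Nat.cast_add, Nat.cast_mul, Nat.cast_sub (Nat.one_le_pow _ _ (by omega))]
    push_cast; rfl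
  refine ⟨a0, ha0b, ?_, ?_⟩
  · have : d1 * (b ^ l1 - 1) ≤ (b - 1) * (b ^ l1 - 1) := Nat.mul_le_mul_right _ (by omega)
    have h4 : (b - 1) * (b ^ l1 - 1) + b ≤ b ^ (l1 + 1) := by
      obtain ⟨c, rfl⟩ : ∃ c, b = c + 1 := ⟨b - 1, by omega⟩
      obtain ⟨x, hx⟩ : ∃ x, (c + 1) ^ l1 = x + 1 := ⟨(c + 1) ^ l1 - 1, by omega⟩
      rw [pow_succ, hx]
      simp only [Nat.add_sub_cancel]
      nlinarith
    omega
  -- multiplying the digit expansion by `b - 1` leaves the leading term `a0 * b ^ (l2 + l3)`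
  set S : ℝ := Nat.fib n1 + Nat.fib n2 + Nat.fib n3 with hS
  have hSeq : ((b : ℝ) - 1) * S = a0 * b ^ (l2 + l3) - ((d2 : ℝ) - d3) * b ^ l3 - d3 := by
    have h5 : S = d1 * (((b : ℝ) ^ l1 - 1) / (b - 1)) * b ^ (l2 + l3) +
        d2 * (((b : ℝ) ^ l2 - 1) / (b - 1)) * b ^ l3 + d3 * (((b : ℝ) ^ l3 - 1) / (b - 1)) := by
      rw [← cast_repunit b l1 hb, ← cast_repunit b l2 hb, ← cast_repunit b l3 hb, hS]
      exact_mod_cast heq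
    rw [h5, ha0cast, pow_add]
    field_simp
    ring
  have hexp2 : ((b : ℝ) ^ l2)⁻¹ ≤ exp (-T) := by
    rw [exp_neg]
    refine inv_anti₀ (exp_pos _) ?_
    calc exp T ≤ exp (l2 * log b) := exp_le_exp.mpr h2
      _ = _ := by rw [exp_nat_mul, exp_log hb0]
  have hexp1 : goldenRatio ^ n2 / goldenRatio ^ n1 ≤ exp (-T) := by
    have : goldenRatio ^ n2 / goldenRatio ^ n1 = exp (-(((n1 : ℝ) - n2) * log goldenRatio)) := by
      rw [show -(((n1 : ℝ) - n2) * log goldenRatio) = n2 * log goldenRatio - n1 * log goldenRatio by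
        ring, exp_sub, exp_nat_mul, exp_nat_mul, exp_log hα]
    rw [this, exp_le_exp]; linarith
  have hT' : exp (-T) ≤ 1 / 10 := by
    rw [exp_neg]
    have h7 : (10 : ℝ) ≤ exp T := by
      have h8 : exp 3 ≤ exp T := exp_le_exp.mpr hT
      have h9 : exp 3 = exp 1 ^ 3 := by rw [← exp_nat_mul]; norm_num
      have := exp_one_gt_d9
      have : (2.7 : ℝ) ^ 3 ≤ exp 1 ^ 3 := by gcongr; linarith
      norm_num at this
      linarith
    rw [one_div]
    exact inv_anti₀ (by norm_num) h7
  set e2 : ℝ := -(((d2 : ℝ) - d3) * b ^ l3 + d3) / (a0 * b ^ (l2 + l3)) with he2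
  have hbl3 : (1 : ℝ) ≤ b ^ l3 := one_le_pow₀ (by linarith)
  have he2b : |e2| ≤ 2 * exp (-T) := by
    have hd2R : (d2 : ℝ) ≤ b - 1 := by
      have : ((d2 + 1 : ℕ) : ℝ) ≤ b := by exact_mod_cast hd2
      push_cast at this; linarith
    have hd3R : (d3 : ℝ) ≤ b - 1 := by
      have : ((d3 + 1 : ℕ) : ℝ) ≤ b := by exact_mod_cast hd3
      push_cast at this; linarith
    have h20 : (0 : ℝ) ≤ d2 := Nat.cast_nonneg _
    have h30 : (0 : ℝ) ≤ d3 := Nat.cast_nonneg _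
    have hnum : |-(((d2 : ℝ) - d3) * b ^ l3 + d3)| ≤ 2 * (b - 1) * b ^ l3 := by
      rw [abs_neg, abs_le]
      constructor <;> nlinarith
    rw [he2, abs_div, abs_of_pos (show (0 : ℝ) < a0 * b ^ (l2 + l3) by positivity)]
    rw [div_le_iff₀ (by positivity)]
    refine hnum.trans ?_
    have h10 : 1 ≤ exp (-T) * (b : ℝ) ^ l2 := by
      have := mul_le_mul_of_nonneg_right hexp2 (by positivity : (0 : ℝ) ≤ b ^ l2)
      rwa [inv_mul_cancel₀ (by positivity)] at this
    calc 2 * ((b : ℝ) - 1) * b ^ l3 ≤ 2 * a0 * b ^ l3 * 1 := by rw [mul_one]; gcongr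
      _ ≤ 2 * a0 * b ^ l3 * (exp (-T) * (b : ℝ) ^ l2) := by gcongr
      _ = _ := by rw [pow_add]; ring
  set e1 : ℝ := √5 * S / goldenRatio ^ n1 - 1 with he1
  have he1b : |e1| ≤ 5 * exp (-T) := by
    have h11 : e1 = (√5 * S - goldenRatio ^ n1) / goldenRatio ^ n1 := by
      rw [he1]; field_simp
    have hnum := abs_fib_sum_sub_le n1 n2 n3 h32
    rw [← hS] at hnum
    rw [h11, abs_div, abs_of_pos (show 0 < goldenRatio ^ n1 by positivity)]
    calc _ ≤ 5 * goldenRatio ^ n2 / goldenRatio ^ n1 := by gcongr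
      _ = 5 * (goldenRatio ^ n2 / goldenRatio ^ n1) := by ring
      _ ≤ _ := by gcongr
  have hlog1 := abs_log_one_add_le e1 (by linarith)
  have hlog2 := abs_log_one_add_le e2 (by linarith)
  have hp1 : 0 < 1 + e1 := by linarith [(abs_le.mp he1b).1]
  have hp2 : 0 < 1 + e2 := by linarith [(abs_le.mp he2b).1]
  have hS1 : √5 * S = goldenRatio ^ n1 * (1 + e1) := by rw [he1]; field_simp; ring
  have hS2 : √5 * S = (√5 * a0 / (b - 1)) * b ^ (l2 + l3) * (1 + e2) := by
    have : S = (((b : ℝ) - 1) * S) / (b - 1) := by field_simp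
    rw [this, hSeq, he2]
    field_simp
    ring
  have hkey : n1 * log goldenRatio + log (1 + e1) =
      log (√5 * a0 / (b - 1)) + (l2 + l3 : ℕ) * log b + log (1 + e2) := by
    rw [← log_pow, ← log_pow, ← log_mul (by positivity) hp1.ne', ← log_mul (by positivity)
      (by positivity), ← log_mul (by positivity) hp2.ne', ← hS1, ← hS2]
  have : n1 * log goldenRatio - (l2 + l3 : ℕ) * log b - log (√5 * a0 / (b - 1)) =
      log (1 + e2) - log (1 + e1) := by linarith
  rw [this]
  calc _ ≤ |log (1 + e2)| + |log (1 + e1)| := abs_sub _ _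
    _ ≤ _ := by linarith

/-! ### The lattice of exponents -/

/-- The value at `e = (r, s, t)` of `(r - y0 s - y1 t) log α + s log b + t log γ`, with `γ = √5 a0
/ (b - 1)`. For `y0`, `y1` integers near `log b / log α` and `log γ / log α` it is small compared
with `s log b` and `t log γ`. -/
noncomputable def latticeLog (b a0 : ℕ) (y0 y1 : ℤ) (e : ℤ × ℤ × ℤ) : ℝ :=
  ((e.1 - y0 * e.2.1 - y1 * e.2.2 : ℤ) : ℝ) * log goldenRatio + e.2.1 * log b +
    e.2.2 * log (√5 * a0 / (b - 1))

/-- The coefficient of `log α` when `log γ` is eliminated from `latticeLog` by means of the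
relation `log γ ≈ n log α - m log b`. -/
def latticeU (n y0 y1 : ℤ) : ℤ × ℤ × ℤ →+ ℤ :=
  AddMonoidHom.mk' (fun e => e.1 - y0 * e.2.1 + (n - y1) * e.2.2) fun a b => by
    simp only [Prod.fst_add, Prod.snd_add]; ring

/-- The coefficient of `log b` when `log γ` is eliminated from `latticeLog` by means of the
relation `log γ ≈ n log α - m log b`. -/
def latticeV (m : ℤ) : ℤ × ℤ × ℤ →+ ℤ :=
  AddMonoidHom.mk' (fun e => e.2.1 - m * e.2.2) fun a b => by
    simp only [Prod.fst_add, Prod.snd_add]; ring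

/-- The triples `(r, s, t)` with `|r| ≤ R`, `|s| ≤ S`, `|t| ≤ T`. -/
noncomputable def latticeBox (R S T : ℕ) : Finset (ℤ × ℤ × ℤ) :=
  Finset.Icc (-(R : ℤ)) R ×ˢ Finset.Icc (-(S : ℤ)) S ×ˢ Finset.Icc (-(T : ℤ)) T

theorem mem_latticeBox {R S T : ℕ} {e : ℤ × ℤ × ℤ} :
    e ∈ latticeBox R S T ↔ |e.1| ≤ R ∧ |e.2.1| ≤ S ∧ |e.2.2| ≤ T := by
  simp only [latticeBox, Finset.mem_product, Finset.mem_Icc, abs_le]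

theorem card_latticeBox (R S T : ℕ) :
    (latticeBox R S T).card = (2 * R + 1) * ((2 * S + 1) * (2 * T + 1)) := by
  simp only [latticeBox, Finset.card_product, Int.card_Icc]
  congr 1
  · omega
  · congr 1 <;> omega

theorem latticeLog_add (b a0 : ℕ) (y0 y1 : ℤ) (e e' : ℤ × ℤ × ℤ) :
    latticeLog b a0 y0 y1 (e + e') = latticeLog b a0 y0 y1 e + latticeLog b a0 y0 y1 e' := by
  simp only [latticeLog, Prod.fst_add, Prod.snd_add]
  push_cast; ring

/-- Up to a multiple of the linear form, `latticeLog` depends on the two integer coordinates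
`latticeU`, `latticeV` only. -/
theorem latticeLog_sub_eq (b a0 : ℕ) (n m y0 y1 : ℤ) (e : ℤ × ℤ × ℤ) :
    latticeLog b a0 y0 y1 e -
        (log goldenRatio * latticeU n y0 y1 e + log b * latticeV m e) =
      -(e.2.2 * (n * log goldenRatio - m * log b - log (√5 * a0 / (b - 1)))) := by
  simp only [latticeLog, latticeU, latticeV, AddMonoidHom.mk'_apply]
  push_cast; ring

theorem goldenRatio_pow_irrational (k : ℕ) (hk : 0 < k) : Irrational (goldenRatio ^ k) := by
  obtain ⟨j, rfl⟩ : ∃ j, k = j + 1 := ⟨k - 1, by omega⟩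
  have h1 : goldenRatio ^ (j + 1) = (Nat.fib (j + 1) : ℝ) * goldenRatio + Nat.fib j := by
    rw [mul_comm]
    exact (goldenRatio_mul_fib_succ_add_fib j).symm
  rw [h1]
  exact (goldenRatio_irrational.natCast_mul (Nat.fib_pos.mpr hk).ne').add_natCast _

/-- `log α` and `log b` are linearly independent over `ℚ`: positive powers of `α` are irrational.
-/
theorem log_independent (b : ℕ) (hb : 2 ≤ b) (k s : ℤ)
    (h : k * log goldenRatio + s * log b = 0) : k = 0 ∧ s = 0 := by
  have hb0 : (0 : ℝ) < b := by positivity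
  have hlb : 0 < log (b : ℝ) := log_pos (by exact_mod_cast hb)
  have key : ∀ (j : ℕ) (t : ℤ), 0 < j → (j : ℝ) * log goldenRatio = t * log b → False := by
    intro j t hj hjt
    have h1 : goldenRatio ^ j = (b : ℝ) ^ t := by
      rw [← log_pow, ← log_zpow] at hjt
      exact log_injOn_pos (Set.mem_Ioi.mpr (pow_pos goldenRatio_pos j))
        (Set.mem_Ioi.mpr (zpow_pos hb0 t)) hjt
    refine goldenRatio_pow_irrational j hj ⟨(b : ℚ) ^ t, ?_⟩
    rw [h1]; push_cast; rfl
  have hk : k = 0 := by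
    rcases lt_trichotomy k 0 with hk | hk | hk
    · obtain ⟨j, hj⟩ : ∃ j : ℕ, k = -(j : ℤ) := ⟨k.natAbs, by omega⟩
      subst hj
      push_cast at h
      exact (key j s (by omega) (by linarith)).elim
    · exact hk
    · obtain ⟨j, hj⟩ : ∃ j : ℕ, k = (j : ℤ) := ⟨k.natAbs, by omega⟩
      subst hj
      push_cast at h
      exact (key j (-s) (by omega) (by push_cast; linarith)).elim
  refine ⟨hk, ?_⟩
  subst hk
  simpa [hlb.ne'] using h

theorem latticeLog_fibre (b a0 : ℕ) (hb : 2 ≤ b) (y0 y1 : ℤ) (e e' : ℤ × ℤ × ℤ)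
    (h : latticeLog b a0 y0 y1 e = latticeLog b a0 y0 y1 e') (ht : e.2.2 = e'.2.2) : e = e' := by
  obtain ⟨r, s, t⟩ := e
  obtain ⟨r', s', t'⟩ := e'
  simp only [latticeLog] at h ht
  subst ht
  obtain ⟨h1, h2⟩ := log_independent b hb ((r - y0 * s - y1 * t) - (r' - y0 * s' - y1 * t))
    (s - s') (by push_cast at h ⊢; linarith)
  have h3 : s = s' := by omega
  subst h3
  have h4 : r = r' := by linarith
  rw [h4]

/-- A fibre of `latticeLog` meets each slice `t = const` at most once by `latticeLog_fibre`, so it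
has at most `2 T + 1 ≤ κ` points in the box, and `M κ` points give `M` distinct values. -/
theorem lattice_fibres (b a0 : ℕ) (hb : 2 ≤ b) (y0 y1 : ℤ) (R S T M κ : ℕ) (hT : 2 * T + 1 ≤ κ)
    (Z : Finset (ℤ × ℤ × ℤ)) (hZ : Z ⊆ latticeBox R S T) (hc : M * κ ≤ Z.card) :
    ∃ A : Fin M → ℤ × ℤ × ℤ, (∀ i, A i ∈ Z) ∧
      Function.Injective fun i => exp (latticeLog b a0 y0 y1 (A i)) := by
  classical
  have hcard : Z.card ≤ (Z.image (latticeLog b a0 y0 y1)).card * κ := by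
    rw [mul_comm]
    refine Finset.card_le_mul_card_image _ _ fun x _ => ?_
    refine le_trans ?_ hT
    have : (Finset.Icc (-(T : ℤ)) T).card = 2 * T + 1 := by rw [Int.card_Icc]; omega
    rw [← this]
    refine Finset.card_le_card_of_injOn (fun e => e.2.2) ?_ ?_
    · intro e he
      have he' := mem_latticeBox.mp (hZ (Finset.mem_of_mem_filter e he))
      exact Finset.mem_coe.mpr (Finset.mem_Icc.mpr (abs_le.mp he'.2.2))
    · intro e he e' he' hee
      have h1 := (Finset.mem_filter.mp (Finset.mem_coe.mp he)).2
      have h2 := (Finset.mem_filter.mp (Finset.mem_coe.mp he')).2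
      exact latticeLog_fibre b a0 hb y0 y1 e e' (h1.trans h2.symm) hee
  have hM : M ≤ (Z.image (latticeLog b a0 y0 y1)).card := by
    have : 0 < κ := by omega
    exact Nat.le_of_mul_le_mul_right (hc.trans hcard) this
  obtain ⟨F, hF, hFc⟩ := Finset.exists_subset_card_eq hM
  let f : Fin M ≃ F := (Fintype.equivFinOfCardEq (by simpa using hFc)).symm
  have hf : ∀ i, ∃ e ∈ Z, latticeLog b a0 y0 y1 e = (f i : ℝ) := fun i =>
    Finset.mem_image.mp (hF (f i).2)
  choose A hA1 hA2 using hf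
  refine ⟨A, hA1, fun i j hij => ?_⟩
  have h1 := exp_injective hij
  rw [hA2, hA2] at h1
  exact f.injective (Subtype.ext h1)

/-- Equality of `latticeV` forces `m` to divide the difference of the `s`-coordinates, which is
smaller than `m`. -/
theorem lattice_injective (n m y0 y1 : ℤ) (R S T : ℕ) (hm : 2 * (S : ℤ) < m)
    (z z' : ℤ × ℤ × ℤ) (hz : z ∈ latticeBox R S T) (hz' : z' ∈ latticeBox R S T)
    (hu : latticeU n y0 y1 z = latticeU n y0 y1 z') (hv : latticeV m z = latticeV m z') :
    z = z' := by
  obtain ⟨r, s, t⟩ := z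
  obtain ⟨r', s', t'⟩ := z'
  simp only [mem_latticeBox, abs_le] at hz hz'
  simp only [latticeU, latticeV, AddMonoidHom.mk'_apply] at hu hv
  have ht : t = t' := by
    by_contra hne
    have h1 : m * (t - t') = s - s' := by linarith
    have h2 : |m * (t - t')| < m := by
      rw [h1, abs_lt]; constructor <;> linarith [hz.2.1.1, hz.2.1.2, hz'.2.1.1, hz'.2.1.2]
    rw [abs_mul] at h2
    have h3 : 1 ≤ |t - t'| := Int.one_le_abs (sub_ne_zero.mpr hne)
    have h4 : m ≤ |m| := le_abs_self m
    nlinarith [abs_nonneg m]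
  subst ht
  have hs : s = s' := by linarith
  subst hs
  have hr : r = r' := by linarith
  rw [hr]

theorem zpow_clear (x z : ℝ) (hx : x ≠ 0) (hz : z ≠ 0) (j : ℤ) (J : ℕ) (hj : |j| ≤ J) :
    (x * z) ^ J * (x / z) ^ j = x ^ (J + j).toNat * z ^ (J - j).toNat := by
  obtain ⟨h1, h2⟩ := abs_le.mp hj
  rw [← zpow_natCast x, ← zpow_natCast z, Int.toNat_of_nonneg (by omega),
    Int.toNat_of_nonneg (by omega), zpow_add₀ hx, zpow_sub₀ hz, div_zpow, mul_pow, zpow_natCast,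
    zpow_natCast]
  ring

theorem zpow_clear' (x : ℝ) (hx : x ≠ 0) (j : ℤ) (J : ℕ) (hj : |j| ≤ J) :
    x ^ J * x ^ j = x ^ (J + j).toNat := by
  obtain ⟨h1, h2⟩ := abs_le.mp hj
  rw [← zpow_natCast x (J + j).toNat, Int.toNat_of_nonneg (by omega), zpow_add₀ hx, zpow_natCast]

/-- The Galois conjugate (`√5 ↦ -√5`) of `exp (latticeLog e)`. -/
noncomputable def latticeConj (b a0 : ℕ) (y0 y1 : ℤ) (e : ℤ × ℤ × ℤ) : ℝ :=
  goldenConj ^ (e.1 - y0 * e.2.1 - y1 * e.2.2) * (b : ℝ) ^ e.2.1 *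
    (-√5 * a0 / (b - 1)) ^ e.2.2

theorem exp_latticeLog (b a0 : ℕ) (hb : 2 ≤ b) (ha0 : 1 ≤ a0) (y0 y1 : ℤ) (e : ℤ × ℤ × ℤ) :
    exp (latticeLog b a0 y0 y1 e) =
      goldenRatio ^ (e.1 - y0 * e.2.1 - y1 * e.2.2) * (b : ℝ) ^ e.2.1 *
        (√5 * a0 / (b - 1)) ^ e.2.2 := by
  have hb2 : (2 : ℝ) ≤ b := by exact_mod_cast hb
  have ha : (1 : ℝ) ≤ a0 := by exact_mod_cast ha0
  have hb1 : (0 : ℝ) < b - 1 := by linarith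
  have hexp : ∀ (x : ℝ) (k : ℤ), 0 < x → exp (k * log x) = x ^ k := by
    intro x k hx
    rw [mul_comm, exp_mul, exp_log hx, rpow_intCast]
  rw [latticeLog, exp_add, exp_add, hexp _ _ goldenRatio_pos, hexp _ _ (by linarith),
    hexp _ _ (by positivity)]

/-- An explicit factor, independent of `e` and `l`, that clears the denominators of `exp
(latticeLog e) ^ l`. -/
theorem lattice_integral (b a0 : ℕ) (hb : 2 ≤ b) (ha0 : 1 ≤ a0) (y0 y1 : ℤ) (S T L : ℕ)
    (e : ℤ × ℤ × ℤ) (hs : |e.2.1| ≤ S) (ht : |e.2.2| ≤ T) (l : ℤ) (hl : |l| ≤ L) :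
    (((b : ℝ) ^ (S * L) * (√5 * a0 * (b - 1)) ^ (T * L)) * exp (latticeLog b a0 y0 y1 e) ^ l,
      ((b : ℝ) ^ (S * L) * (-√5 * a0 * (b - 1)) ^ (T * L)) * latticeConj b a0 y0 y1 e ^ l) ∈
      goldenIntegers := by
  have hb2 : (2 : ℝ) ≤ b := by exact_mod_cast hb
  have ha : (1 : ℝ) ≤ a0 := by exact_mod_cast ha0
  have hb1 : (0 : ℝ) < b - 1 := by linarith
  have hb0 : (0 : ℝ) < b := by linarith
  have hsl : |e.2.1 * l| ≤ ((S * L : ℕ) : ℤ) := by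
    rw [abs_mul]; push_cast; exact mul_le_mul hs hl (abs_nonneg _) (by positivity)
  have htl : |e.2.2 * l| ≤ ((T * L : ℕ) : ℤ) := by
    rw [abs_mul]; push_cast; exact mul_le_mul ht hl (abs_nonneg _) (by positivity)
  set k := e.1 - y0 * e.2.1 - y1 * e.2.2 with hk
  have hgen : ∀ (A x : ℝ), x ≠ 0 →
      ((b : ℝ) ^ (S * L) * (x * a0 * (b - 1)) ^ (T * L)) *
        (A ^ k * (b : ℝ) ^ e.2.1 * (x * a0 / (b - 1)) ^ e.2.2) ^ l =
      A ^ (k * l) * (b : ℝ) ^ (((S * L : ℕ) : ℤ) + e.2.1 * l).toNat *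
        ((x * a0) ^ (((T * L : ℕ) : ℤ) + e.2.2 * l).toNat *
          ((b : ℝ) - 1) ^ (((T * L : ℕ) : ℤ) - e.2.2 * l).toNat) := by
    intro A x hx
    rw [← zpow_clear' (b : ℝ) hb0.ne' _ _ hsl, ← zpow_clear (x * a0) (b - 1)
      (mul_ne_zero hx (by linarith)) hb1.ne' _ _ htl, mul_zpow, mul_zpow, ← zpow_mul, ← zpow_mul,
      ← zpow_mul]
    ring
  have h5 : (√5 : ℝ) ≠ 0 := by positivity
  rw [exp_latticeLog b a0 hb ha0, latticeConj, ← hk, hgen goldenRatio (√5) h5,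
    hgen goldenConj (-√5) (neg_ne_zero.mpr h5)]
  have m1 := goldenIntegers_golden_zpow (k * l)
  have m2 := goldenIntegers.pow_mem (goldenIntegers_int b) (((S * L : ℕ) : ℤ) + e.2.1 * l).toNat
  have m3 := goldenIntegers.pow_mem (goldenIntegers.mul_mem goldenIntegers_sqrt5
    (goldenIntegers_int a0)) (((T * L : ℕ) : ℤ) + e.2.2 * l).toNat
  have m4 := goldenIntegers.pow_mem (goldenIntegers_int ((b : ℤ) - 1))
    (((T * L : ℕ) : ℤ) - e.2.2 * l).toNat
  have := goldenIntegers.mul_mem (goldenIntegers.mul_mem m1 m2) (goldenIntegers.mul_mem m3 m4)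
  simpa using this

/-! ### Specialisation to the lattice -/

theorem abs_latticeConj (b a0 : ℕ) (hb : 2 ≤ b) (ha0 : 1 ≤ a0) (y0 y1 : ℤ) (e : ℤ × ℤ × ℤ) :
    |latticeConj b a0 y0 y1 e| =
      exp (-(((e.1 - y0 * e.2.1 - y1 * e.2.2 : ℤ) : ℝ) * log goldenRatio) + e.2.1 * log b +
        e.2.2 * log (√5 * a0 / (b - 1))) := by
  have hb2 : (2 : ℝ) ≤ b := by exact_mod_cast hb
  have ha : (1 : ℝ) ≤ a0 := by exact_mod_cast ha0
  have hb1 : (0 : ℝ) < b - 1 := by linarith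
  have hexp : ∀ (x : ℝ) (k : ℤ), 0 < x → exp (k * log x) = x ^ k := by
    intro x k hx
    rw [mul_comm, exp_mul, exp_log hx, rpow_intCast]
  have h1 : |goldenConj| = goldenRatio⁻¹ := by
    rw [inv_goldenRatio, abs_of_neg goldenConj_neg]
  have h2 : |-√5 * a0 / ((b : ℝ) - 1)| = √5 * a0 / (b - 1) := by
    rw [neg_mul, neg_div, abs_neg, abs_of_pos (by positivity)]
  rw [latticeConj, abs_mul, abs_mul, abs_zpow, abs_zpow, abs_zpow, h1, h2,
    abs_of_pos (show (0 : ℝ) < b by linarith), exp_add, exp_add, exp_neg,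
    hexp _ _ goldenRatio_pos, hexp _ _ (by linarith), hexp _ _ (by positivity), inv_zpow]

theorem abs_latticeLog_le (b a0 : ℕ) (y0 y1 : ℤ) (hα0 : 0 ≤ log goldenRatio)
    (hα : log goldenRatio ≤ 0.482)
    (h0 : |log b - y0 * log goldenRatio| ≤ 1 / 4)
    (h1 : |log (√5 * a0 / ((b : ℝ) - 1)) - y1 * log goldenRatio| ≤ 1 / 4) (R S T : ℝ)
    (e : ℤ × ℤ × ℤ) (hr : |(e.1 : ℝ)| ≤ R) (hs : |(e.2.1 : ℝ)| ≤ S) (ht : |(e.2.2 : ℝ)| ≤ T) :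
    |latticeLog b a0 y0 y1 e| ≤ 0.482 * R + (S + T) / 4 := by
  have : latticeLog b a0 y0 y1 e = e.1 * log goldenRatio +
      e.2.1 * (log b - y0 * log goldenRatio) +
      e.2.2 * (log (√5 * a0 / ((b : ℝ) - 1)) - y1 * log goldenRatio) := by
    rw [latticeLog]; push_cast; ring
  rw [this]
  refine (abs_add_three _ _ _).trans ?_
  rw [abs_mul, abs_mul, abs_mul, abs_of_nonneg hα0]
  have e1 := mul_le_mul hr hα hα0 ((abs_nonneg _).trans hr)
  have e2 := mul_le_mul hs h0 (abs_nonneg _) ((abs_nonneg _).trans hs)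
  have e3 := mul_le_mul ht h1 (abs_nonneg _) ((abs_nonneg _).trans ht)
  linarith

theorem abs_latticeConj_log_le (b a0 : ℕ) (hb : 2 ≤ b) (y0 y1 : ℤ) (hα0 : 0 ≤ log goldenRatio)
    (hα : log goldenRatio ≤ 0.482)
    (h0 : |log b - y0 * log goldenRatio| ≤ 1 / 4) (hγ : 0 ≤ log (√5 * a0 / ((b : ℝ) - 1)))
    (h1 : |log (√5 * a0 / ((b : ℝ) - 1)) - y1 * log goldenRatio| ≤ 1 / 4) (R S T : ℝ)
    (e : ℤ × ℤ × ℤ) (hr : |(e.1 : ℝ)| ≤ R) (hs : |(e.2.1 : ℝ)| ≤ S) (ht : |(e.2.2 : ℝ)| ≤ T) :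
    |-(((e.1 - y0 * e.2.1 - y1 * e.2.2 : ℤ) : ℝ) * log goldenRatio) + e.2.1 * log b +
        e.2.2 * log (√5 * a0 / (b - 1))| ≤
      0.482 * R + S * (2 * log b + 1 / 4) + T * (2 * log (√5 * a0 / (b - 1)) + 1 / 4) := by
  have hb2 : (2 : ℝ) ≤ b := by exact_mod_cast hb
  have hlb : 0 ≤ log (b : ℝ) := log_nonneg (by linarith)
  have : -(((e.1 - y0 * e.2.1 - y1 * e.2.2 : ℤ) : ℝ) * log goldenRatio) + e.2.1 * log b +
        e.2.2 * log (√5 * a0 / (b - 1)) = e.1 * (-log goldenRatio) +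
      e.2.1 * (2 * log b - (log b - y0 * log goldenRatio)) +
      e.2.2 * (2 * log (√5 * a0 / ((b : ℝ) - 1)) -
        (log (√5 * a0 / ((b : ℝ) - 1)) - y1 * log goldenRatio)) := by
    push_cast; ring
  rw [this]
  refine (abs_add_three _ _ _).trans ?_
  rw [abs_mul, abs_mul, abs_mul, abs_neg, abs_of_nonneg hα0]
  have f2 : |2 * log b - (log b - y0 * log goldenRatio)| ≤ 2 * log b + 1 / 4 := by
    refine (abs_sub _ _).trans ?_
    rw [abs_of_nonneg (by positivity)]; linarith
  have f3 : |2 * log (√5 * a0 / ((b : ℝ) - 1)) -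
        (log (√5 * a0 / ((b : ℝ) - 1)) - y1 * log goldenRatio)| ≤
        2 * log (√5 * a0 / ((b : ℝ) - 1)) + 1 / 4 := by
    refine (abs_sub _ _).trans ?_
    rw [abs_of_nonneg (by positivity)]; linarith
  have e1 := mul_le_mul hr hα hα0 ((abs_nonneg _).trans hr)
  have e2 := mul_le_mul hs f2 (abs_nonneg _) ((abs_nonneg _).trans hs)
  have e3 := mul_le_mul ht f3 (abs_nonneg _) ((abs_nonneg _).trans ht)
  linarith

/-- `master_inequality` for the lattice data, with `M = 135`, `L = 675 h`, `ρ = e ^ 3`, `Q = 15 κ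
g` and `d = lcm (1, …, h)`. -/
theorem core_inequality (b a0 n m κ g h R S T : ℕ) (y0 y1 : ℤ) (hb : 2 ≤ b) (ha0 : 1 ≤ a0)
    (hg : g + 1 = 10 * h) (hh : 3 ≤ h) (hκ : 1 ≤ κ) (hT : 2 * T + 1 ≤ κ) (hm : 2 * S < m)
    (hcard : (135 * κ) * (135 * κ) < (2 * R + 1) * ((2 * S + 1) * (2 * T + 1)))
    (hα0 : 0 < log goldenRatio) (hα : log goldenRatio ≤ 0.482)
    (h0 : |log b - y0 * log goldenRatio| ≤ 1 / 4) (hγ : 0 ≤ log (√5 * a0 / ((b : ℝ) - 1)))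
    (h1 : |log (√5 * a0 / ((b : ℝ) - 1)) - y1 * log goldenRatio| ≤ 1 / 4)
    (U : ℤ) (hU1 : 1 ≤ U)
    (hUu : ((2 * R + 135 : ℕ) : ℤ) + |y0| * ((2 * S : ℕ) : ℤ) + |n - y1| * ((2 * T : ℕ) : ℤ) ≤ U)
    (hUv : ((2 * S : ℕ) : ℤ) + m * ((2 * T : ℕ) : ℤ) ≤ U)
    (hΛ : 2 * (675 * h : ℕ) * ((2 * T : ℕ) *
      |n * log goldenRatio - m * log b - log (√5 * a0 / (b - 1))|) ≤
      exp (-(3 * (15 * (κ * g) : ℕ)))) :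
    ∃ r : ℕ, 0 < r ∧ r ≤ 9 * (κ * κ) ∧
    (((κ * g : ℕ) : ℝ) - 1) * (log h - 1) - 2 * h * (log h - 1) ≤
      2 * log (r * (15 * (κ * g)) : ℕ) + log ((15 * (κ * g) : ℕ) + 1) + log 3 +
      (exp 3 * (0.482 * (2 * R + 135 : ℕ) + ((2 * S : ℕ) + (2 * T : ℕ)) / 4 + 1) * (675 * h : ℕ) +
        (0.482 * (2 * R + 135 : ℕ) + ((2 * S : ℕ) + (2 * T : ℕ)) / 4 + 1)) +
      2 * (2 * κ * log U) +
      (675 * h : ℕ) * (0.482 * (2 * R + 135 : ℕ) + (2 * S : ℕ) * (2 * log b + 1 / 4) +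
        (2 * T : ℕ) * (2 * log (√5 * a0 / (b - 1)) + 1 / 4)) +
      2 * κ * log (Nat.lcmUpto h) +
      (2 * (675 * h : ℕ) * ((2 * S : ℕ) * log b + (2 * T : ℕ) * log (√5 * a0 * (b - 1)))) +
      (((κ * g : ℕ) : ℝ) - 1) / 2 * (log (exp 3 * (675 * h : ℕ)) + log ((675 * h : ℕ) + 1)) -
        (((15 * (κ * g) : ℕ) : ℝ) - 1) / 2 * (log (exp 3) - ((675 * h : ℕ) : ℝ)⁻¹) := by
  have hb2 : (2 : ℝ) ≤ b := by exact_mod_cast hb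
  have ha : (1 : ℝ) ≤ a0 := by exact_mod_cast ha0
  have hb1 : (0 : ℝ) < b - 1 := by linarith
  have hbox : ∀ i < 135, ∀ e ∈ latticeBox R S T, ∀ e' ∈ latticeBox R S T,
      |(i • ((1, 0, 0) : ℤ × ℤ × ℤ) + e + e').1| ≤ ((2 * R + 135 : ℕ) : ℤ) ∧
      |(i • ((1, 0, 0) : ℤ × ℤ × ℤ) + e + e').2.1| ≤ ((2 * S : ℕ) : ℤ) ∧
      |(i • ((1, 0, 0) : ℤ × ℤ × ℤ) + e + e').2.2| ≤ ((2 * T : ℕ) : ℤ) := by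
    intro i hi e he e' he'
    simp only [mem_latticeBox, abs_le] at he he'
    have hi1 : (i • ((1, 0, 0) : ℤ × ℤ × ℤ)) = ((i : ℤ), 0, 0) := by simp [Prod.smul_mk]
    simp only [hi1, Prod.fst_add, Prod.snd_add, abs_le]
    push_cast
    refine ⟨⟨?_, ?_⟩, ⟨?_, ?_⟩, ⟨?_, ?_⟩⟩ <;> omega
  obtain ⟨ι, J, _, _, _, pt, A, B, V, hne, hcι, hpt, hAB, hB, hVr, hV, hcol⟩ :=
    exists_interpolation_data (latticeU n y0 y1) (latticeV m)
      (fun e => exp (latticeLog b a0 y0 y1 e)) (fun e => (exp_pos _).ne')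
      (fun e e' => by rw [latticeLog_add, exp_add]) ((1, 0, 0) : ℤ × ℤ × ℤ)
      (by simpa [latticeLog] using hα0) (by simp [latticeU]) (by simp [latticeV])
      (M := 135) (κ := κ) (by norm_num) hκ (latticeBox R S T)
      (by rw [mem_latticeBox]; simp)
      (fun z hz z' hz' => lattice_injective n m y0 y1 R S T (by exact_mod_cast hm) z z' hz hz')
      (by rw [card_latticeBox]; exact hcard)
      (fun Z hZ hc => lattice_fibres b a0 hb y0 y1 R S T 135 κ hT Z hZ hc)
      (log goldenRatio) (log b) U hU1 (by
        intro i hi e he e' he'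
        obtain ⟨b1, b2, b3⟩ := hbox i hi e he e' he'
        set p := i • ((1, 0, 0) : ℤ × ℤ × ℤ) + e + e'
        constructor
        · refine le_trans ?_ hUu
          simp only [latticeU, AddMonoidHom.mk'_apply]
          refine (abs_add_le _ _).trans ?_
          refine add_le_add ((abs_sub _ _).trans (add_le_add b1 ?_)) ?_
          · rw [abs_mul]; exact mul_le_mul_of_nonneg_left b2 (abs_nonneg _)
          · rw [abs_mul]; exact mul_le_mul_of_nonneg_left b3 (abs_nonneg _)
        · refine le_trans ?_ hUv
          simp only [latticeV, AddMonoidHom.mk'_apply]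
          refine (abs_sub _ _).trans (add_le_add b2 ?_)
          rw [abs_mul, Nat.abs_cast]; exact mul_le_mul_of_nonneg_left b3 (Nat.cast_nonneg _))
  have hpb : ∀ p, |(pt p).1| ≤ ((2 * R + 135 : ℕ) : ℤ) ∧ |(pt p).2.1| ≤ ((2 * S : ℕ) : ℤ) ∧
      |(pt p).2.2| ≤ ((2 * T : ℕ) : ℤ) := by
    intro p
    obtain ⟨i, hi, e, he, e', he', hpe⟩ := hpt p
    rw [hpe]
    exact hbox i hi e he e' he'
  have hpR : ∀ p, |((pt p).1 : ℝ)| ≤ ((2 * R + 135 : ℕ) : ℝ) ∧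
      |((pt p).2.1 : ℝ)| ≤ ((2 * S : ℕ) : ℝ) ∧ |((pt p).2.2 : ℝ)| ≤ ((2 * T : ℕ) : ℝ) := by
    intro p
    obtain ⟨b1, b2, b3⟩ := hpb p
    exact ⟨by exact_mod_cast b1, by exact_mod_cast b2, by exact_mod_cast b3⟩
  have hL0 : (1 : ℝ) ≤ (675 * h : ℕ) := by
    have : 1 ≤ 675 * h := by omega
    exact_mod_cast this
  have hιpos : 0 < Fintype.card ι := Fintype.card_pos
  have hexp3 : (6 : ℝ) ≤ exp 3 := by
    have h9 : exp 3 = exp 1 ^ 3 := by rw [← exp_nat_mul]; norm_num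
    have := exp_one_gt_d9
    have : (2.7 : ℝ) ^ 3 ≤ exp 1 ^ 3 := by gcongr; linarith
    norm_num at this
    linarith
  have hκg : 0 < κ * g := Nat.mul_pos hκ (by omega)
  have hyw : ∀ p, 2 * ((675 * h : ℕ) : ℝ) * |latticeLog b a0 y0 y1 (pt p) -
      (log goldenRatio * latticeU n y0 y1 (pt p) + log b * latticeV m (pt p))| ≤
      (exp 3)⁻¹ ^ (15 * (κ * g)) := by
    intro p
    have e1 : (exp 3)⁻¹ ^ (15 * (κ * g)) = exp (-(3 * (15 * (κ * g) : ℕ))) := by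
      rw [← exp_neg, ← exp_nat_mul]; congr 1; ring
    rw [e1, latticeLog_sub_eq, abs_neg, abs_mul]
    refine le_trans ?_ hΛ
    simp only [Int.cast_natCast]
    have := (hpR p).2.2
    gcongr
  have hyw1 : ∀ p, |latticeLog b a0 y0 y1 (pt p) -
      (log goldenRatio * latticeU n y0 y1 (pt p) + log b * latticeV m (pt p))| ≤ 1 := by
    intro p
    have e1 := hyw p
    have e2 : (exp 3)⁻¹ ^ (15 * (κ * g)) ≤ 1 :=
      pow_le_one₀ (by positivity) (inv_le_one_of_one_le₀ (by linarith))
    have e3 := abs_nonneg (latticeLog b a0 y0 y1 (pt p) -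
      (log goldenRatio * latticeU n y0 y1 (pt p) + log b * latticeV m (pt p)))
    nlinarith
  refine ⟨9 * Fintype.card ι, by omega, by omega, ?_⟩
  have hU0 : (0 : ℝ) < U := by exact_mod_cast (by omega : 0 < U)
  have hγpos : 0 < √5 * a0 * ((b : ℝ) - 1) := by positivity
  refine master_inequality (P := ι × Fin 135) 135 g κ h (Nat.lcmUpto h) (675 * h) (κ * g)
    (9 * Fintype.card ι) (15 * (κ * g)) ?_ (Nat.lcmUpto_ne_zero h) (by omega) (by omega) rfl hκg
    (by omega) (by simp; ring) rfl hh A B hAB (fun p => latticeLog b a0 y0 y1 (pt p))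
    (fun p => log goldenRatio * latticeU n y0 y1 (pt p) + log b * latticeV m (pt p)) hcol V hVr hV
    (fun p => latticeConj b a0 y0 y1 (pt p))
    (fun _ => (b : ℝ) ^ ((2 * S) * (675 * h)) * (√5 * a0 * (b - 1)) ^ ((2 * T) * (675 * h)))
    (fun _ => (b : ℝ) ^ ((2 * S) * (675 * h)) * (-√5 * a0 * (b - 1)) ^ ((2 * T) * (675 * h)))
    (fun p l hl => lattice_integral b a0 hb ha0 y0 y1 (2 * S) (2 * T) (675 * h) (pt p)
      (hpb p).2.1 (hpb p).2.2 l hl) (fun _ => by positivity) _ (exp 3) (2 * κ * log U)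
    _ _ hexp3 ?_ ?_ hyw ?_ ?_
  · intro a h1 h2
    exact Finset.dvd_lcm (f := id) (Finset.mem_Icc.mpr ⟨h1, h2⟩)
  · intro p
    have e1 := abs_latticeLog_le b a0 y0 y1 hα0.le hα h0 h1 _ _ _ (pt p) (hpR p).1 (hpR p).2.1
      (hpR p).2.2
    have e2 := hyw1 p
    have e3 := abs_sub_abs_le_abs_sub (log goldenRatio * latticeU n y0 y1 (pt p) +
      log b * latticeV m (pt p)) (latticeLog b a0 y0 y1 (pt p))
    rw [abs_sub_comm] at e3
    linarith
  · intro j p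
    have e1 : exp (2 * κ * log U) = (U : ℝ) ^ (2 * κ) := by
      rw [show 2 * (κ : ℝ) * log U = ((2 * κ : ℕ) : ℝ) * log U by push_cast; ring, exp_nat_mul,
        exp_log hU0]
    rw [e1]
    exact_mod_cast hB j p
  · intro p l hl
    have e1 := abs_latticeConj_log_le b a0 hb y0 y1 hα0.le hα h0 hγ h1 _ _ _ (pt p) (hpR p).1
      (hpR p).2.1 (hpR p).2.2
    rw [abs_zpow, abs_latticeConj b a0 hb ha0, ← rpow_intCast, ← exp_mul, exp_le_exp]
    refine (le_abs_self _).trans ?_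
    rw [abs_mul, mul_comm]
    have hlR : |(l : ℝ)| ≤ (675 * h : ℕ) := by exact_mod_cast hl
    exact mul_le_mul hlR e1 (abs_nonneg _) (by positivity)
  · intro p
    have e1 : |((b : ℝ) ^ ((2 * S) * (675 * h)) * (√5 * a0 * (b - 1)) ^ ((2 * T) * (675 * h))) *
        ((b : ℝ) ^ ((2 * S) * (675 * h)) * (-√5 * a0 * (b - 1)) ^ ((2 * T) * (675 * h)))| =
        (((b : ℝ) ^ ((2 * S) * (675 * h)) * (√5 * a0 * (b - 1)) ^ ((2 * T) * (675 * h)))) ^ 2 := by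
      rw [neg_mul, neg_mul, neg_pow, abs_mul, abs_mul, abs_mul, abs_mul, abs_pow (-1 : ℝ), abs_neg,
        abs_one, one_pow, one_mul, abs_of_pos (show (0 : ℝ) < (b : ℝ) ^ ((2 * S) * (675 * h)) by
        positivity), abs_of_pos (show (0 : ℝ) < (√5 * a0 * (b - 1)) ^ ((2 * T) * (675 * h)) by
        positivity)]
      ring
    rw [e1]
    apply le_of_eq
    rw [show 2 * ((675 * h : ℕ) : ℝ) * ((2 * S : ℕ) * log b + (2 * T : ℕ) * log (√5 * a0 * (b - 1)))
      = (2 : ℕ) * (((2 * S) * (675 * h) : ℕ) * log b + ((2 * T) * (675 * h) : ℕ) *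
        log (√5 * a0 * (b - 1))) by push_cast; ring, exp_nat_mul, exp_add, exp_nat_mul, exp_nat_mul,
        exp_log hγpos, exp_log (by linarith)]

/-! ### Numerical estimates -/

theorem log_lcmUpto_le (h : ℕ) : log (Nat.lcmUpto h) ≤ 5.39 * h := by
  have h1 := Chebyshev.psi_le_const_mul_self (x := (h : ℝ)) (Nat.cast_nonneg h)
  rw [← Chebyshev.psi_eq_log_lcmUpto]
  have h2 : log 4 ≤ 1.39 := by
    rw [show (4 : ℝ) = 2 ^ 2 by norm_num, log_pow]
    have := log_two_lt_d9
    push_cast; linarith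
  refine h1.trans ?_
  have : (0 : ℝ) ≤ h := Nat.cast_nonneg h
  nlinarith

theorem log_le_div_thousand (x : ℝ) (hx : 0 < x) : log x ≤ x / 1000 + 6 := by
  have h1 : log x = log (x / 1000) + log 1000 := by
    rw [← log_mul (by positivity) (by norm_num)]; congr 1; field_simp
  have h2 := log_le_sub_one_of_pos (show 0 < x / 1000 by positivity)
  have h3 : log 1000 ≤ 7 := by
    rw [log_le_iff_le_exp (by norm_num)]
    have h9 : exp 7 = exp 1 ^ 7 := by rw [← exp_nat_mul]; norm_num
    have := exp_one_gt_d9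
    have : (2.7 : ℝ) ^ 7 ≤ exp 1 ^ 7 := by gcongr; linarith
    norm_num at this
    linarith
  linarith

theorem small_logs (κ g h r : ℕ) (hκ : (1e9 : ℝ) ≤ κ) (hκh : 1000 * (h : ℝ) ≤ κ)
    (hg : g + 1 = 10 * h) (hr0 : 0 < r) (hr : r ≤ 9 * (κ * κ)) :
    2 * log (r * (15 * (κ * g)) : ℕ) + log ((15 * (κ * g) : ℕ) + 1) + log 3 ≤ 0.02 * κ := by
  have hκ0 : (0 : ℝ) < κ := by linarith
  have hg0 : 1 ≤ g := by omega
  have hg0R : (1 : ℝ) ≤ g := by exact_mod_cast hg0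
  have hgR : (g : ℝ) + 1 = 10 * h := by exact_mod_cast hg
  have hgκ : (g : ℝ) ≤ κ := by linarith
  have hrR : (r : ℝ) ≤ 9 * (κ * κ) := by exact_mod_cast hr
  have hr0R : (0 : ℝ) < r := by exact_mod_cast hr0
  have hlog : ∀ (x : ℝ) (j : ℕ), 0 < x → x ≤ 1000 * (κ : ℝ) ^ j → log x ≤ 7 + j * log κ := by
    intro x j hx hle
    have e1 := log_le_log hx hle
    rw [log_mul (by norm_num) (by positivity), log_pow] at e1
    have h3 : log 1000 ≤ 7 := by
      rw [log_le_iff_le_exp (by norm_num)]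
      have h9 : exp 7 = exp 1 ^ 7 := by rw [← exp_nat_mul]; norm_num
      have := exp_one_gt_d9
      have : (2.7 : ℝ) ^ 7 ≤ exp 1 ^ 7 := by gcongr; linarith
      norm_num at this
      linarith
    linarith
  have e1 : log (r * (15 * (κ * g)) : ℕ) ≤ 7 + (4 : ℕ) * log κ := by
    apply hlog
    · push_cast; positivity
    · push_cast
      calc (r : ℝ) * (15 * (κ * g)) ≤ (9 * (κ * κ)) * (15 * (κ * κ)) := by gcongr
        _ = 135 * (κ : ℝ) ^ 4 := by ring
        _ ≤ _ := by gcongr; norm_num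
  have e2 : log ((15 * (κ * g) : ℕ) + 1) ≤ 7 + (2 : ℕ) * log κ := by
    apply hlog
    · push_cast; positivity
    · push_cast
      have : (κ : ℝ) * g ≤ κ * κ := by gcongr
      nlinarith
  have e3 := log_le_div_thousand κ hκ0
  have e4 : log 3 ≤ 2 := by
    have := log_le_sub_one_of_pos (show (0 : ℝ) < 3 by norm_num); linarith
  push_cast at e1 e2 ⊢
  linarith

set_option maxHeartbeats 2000000 in
/-- With `X = κ h` and `n0 = κ g = 10 X - κ`, the costs are at most about `107.62 X + 9.5005 n0`,
after cancellation of the terms in `log h`, while the Taylor expansion gains about `22.49 n0`. -/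
theorem numeric_contradiction (κ g h r R S T : ℕ) (lam H ℓ lγ lγ' lU ld : ℝ)
    (hκ : (1e9 : ℝ) ≤ κ) (hκh : 1000 * (h : ℝ) ≤ κ) (hg : g + 1 = 10 * h) (hh : 20 ≤ h)
    (hr0 : 0 < r) (hr : r ≤ 9 * (κ * κ)) (hlam : 0.69 ≤ lam) (hH : 1e6 ≤ H)
    (hR : (R : ℝ) ≤ κ / 500) (hS : S * lam ≤ κ / 550) (hT : T * H ≤ κ / 200)
    (hlγ : lγ ≤ H) (hlγ' : lγ' ≤ H) (hlU : lU ≤ 4 / 3 * ℓ) (hℓ : ℓ ≤ 2.5 * h)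
    (hld : ld ≤ 5.39 * h)
    (hmain : (((κ * g : ℕ) : ℝ) - 1) * (log h - 1) - 2 * h * (log h - 1) ≤
      2 * log (r * (15 * (κ * g)) : ℕ) + log ((15 * (κ * g) : ℕ) + 1) + log 3 +
      (exp 3 * (0.482 * (2 * R + 135 : ℕ) + ((2 * S : ℕ) + (2 * T : ℕ)) / 4 + 1) * (675 * h : ℕ) +
        (0.482 * (2 * R + 135 : ℕ) + ((2 * S : ℕ) + (2 * T : ℕ)) / 4 + 1)) +
      2 * (2 * κ * lU) +
      (675 * h : ℕ) * (0.482 * (2 * R + 135 : ℕ) + (2 * S : ℕ) * (2 * lam + 1 / 4) +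
        (2 * T : ℕ) * (2 * lγ + 1 / 4)) +
      2 * κ * ld +
      (2 * (675 * h : ℕ) * ((2 * S : ℕ) * lam + (2 * T : ℕ) * lγ')) +
      (((κ * g : ℕ) : ℝ) - 1) / 2 * (log (exp 3 * (675 * h : ℕ)) + log ((675 * h : ℕ) + 1)) -
        (((15 * (κ * g) : ℕ) : ℝ) - 1) / 2 * (log (exp 3) - ((675 * h : ℕ) : ℝ)⁻¹)) : False := by
  have hsmall := small_logs κ g h r hκ hκh hg hr0 hr
  have hhR : (20 : ℝ) ≤ h := by exact_mod_cast hh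
  have hκ0 : (0 : ℝ) < κ := by linarith
  have hh0 : (0 : ℝ) < h := by linarith
  have hgR : (g : ℝ) = 10 * h - 1 := by
    have : (g : ℝ) + 1 = 10 * h := by exact_mod_cast hg
    linarith
  have hS0 : (0 : ℝ) ≤ S := Nat.cast_nonneg S
  have hT0 : (0 : ℝ) ≤ T := Nat.cast_nonneg T
  have hSk : (S : ℝ) ≤ κ / 379 := by
    have : (S : ℝ) * 0.69 ≤ S * lam := by gcongr
    linarith
  have hTk : (T : ℝ) ≤ κ / 1e8 := by
    have : (T : ℝ) * 1e6 ≤ T * H := by gcongr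
    linarith
  have hTγ : (T : ℝ) * lγ ≤ κ / 200 := (mul_le_mul_of_nonneg_left hlγ hT0).trans hT
  have hTγ' : (T : ℝ) * lγ' ≤ κ / 200 := (mul_le_mul_of_nonneg_left hlγ' hT0).trans hT
  have hexp3 : exp 3 ≤ 20.1 := by
    have h9 : exp 3 = exp 1 ^ 3 := by rw [← exp_nat_mul]; norm_num
    have := exp_one_lt_d9
    have : exp 1 ^ 3 ≤ (2.7183 : ℝ) ^ 3 := by gcongr; linarith
    norm_num at this
    linarith
  have hlog675 : log 675 ≤ 7 := by
    rw [log_le_iff_le_exp (by norm_num)]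
    have h9 : exp 7 = exp 1 ^ 7 := by rw [← exp_nat_mul]; norm_num
    have := exp_one_gt_d9
    have : (2.7 : ℝ) ^ 7 ≤ exp 1 ^ 7 := by gcongr; linarith
    norm_num at this
    linarith
  have hL : log (675 * h : ℕ) ≤ 7 + log h := by
    push_cast; rw [log_mul (by norm_num) hh0.ne']; linarith
  have hLpos : (0 : ℝ) < (675 * h : ℕ) := by push_cast; positivity
  have hL1 : log ((675 * h : ℕ) + 1) ≤ 7 + log h + 0.001 := by
    have e1 : ((675 * h : ℕ) : ℝ) + 1 = (675 * h : ℕ) * (1 + ((675 * h : ℕ) : ℝ)⁻¹) := by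
      field_simp
    rw [e1, log_mul hLpos.ne' (by positivity)]
    have e2 := log_le_sub_one_of_pos (show (0 : ℝ) < 1 + ((675 * h : ℕ) : ℝ)⁻¹ by positivity)
    have e3 : ((675 * h : ℕ) : ℝ)⁻¹ ≤ 0.001 := by
      rw [inv_le_comm₀ hLpos (by norm_num)]; push_cast; norm_num; linarith
    linarith
  have hLe : log (exp 3 * (675 * h : ℕ)) ≤ 10 + log h := by
    rw [log_mul (exp_pos _).ne' hLpos.ne', log_exp]; linarith
  have hinv : ((675 * h : ℕ) : ℝ)⁻¹ ≤ 0.001 := by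
    rw [inv_le_comm₀ hLpos (by norm_num)]; push_cast; norm_num; linarith
  have hlogh : log h ≤ h := by have := log_le_sub_one_of_pos hh0; linarith
  have hlogh0 : 0 ≤ log (h : ℝ) := log_nonneg (by linarith)
  set n0 : ℝ := ((κ * g : ℕ) : ℝ) with hn0
  have hn0e : n0 = 10 * (κ * h) - κ := by rw [hn0]; push_cast; rw [hgR]; ring
  set X : ℝ := κ * h with hX
  have hXk : 20 * κ ≤ X := by rw [hX]; nlinarith
  have hn0pos : 1 ≤ n0 := by rw [hn0e]; linarith
  have hQ : ((15 * (κ * g) : ℕ) : ℝ) = 15 * n0 := by rw [hn0]; push_cast; ring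
  have hsmall' := hsmall
  rw [hQ] at hsmall'
  rw [hQ, log_exp] at hmain
  have hXpos : (0 : ℝ) ≤ κ * h := by positivity
  have t1 : (n0 - 1) / 2 * (log (exp 3 * (675 * h : ℕ)) + log ((675 * h : ℕ) + 1)) ≤
      (n0 - 1) / 2 * (17.001 + 2 * log h) := by
    apply mul_le_mul_of_nonneg_left _ (by linarith only [hn0pos]); linarith only [hLe, hL1]
  have t2 : (15 * n0 - 1) / 2 * 2.999 ≤ (15 * n0 - 1) / 2 * (3 - ((675 * h : ℕ) : ℝ)⁻¹) := by
    apply mul_le_mul_of_nonneg_left _ (by linarith only [hn0pos]); linarith only [hinv]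
  have t3 : 2 * (h : ℝ) * (log h - 1) ≤ 0.002 * X := by
    have : (h : ℝ) * (log h - 1) ≤ h * (κ / 1000) := by
      apply mul_le_mul_of_nonneg_left _ hh0.le; linarith only [hlogh, hκh]
    rw [hX]; linarith only [this]
  have t4 : 2 * (2 * κ * lU) ≤ 13.34 * X := by
    have : (κ : ℝ) * lU ≤ κ * (4 / 3 * (2.5 * h)) := by
      apply mul_le_mul_of_nonneg_left _ hκ0.le; linarith only [hlU, hℓ]
    have hp : (0 : ℝ) ≤ κ * h := by positivity
    rw [hX]; linarith only [this, hp]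
  have t5 : 2 * κ * ld ≤ 10.78 * X := by
    have : (κ : ℝ) * ld ≤ κ * (5.39 * h) := mul_le_mul_of_nonneg_left hld hκ0.le
    rw [hX]; linarith only [this]
  have hW : 0.482 * ((2 * R + 135 : ℕ) : ℝ) + ((2 * S : ℕ) + (2 * T : ℕ)) / 4 + 1 ≤ 0.00326 * κ := by
    push_cast; linarith only [hR, hSk, hTk, hκ]
  have t6 : exp 3 * (0.482 * (2 * R + 135 : ℕ) + ((2 * S : ℕ) + (2 * T : ℕ)) / 4 + 1) *
      (675 * h : ℕ) ≤ 44.3 * X := by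
    calc _ ≤ (20.1 : ℝ) * (0.00326 * κ) * ((675 * h : ℕ) : ℝ) := by
          apply mul_le_mul_of_nonneg_right _ hLpos.le
          exact mul_le_mul hexp3 hW (by positivity) (by norm_num)
      _ ≤ _ := by rw [hX]; push_cast; linarith only [hXpos]
  have t7 : ((675 * h : ℕ) : ℝ) * (0.482 * (2 * R + 135 : ℕ) + (2 * S : ℕ) * (2 * lam + 1 / 4) +
        (2 * T : ℕ) * (2 * lγ + 1 / 4)) ≤ 20.7 * X := by
    have : 0.482 * ((2 * R + 135 : ℕ) : ℝ) + (2 * S : ℕ) * (2 * lam + 1 / 4) +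
        (2 * T : ℕ) * (2 * lγ + 1 / 4) ≤ 0.0306 * κ := by
      push_cast; linarith only [hR, hSk, hTk, hκ, hS, hTγ]
    calc _ ≤ ((675 * h : ℕ) : ℝ) * (0.0306 * κ) := mul_le_mul_of_nonneg_left this hLpos.le
      _ ≤ _ := by rw [hX]; push_cast; linarith only [hXpos]
  have t8 : 2 * ((675 * h : ℕ) : ℝ) * ((2 * S : ℕ) * lam + (2 * T : ℕ) * lγ') ≤ 18.5 * X := by
    have : ((2 * S : ℕ) : ℝ) * lam + (2 * T : ℕ) * lγ' ≤ 0.0137 * κ := by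
      push_cast; linarith only [hS, hTγ', hκ]
    calc _ ≤ 2 * ((675 * h : ℕ) : ℝ) * (0.0137 * κ) :=
          mul_le_mul_of_nonneg_left this (by positivity)
      _ ≤ _ := by rw [hX]; push_cast; linarith only [hXpos]
  have t9 : (n0 - 1) / 2 * (17.001 + 2 * log h) - (n0 - 1) * (log h - 1) =
      (n0 - 1) * 9.5005 := by ring
  linarith only [hmain, hsmall', t1, t2, t3, t4, t5, hW, t6, t7, t8, t9, hn0e, hXk, hn0pos, hκ]

/-! ### Choice of parameters -/

theorem log_goldenRatio_bounds : 0.38 ≤ log goldenRatio ∧ log goldenRatio ≤ 0.482 := by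
  have h5a : (2.236 : ℝ) ≤ √5 := by
    apply le_sqrt_of_sq_le; norm_num
  have h5b : √5 ≤ (2.23607 : ℝ) := by
    rw [sqrt_le_left (by norm_num)]; norm_num
  have hφ1 : (1.618 : ℝ) ≤ goldenRatio := by unfold goldenRatio; linarith
  have hφ2 : goldenRatio ≤ (1.61804 : ℝ) := by unfold goldenRatio; linarith
  constructor
  · have h1 := one_sub_inv_le_log_of_pos goldenRatio_pos
    have h2 : (goldenRatio : ℝ)⁻¹ ≤ 0.62 :=
      (inv_anti₀ (by norm_num) hφ1).trans (by norm_num)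
    linarith
  · rw [log_le_iff_le_exp goldenRatio_pos]
    have h1 := sum_le_exp_of_nonneg (x := (0.482 : ℝ)) (by norm_num) 5
    simp only [Finset.sum_range_succ, Finset.sum_range_zero, Nat.factorial] at h1
    norm_num at h1
    norm_num at hφ2 ⊢
    linarith

theorem sixty_le_log (x : ℝ) (hx : 5e27 ≤ x) : 60 ≤ log x := by
  rw [le_log_iff_exp_le (by linarith)]
  have h9 : exp 60 = exp 1 ^ 60 := by rw [← exp_nat_mul]; norm_num
  have := exp_one_lt_d9
  have : exp 1 ^ 60 ≤ (2.7183 : ℝ) ^ 60 := by gcongr; linarith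
  norm_num at this hx ⊢
  linarith

theorem exists_round (x c : ℝ) (hc0 : 0 < c) (hc : c ≤ 1 / 2) :
    ∃ y : ℤ, |x - y * c| ≤ 1 / 4 := by
  refine ⟨round (x / c), ?_⟩
  have h := abs_sub_round (x / c)
  have e : x - round (x / c) * c = (x / c - round (x / c)) * c := by field_simp
  rw [e, abs_mul, abs_of_pos hc0]
  nlinarith

theorem card_bound (κ R S T : ℕ) (lam H : ℝ) (hlam : 0 < lam) (hH : 0 < H)
    (hκ : 2e11 * (lam * H) ≤ κ) (hκ0 : (0 : ℝ) < κ)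
    (hR : 0.0036 * κ ≤ 2 * (R : ℝ) + 1) (hS : 0.00327 * κ ≤ (2 * (S : ℝ) + 1) * lam)
    (hT : 0.009 * κ ≤ (2 * (T : ℝ) + 1) * H) :
    (135 * κ) * (135 * κ) < (2 * R + 1) * ((2 * S + 1) * (2 * T + 1)) := by
  suffices h : (135 * (κ : ℝ)) * (135 * κ) < (2 * R + 1) * ((2 * S + 1) * (2 * T + 1)) by
    exact_mod_cast h
  have h1 : (0.0036 * (κ : ℝ)) * ((0.00327 * κ) * (0.009 * κ)) ≤
      (2 * (R : ℝ) + 1) * (((2 * (S : ℝ) + 1) * lam) * ((2 * (T : ℝ) + 1) * H)) := by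
    gcongr
  have h2 : 21000 * (κ : ℝ) ^ 2 * (lam * H) ≤
      (0.0036 * (κ : ℝ)) * ((0.00327 * κ) * (0.009 * κ)) := by
    have h3 := mul_le_mul_of_nonneg_left hκ (show (0 : ℝ) ≤ 1.05e-7 * κ ^ 2 by positivity)
    have h4 : (0 : ℝ) ≤ κ ^ 3 := by positivity
    nlinarith
  have h3 : 21000 * (κ : ℝ) ^ 2 * (lam * H) ≤
      ((2 * (R : ℝ) + 1) * ((2 * (S : ℝ) + 1) * (2 * (T : ℝ) + 1))) * (lam * H) := by
    calc _ ≤ _ := h2.trans h1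
      _ = _ := by ring
  have h4 := le_of_mul_le_mul_right h3 (mul_pos hlam hH)
  have h5 : (0 : ℝ) < κ ^ 2 := by positivity
  nlinarith

theorem floor_lower (x : ℝ) (hx : 5 ≤ x) : 1.8 * x ≤ 2 * (⌊x⌋₊ : ℝ) + 1 := by
  have := Nat.lt_floor_add_one x
  linarith

/-- `κ` and `h` are `3.02e25 lam ^ 3 ℓ` and `0.4 ℓ` rounded up; `R`, `S`, `T` are `κ / 500`, `κ /
(550 lam)`, `κ / (200 H)` rounded down. The box then has more than `(135 κ) ^ 2` points because
`2e11 lam H ≤ κ`. -/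
theorem exists_parameters (lam ℓ H : ℝ) (hlam : 0.69 ≤ lam) (hℓ : 60 ≤ ℓ)
    (hH : H = 1.51e14 * lam ^ 2 * ℓ) :
    ∃ κ h R S T : ℕ, 3.02e25 * (lam ^ 3 * ℓ) ≤ κ ∧ (κ : ℝ) ≤ 3.021e25 * (lam ^ 3 * ℓ) ∧
      ℓ ≤ 2.5 * h ∧ (h : ℝ) ≤ 0.4 * ℓ + 1 ∧ (R : ℝ) ≤ κ / 500 ∧ S * lam ≤ κ / 550 ∧
      T * H ≤ κ / 200 ∧ (T : ℝ) ≤ 1.01e9 * lam ∧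
      (135 * κ) * (135 * κ) < (2 * R + 1) * ((2 * S + 1) * (2 * T + 1)) := by
  have hlam0 : 0 < lam := by linarith
  have hℓ0 : 0 < ℓ := by linarith
  have hH0 : 0 < H := by rw [hH]; positivity
  have hA : (19 : ℝ) ≤ lam ^ 3 * ℓ := by
    calc (19 : ℝ) ≤ 0.69 ^ 3 * 60 := by norm_num
      _ ≤ _ := by gcongr
  have hA1 : lam ≤ lam ^ 3 * ℓ := by
    have : 1 ≤ lam ^ 2 * ℓ := by
      calc (1 : ℝ) ≤ 0.69 ^ 2 * 60 := by norm_num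
        _ ≤ _ := by gcongr
    nlinarith
  have hA2 : 2e11 * (lam * H) = 3.02e25 * (lam ^ 3 * ℓ) := by rw [hH]; ring
  set κ : ℕ := ⌈3.02e25 * (lam ^ 3 * ℓ)⌉₊ with hκ
  have hκ1 : 3.02e25 * (lam ^ 3 * ℓ) ≤ κ := Nat.le_ceil _
  have hκ2 : (κ : ℝ) ≤ 3.021e25 * (lam ^ 3 * ℓ) := by
    have := Nat.ceil_lt_add_one (show 0 ≤ 3.02e25 * (lam ^ 3 * ℓ) by positivity)
    rw [← hκ] at this
    linarith
  have hκ0 : (0 : ℝ) < κ := by linarith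
  have hh1 := Nat.le_ceil (0.4 * ℓ)
  have hh2 := Nat.ceil_lt_add_one (show 0 ≤ 0.4 * ℓ by positivity)
  have hS5 : 5 ≤ (κ : ℝ) / (550 * lam) := by rw [le_div_iff₀ (by positivity)]; linarith
  have hT5 : 5 ≤ (κ : ℝ) / (200 * H) := by
    rw [le_div_iff₀ (by positivity)]
    have : 0.69 * H ≤ lam * H := by gcongr
    linarith
  refine ⟨κ, ⌈0.4 * ℓ⌉₊, ⌊(κ : ℝ) / 500⌋₊, ⌊(κ : ℝ) / (550 * lam)⌋₊, ⌊(κ : ℝ) / (200 * H)⌋₊,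
    hκ1, hκ2, by linarith, by linarith, Nat.floor_le (by positivity), ?_, ?_, ?_, ?_⟩
  · have := Nat.floor_le (show 0 ≤ (κ : ℝ) / (550 * lam) by positivity)
    calc _ ≤ (κ : ℝ) / (550 * lam) * lam := by gcongr
      _ = _ := by field_simp
  · have := Nat.floor_le (show 0 ≤ (κ : ℝ) / (200 * H) by positivity)
    calc _ ≤ (κ : ℝ) / (200 * H) * H := by gcongr
      _ = _ := by field_simp
  · refine (Nat.floor_le (show 0 ≤ (κ : ℝ) / (200 * H) by positivity)).trans ?_
    rw [div_le_iff₀ (by positivity)]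
    have : lam * H = 1.51e14 * (lam ^ 3 * ℓ) := by rw [hH]; ring
    linarith
  · refine card_bound κ _ _ _ lam H hlam0 hH0 (by linarith) hκ0 ?_ ?_ ?_
    · have := floor_lower ((κ : ℝ) / 500) (by linarith)
      linarith
    · have := mul_le_mul_of_nonneg_right (floor_lower _ hS5) hlam0.le
      have e : 1.8 * ((κ : ℝ) / (550 * lam)) * lam = 1.8 / 550 * κ := by field_simp
      rw [e] at this
      refine le_trans ?_ this
      linarith
    · have := mul_le_mul_of_nonneg_right (floor_lower _ hT5) hH0.le
      have e : 1.8 * ((κ : ℝ) / (200 * H)) * H = 1.8 / 200 * κ := by field_simp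
      rw [e] at this
      refine le_trans ?_ this
      linarith

theorem gamma_logs (b a0 l1 : ℕ) (ℓ : ℝ) (hb : 2 ≤ b) (h1 : b - 1 ≤ a0) (h2 : a0 ≤ b ^ (l1 + 1))
    (hℓ : 60 ≤ ℓ) (hl1 : (l1 : ℝ) * log b < 1.5e14 * (log b) ^ 2 * ℓ) (hlam : 0.69 ≤ log b) :
    0 ≤ log (√5 * a0 / ((b : ℝ) - 1)) ∧
    log (√5 * a0 / ((b : ℝ) - 1)) ≤ 1.51e14 * (log b) ^ 2 * ℓ ∧
    log (√5 * a0 * ((b : ℝ) - 1)) ≤ 1.51e14 * (log b) ^ 2 * ℓ := by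
  have hbR : (2 : ℝ) ≤ b := by exact_mod_cast hb
  have hb1 : (0 : ℝ) < (b : ℝ) - 1 := by linarith
  have h1R : (b : ℝ) - 1 ≤ a0 := by
    have : b ≤ a0 + 1 := by omega
    have : (b : ℝ) ≤ a0 + 1 := by exact_mod_cast this
    linarith
  have ha0 : (0 : ℝ) < a0 := by linarith
  have h5 : (1 : ℝ) ≤ √5 := by rw [one_le_sqrt]; norm_num
  have h5' : √5 ≤ (2.3 : ℝ) := by rw [sqrt_le_left (by norm_num)]; norm_num
  have hl5 : log √5 ≤ 2 := by
    have := log_le_sub_one_of_pos (show 0 < √5 by linarith); linarith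
  have hla : log a0 ≤ ((l1 : ℝ) + 1) * log b := by
    have : (a0 : ℝ) ≤ (b : ℝ) ^ (l1 + 1) := by exact_mod_cast h2
    have := log_le_log ha0 this
    rw [log_pow] at this
    push_cast at this
    exact this
  have hlb0 : 0 ≤ log ((b : ℝ) - 1) := log_nonneg (by linarith)
  have hlb : log ((b : ℝ) - 1) ≤ log b := log_le_log hb1 (by linarith)
  have hE : log b ≤ log b ^ 2 * ℓ := by
    have : 1 ≤ log b * ℓ := by
      calc (1 : ℝ) ≤ 0.69 * 60 := by norm_num
        _ ≤ _ := by gcongr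
    nlinarith
  refine ⟨log_nonneg ?_, ?_, ?_⟩
  · rw [one_le_div hb1]; nlinarith
  · rw [log_div (by positivity) hb1.ne', log_mul (by positivity) ha0.ne']
    linarith
  · rw [log_mul (by positivity) hb1.ne', log_mul (by positivity) ha0.ne']
    linarith

/-! ### Conclusion -/

/-- The smallness required by the Taylor expansion: `45 κ g` is less than `7.48e27 lam ^ 3 ℓ ^ 2`,
with room for the polynomial factors. -/
theorem form_bound (κ g h T : ℕ) (lam ℓ Λ : ℝ) (hlam : 0.69 ≤ lam) (hℓ : 60 ≤ ℓ)
    (hκ2 : (κ : ℝ) ≤ 3.021e25 * (lam ^ 3 * ℓ)) (hh2 : (h : ℝ) ≤ 0.4 * ℓ + 1)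
    (hg : g + 1 = 10 * h) (hT : (T : ℝ) ≤ 1.01e9 * lam)
    (hΛ : Λ ≤ 14 * exp (-(7.48e27 * lam ^ 3 * ℓ ^ 2))) :
    2 * (675 * h : ℕ) * ((2 * T : ℕ) * Λ) ≤ exp (-(3 * (15 * (κ * g) : ℕ))) := by
  have hlam0 : 0 < lam := by linarith
  have hℓ0 : 0 < ℓ := by linarith
  have hh3 : (h : ℝ) ≤ 0.42 * ℓ := by linarith
  have hgR : (g : ℝ) ≤ 10 * h := by
    have : (g : ℝ) + 1 = 10 * h := by exact_mod_cast hg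
    linarith
  have hP : lam * ℓ ≤ lam ^ 3 * ℓ ^ 2 := by
    have h1 : 1 ≤ lam ^ 2 * ℓ := by
      calc (1 : ℝ) ≤ 0.69 ^ 2 * 60 := by norm_num
        _ ≤ _ := by gcongr
    have h2 : 0 < lam * ℓ := by positivity
    nlinarith
  have hhT : (h : ℝ) * T ≤ (0.42 * ℓ) * (1.01e9 * lam) := by gcongr
  have hκg : (κ : ℝ) * g ≤ (3.021e25 * (lam ^ 3 * ℓ)) * (10 * (0.42 * ℓ)) := by
    have : (g : ℝ) ≤ 10 * (0.42 * ℓ) := by linarith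
    gcongr
  have e0 : 2 * ((675 * h : ℕ) : ℝ) * ((2 * T : ℕ) * Λ) ≤
      (37800 * (h * T)) * exp (-(7.48e27 * lam ^ 3 * ℓ ^ 2)) := by
    push_cast
    have := mul_le_mul_of_nonneg_left hΛ (show (0 : ℝ) ≤ 2700 * (h * T) by positivity)
    linarith
  refine e0.trans ?_
  have e1 : 37800 * ((h : ℝ) * T) ≤ exp (37800 * ((h : ℝ) * T)) := by
    have := add_one_le_exp (37800 * ((h : ℝ) * T)); linarith
  refine (mul_le_mul_of_nonneg_right e1 (exp_pos _).le).trans ?_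
  rw [← exp_add, exp_le_exp]
  push_cast
  have e2 : (0.42 * ℓ) * (1.01e9 * lam) = 4.242e8 * (lam * ℓ) := by ring
  have e3 : (3.021e25 * (lam ^ 3 * ℓ)) * (10 * (0.42 * ℓ)) = 12.6882e25 * (lam ^ 3 * ℓ ^ 2) := by
    ring
  rw [e2] at hhT
  rw [e3] at hκg
  have e4 : 7.48e27 * lam ^ 3 * ℓ ^ 2 = 7.48e27 * (lam ^ 3 * ℓ ^ 2) := by ring
  rw [e4]
  have h3 : 0 < lam ^ 3 * ℓ ^ 2 := by positivity
  linarith only [hhT, hκg, hP, h3]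

/-- The monomials are built from integers of size at most `n (2 T + 2) ≤ (n + 2) ^ (4 / 3)`. -/
theorem log_height_le (n T : ℕ) (lam : ℝ) (hlam : 0.69 ≤ lam)
    (hn : 1.55e28 * lam ^ 3 ≤ n) (hT : (T : ℝ) ≤ 1.01e9 * lam) :
    log (((n * (2 * T + 2) : ℕ) : ℤ) : ℝ) ≤ 4 / 3 * log ((n : ℝ) + 2) := by
  have hlam0 : 0 < lam := by linarith
  have hn0 : (0 : ℝ) < n := lt_of_lt_of_le (by positivity) hn
  have h1 : (2 * (T : ℝ) + 2) ^ 3 ≤ n := by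
    calc (2 * (T : ℝ) + 2) ^ 3 ≤ (2.1e9 * lam) ^ 3 := by gcongr; linarith
      _ = 9.261e27 * lam ^ 3 := by ring
      _ ≤ 1.55e28 * lam ^ 3 := by gcongr; norm_num
      _ ≤ n := hn
  have h2 : 3 * log (2 * (T : ℝ) + 2) ≤ log n := by
    have := log_le_log (by positivity) h1
    rw [log_pow] at this
    exact_mod_cast this
  have h3 : log (n : ℝ) ≤ log ((n : ℝ) + 2) := log_le_log hn0 (by linarith)
  push_cast
  rw [log_mul hn0.ne' (by positivity)]
  linarith

theorem height_u (n R S T : ℕ) (y0 y1 : ℤ) (hy : 0 ≤ y1) (hy2 : y1 ≤ 2 * n)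
    (h : 2 * (R : ℤ) + 135 + |y0| * (2 * S) ≤ 2 * n) :
    ((2 * R + 135 : ℕ) : ℤ) + |y0| * ((2 * S : ℕ) : ℤ) + |n - y1| * ((2 * T : ℕ) : ℤ) ≤
      ((n * (2 * T + 2) : ℕ) : ℤ) := by
  have h1 : |(n : ℤ) - y1| ≤ n := by rw [abs_le]; constructor <;> omega
  have h2 : |(n : ℤ) - y1| * (2 * T) ≤ n * (2 * T) := by gcongr
  push_cast
  linarith

theorem height_v (n m S T : ℕ) (hm : m ≤ n) (h : S ≤ n) :
    ((2 * S : ℕ) : ℤ) + m * ((2 * T : ℕ) : ℤ) ≤ ((n * (2 * T + 2) : ℕ) : ℤ) := by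
  have h2 : m * (2 * T) ≤ n * (2 * T) := by gcongr
  have : 2 * S + m * (2 * T) ≤ n * (2 * T + 2) := by linarith
  exact_mod_cast this

set_option maxHeartbeats 4000000 in
/-- The lower bound of Baker type for `n log α - m log b - log γ`, where `γ = √5 a0 / (b - 1)`. -/
theorem no_small_form (b a0 n m l1 : ℕ) (hb : 2 ≤ b) (h1 : b - 1 ≤ a0) (h2 : a0 ≤ b ^ (l1 + 1))
    (hl1 : (l1 : ℝ) * log b < 1.5e14 * (log b) ^ 2 * log ((n : ℝ) + 2))
    (hn3 : 3 ≤ n)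
    (hn : 7.48e27 * (log b) ^ 3 * (log ((n : ℝ) + 2)) ^ 2 ≤ n * log goldenRatio)
    (hm : 7.48e27 * (log b) ^ 3 * (log ((n : ℝ) + 2)) ^ 2 ≤ m * log b)
    (hΛ : |n * log goldenRatio - m * log b - log (√5 * a0 / (b - 1))| ≤
      14 * exp (-(7.48e27 * (log b) ^ 3 * (log ((n : ℝ) + 2)) ^ 2))) : False := by
  obtain ⟨hα1, hα2⟩ := log_goldenRatio_bounds
  have hα0 : 0 < log goldenRatio := by linarith
  have hlam : 0.69 ≤ log (b : ℝ) := by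
    have : log (2 : ℝ) ≤ log b := log_le_log (by norm_num) (by exact_mod_cast hb)
    have := log_two_gt_d9
    linarith
  have hn3R : (3 : ℝ) ≤ n := by exact_mod_cast hn3
  obtain ⟨lam, hlamdef⟩ : ∃ lam : ℝ, lam = log b := ⟨_, rfl⟩
  obtain ⟨ℓ, hℓdef⟩ : ∃ ℓ : ℝ, ℓ = log ((n : ℝ) + 2) := ⟨_, rfl⟩
  have hℓ1 : 1 ≤ ℓ := by
    rw [hℓdef, le_log_iff_exp_le (by linarith)]
    have := exp_one_lt_d9
    linarith
  rw [← hlamdef, ← hℓdef] at hn hm hΛ hl1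
  rw [← hlamdef] at hlam
  have hlam0 : 0 < lam := by linarith
  have hnn : 1.55e28 * lam ^ 3 * ℓ ^ 2 ≤ n := by
    have h3 : (n : ℝ) * log goldenRatio ≤ n * 0.482 := by gcongr
    have h4 : 0 < lam ^ 3 * ℓ ^ 2 := by positivity
    have e : 7.48e27 * lam ^ 3 * ℓ ^ 2 = 7.48e27 * (lam ^ 3 * ℓ ^ 2) := by ring
    have e' : 1.55e28 * lam ^ 3 * ℓ ^ 2 = 1.55e28 * (lam ^ 3 * ℓ ^ 2) := by ring
    rw [e] at hn
    rw [e']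
    linarith
  have hℓ : 60 ≤ ℓ := by
    rw [hℓdef]
    apply sixty_le_log
    have : 1.55e28 * (0.69 : ℝ) ^ 3 * 1 ^ 2 ≤ 1.55e28 * lam ^ 3 * ℓ ^ 2 := by gcongr
    norm_num at this hnn ⊢
    linarith
  obtain ⟨κ, h, R, S, T, hκ1, hκ2, hh1, hh2, hR, hS, hT, hT2, hcard⟩ :=
    exists_parameters lam ℓ _ hlam hℓ rfl
  obtain ⟨hγ0, hγ1, hγ2⟩ := gamma_logs b a0 l1 ℓ hb h1 h2 hℓ (by rw [← hlamdef]; exact hl1)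
    (by rw [← hlamdef]; exact hlam)
  rw [← hlamdef] at hγ1 hγ2
  have hA : (19 : ℝ) ≤ lam ^ 3 * ℓ := by
    calc (19 : ℝ) ≤ 0.69 ^ 3 * 60 := by norm_num
      _ ≤ _ := by gcongr
  have hAlam : lam ≤ lam ^ 3 * ℓ := by
    have : 1 ≤ lam ^ 2 * ℓ := by
      calc (1 : ℝ) ≤ 0.69 ^ 2 * 60 := by norm_num
        _ ≤ _ := by gcongr
    nlinarith
  have hAℓ : ℓ ≤ 4 * (lam ^ 3 * ℓ) := by
    have : 1 ≤ 4 * lam ^ 3 := by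
      calc (1 : ℝ) ≤ 4 * 0.69 ^ 3 := by norm_num
        _ ≤ _ := by gcongr
    nlinarith
  have hP : 60 * (lam ^ 3 * ℓ) ≤ lam ^ 3 * ℓ ^ 2 := by
    have : 60 * (lam ^ 3 * ℓ) ≤ ℓ * (lam ^ 3 * ℓ) := by gcongr
    linarith
  have hE : lam ^ 2 * ℓ ≤ 2 * (lam ^ 3 * ℓ) := by
    have : 0 ≤ lam ^ 2 * ℓ := by positivity
    nlinarith
  have hE1 : 1e6 ≤ 1.51e14 * lam ^ 2 * ℓ := by
    calc (1e6 : ℝ) ≤ 1.51e14 * 0.69 ^ 2 * 60 := by norm_num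
      _ ≤ _ := by gcongr
  set A : ℝ := lam ^ 3 * ℓ with hAdef
  have hnA : 9e29 * A ≤ n := by
    have e' : 1.55e28 * lam ^ 3 * ℓ ^ 2 = 1.55e28 * (lam ^ 3 * ℓ ^ 2) := by ring
    rw [e'] at hnn
    linarith
  have hκn : 1e4 * (κ : ℝ) ≤ n := by linarith
  have hκ9 : (1e9 : ℝ) ≤ κ := by linarith
  have hh20R : (20 : ℝ) ≤ h := by linarith
  have hh20 : 20 ≤ h := by exact_mod_cast hh20R
  obtain ⟨g, hg⟩ : ∃ g, g + 1 = 10 * h := ⟨10 * h - 1, by omega⟩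
  obtain ⟨y0, hy0⟩ := exists_round (log b) (log goldenRatio) hα0 (by linarith)
  obtain ⟨y1, hy1⟩ := exists_round (log (√5 * a0 / ((b : ℝ) - 1))) (log goldenRatio) hα0
    (by linarith)
  have hS0 : (0 : ℝ) ≤ S := Nat.cast_nonneg S
  have hSk : (S : ℝ) ≤ κ / 379 := by
    have : (S : ℝ) * 0.69 ≤ S * lam := by gcongr
    linarith
  -- `y0` and `y1` are about `log b / log α` and `log γ / log α`
  have hy0b : |(y0 : ℝ)| ≤ 4.1 * lam := by
    rw [abs_le] at hy0 ⊢
    rw [← hlamdef] at hy0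
    have e1 : (y0 : ℝ) * log goldenRatio ≤ 1.4 * lam := by linarith
    have e2 : 0 < (y0 : ℝ) * log goldenRatio := by linarith
    have e3 : 0 < (y0 : ℝ) := pos_of_mul_pos_left e2 hα0.le
    constructor
    · linarith
    · have : (y0 : ℝ) * 0.38 ≤ y0 * log goldenRatio := by gcongr
      linarith
  have hy1b : 0 ≤ y1 ∧ y1 ≤ 2 * n := by
    rw [abs_le] at hy1
    constructor
    · by_contra hneg
      have : y1 ≤ -1 := by omega
      have : (y1 : ℝ) ≤ -1 := by exact_mod_cast this
      have : (y1 : ℝ) * log goldenRatio ≤ -1 * log goldenRatio := by gcongr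
      linarith
    · by_contra hneg
      have : 2 * (n : ℤ) ≤ y1 := by omega
      have : 2 * (n : ℝ) ≤ y1 := by exact_mod_cast this
      have e1 : 2 * (n : ℝ) * 0.38 ≤ y1 * log goldenRatio :=
        mul_le_mul this hα1 (by norm_num) (by linarith)
      linarith
  have hRSn : 2 * (R : ℤ) + 135 + |y0| * (2 * S) ≤ 2 * n := by
    have e1 : |(y0 : ℝ)| * S ≤ 4.1 * lam * S := by gcongr
    have : 2 * (R : ℝ) + 135 + |(y0 : ℝ)| * (2 * S) ≤ 2 * n := by linarith
    exact_mod_cast this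
  have hΛ1 : |n * log goldenRatio - m * log b - log (√5 * a0 / (b - 1))| ≤ 14 := by
    rw [← hlamdef]
    refine hΛ.trans ?_
    have : exp (-(7.48e27 * lam ^ 3 * ℓ ^ 2)) ≤ 1 := by
      rw [exp_le_one_iff]; have : 0 ≤ 7.48e27 * lam ^ 3 * ℓ ^ 2 := by positivity
      linarith
    linarith
  have hmn : m ≤ n := by
    rw [abs_le, ← hlamdef] at hΛ1
    have e1 : (n : ℝ) * log goldenRatio ≤ n * 0.482 := by gcongr
    have e2 : (m : ℝ) * 0.69 ≤ m * lam := by gcongr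
    have : (m : ℝ) ≤ n := by linarith
    exact_mod_cast this
  have hSn : S ≤ n := by
    have : (S : ℝ) ≤ n := by linarith
    exact_mod_cast this
  have hSm : 2 * S < m := by
    have e : 7.48e27 * lam ^ 3 * ℓ ^ 2 = 7.48e27 * (lam ^ 3 * ℓ ^ 2) := by ring
    rw [e] at hm
    have e1 : (2 * (S : ℝ)) * lam < m * lam := by linarith
    have := lt_of_mul_lt_mul_right e1 hlam0.le
    exact_mod_cast this
  have hTκ : 2 * T + 1 ≤ κ := by
    have : 2 * (T : ℝ) + 1 ≤ κ := by linarith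
    exact_mod_cast this
  have hU1 : (1 : ℤ) ≤ ((n * (2 * T + 2) : ℕ) : ℤ) := by
    have : 1 ≤ n * (2 * T + 2) := Nat.mul_pos (by omega) (by omega)
    exact_mod_cast this
  have hb2 : 1 ≤ a0 := by omega
  obtain ⟨r, hr0, hr, hmain⟩ := core_inequality b a0 n m κ g h R S T y0 y1 hb hb2 hg (by omega)
    (by omega) hTκ hSm hcard hα0 hα2 hy0 hγ0 hy1 _ hU1
    (height_u n R S T y0 y1 hy1b.1 hy1b.2 hRSn) (height_v n m S T hmn hSn)
    (form_bound κ g h T lam ℓ _ hlam hℓ hκ2 hh2 hg hT2 (by rw [← hlamdef]; exact hΛ))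
  have hUle := log_height_le n T lam hlam ?_ hT2
  · rw [← hℓdef] at hUle
    rw [← hlamdef] at hmain
    exact numeric_contradiction κ g h r R S T lam _ ℓ _ _ _ _ hκ9 (by linarith) hg hh20 hr0 hr
      hlam hE1 hR hS hT hγ1 hγ2 hUle hh1 (log_lcmUpto_le h) hmain
  · refine le_trans ?_ hnn
    have : (1 : ℝ) ≤ ℓ ^ 2 := one_le_pow₀ hℓ1
    exact le_mul_of_one_le_right (by positivity) this

theorem stmt_6 (b n1 n2 n3 l1 l2 l3 d1 d2 d3 : ℕ) (hb : 2 ≤ b) (hn1 : 300 < n1)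
    (hsol : SatisfiesEq1 b n1 n2 n3 l1 l2 l3 d1 d2 d3)
    (hl1 : (l1 : ℝ) * Real.log b <
      1.5e14 * (Real.log b) ^ 2 * Real.log ((n1 : ℝ) + 2)) :
    min (((n1 : ℝ) - (n2 : ℝ)) * Real.log ((1 + Real.sqrt 5) / 2)) ((l2 : ℝ) * Real.log b) <
      7.48e27 * (Real.log b) ^ 3 * (Real.log ((n1 : ℝ) + 2)) ^ 2 := by
  by_contra hcon
  rw [not_lt, le_min_iff] at hcon
  obtain ⟨hc1, hc2⟩ := hcon
  change _ ≤ ((n1 : ℝ) - n2) * log goldenRatio at hc1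
  have hα0 : 0 < log goldenRatio := by
    have := log_goldenRatio_bounds.1; linarith
  have hlam : 0.69 ≤ log (b : ℝ) := by
    have : log (2 : ℝ) ≤ log b := log_le_log (by norm_num) (by exact_mod_cast hb)
    have := log_two_gt_d9
    linarith
  have hn1R : (300 : ℝ) < n1 := by exact_mod_cast hn1
  have hℓ1 : 1 ≤ log ((n1 : ℝ) + 2) := by
    rw [le_log_iff_exp_le (by linarith)]
    have := exp_one_lt_d9
    linarith
  have hT3 : 3 ≤ 7.48e27 * (log (b : ℝ)) ^ 3 * (log ((n1 : ℝ) + 2)) ^ 2 := by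
    calc (3 : ℝ) ≤ 7.48e27 * 0.69 ^ 3 * 1 ^ 2 := by norm_num
      _ ≤ _ := by gcongr
  obtain ⟨a0, ha1, ha2, hΛ⟩ :=
    linear_form_small b n1 n2 n3 l1 l2 l3 d1 d2 d3 hb hsol _ hT3 hc1 hc2
  refine no_small_form b a0 n1 (l2 + l3) l1 hb ha1 ha2 hl1 (by omega) ?_ ?_ hΛ
  · refine hc1.trans ?_
    gcongr
    have : (0 : ℝ) ≤ n2 := Nat.cast_nonneg n2
    linarith
  · refine hc2.trans ?_
    push_cast
    have : (0 : ℝ) ≤ l3 := Nat.cast_nonneg l3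
    gcongr
    linarith
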